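/- arXiv:1912.10710 — 5 statements merged into one kernel-verified Lean document; each statement's English description precedes it below -/
import Mathlib

section
/- Let $K_0 \subseteq K$ be an extension of fields with both $K_0$ and $K$ algebraically closed, and let $x \in K$ be transcendental over $K_0$. Then there exists an intermediate field $F'$ of $K/K_0$ such that $F'$ is algebraically closed, the transcendence degree of $K$ over $F'$ equals $1$, and $x \notin F'$. -/
open Cardinal

/-- The transcendence degree of the `R`-algebra `A`: the supremum of the cardinalities of
algebraically independent subsets of `A` over `R`. -/
noncomputable def trdeg (R A : Type*) [CommRing R] [CommRing A] [Algebra R A] : Cardinal :=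
  ⨆ s : { s : Set A // AlgebraicIndependent R ((↑) : s → A) }, #s.1

/-!
Extend an algebraically independent family `y` of `E / F` to a transcendence basis by a set `s`,
and let `L` be the relative algebraic closure of `F(s)` in `E`. Since `y` is a transcendence basis
over `F(s)` and `L / F(s)` is algebraic, `y` is still a transcendence basis over `L`. The theorem is
the case of the one-element family `x`.
-/

section CommRing

variable {ι κ R A : Type*} [CommRing R] [CommRing A] [Algebra R A] {y : ι → A} {z : κ → A}

theorem trdeg_eq_algebra_trdeg : trdeg R A = Algebra.trdeg R A :=
  rfl

theorem exists_isTranscendenceBasis_sumElim [Nontrivial R] (hy : AlgebraicIndependent R y) :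
    ∃ s : Set A, IsTranscendenceBasis R (Sum.elim y ((↑) : s → A)) := by
  obtain ⟨B, hyB, hB⟩ := exists_isTranscendenceBasis_superset hy.coe_range
  let s := B \ Set.range y
  have sumElim_injective : Function.Injective (Sum.elim y ((↑) : s → A)) :=
    hy.injective.sumElim Subtype.val_injective fun i b h ↦ b.2.2 ⟨i, h⟩
  have range_sumElim : Set.range (Sum.elim y ((↑) : s → A)) = B := by
    rw [Set.Sum.elim_range, Subtype.range_coe, Set.union_sdiff_cancel hyB]
  refine ⟨s, (isTranscendenceBasis_subtype_range sumElim_injective).mp ?_⟩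
  rwa [range_sumElim]

theorem isTranscendenceBasis_sumElim_iff [Nontrivial A] :
    IsTranscendenceBasis R (Sum.elim y z) ↔
      AlgebraicIndependent R z ∧ IsTranscendenceBasis (Algebra.adjoin R (Set.range z)) y := by
  have : Nontrivial R := (algebraMap R A).domain_nontrivial
  have adjoin_range_sumElim : Algebra.adjoin R (Set.range (Sum.elim y z)) =
      (Algebra.adjoin (Algebra.adjoin R (Set.range z)) (Set.range y)).restrictScalars R := by
    rw [Set.Sum.elim_range, Set.union_comm, Algebra.adjoin_union_eq_adjoin_adjoin]
  rw [isTranscendenceBasis_iff_algebraicIndependent_isAlgebraic,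
    isTranscendenceBasis_iff_algebraicIndependent_isAlgebraic,
    AlgebraicIndependent.sumElim_iff, and_assoc, adjoin_range_sumElim]
  rfl

end CommRing

section Field

variable {ι F E : Type*} [Field F] [Field E] [Algebra F E] {y : ι → E}

theorem isTranscendenceBasis_algebraicClosure_iff :
    IsTranscendenceBasis (algebraicClosure F E) y ↔ IsTranscendenceBasis F y :=
  (Algebra.IsAlgebraic.isTranscendenceBasis_iff F (algebraicClosure F E)).symm

theorem exists_algebraicClosure_eq_bot_isTranscendenceBasis (hy : AlgebraicIndependent F y) :
    ∃ L : IntermediateField F E, algebraicClosure L E = ⊥ ∧ IsTranscendenceBasis L y := by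
  obtain ⟨s, hs⟩ := exists_isTranscendenceBasis_sumElim hy
  let Fs := IntermediateField.adjoin F (Set.range ((↑) : s → E))
  have basis_Fs : IsTranscendenceBasis Fs y :=
    IntermediateField.isTranscendenceBasis_adjoin_iff.mpr
      (isTranscendenceBasis_sumElim_iff.mp hs).2
  exact ⟨(algebraicClosure Fs E).restrictScalars F, algebraicClosure.algebraicClosure_eq_bot Fs E,
    isTranscendenceBasis_algebraicClosure_iff.mpr basis_Fs⟩

theorem notMem_of_transcendental {L : IntermediateField F E} {x : E} (hx : Transcendental L x) :
    x ∉ L :=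
  fun hxL ↦ hx (isAlgebraic_algebraMap (⟨x, hxL⟩ : L))

end Field

theorem statement0_general (K0 K : Type*) [Field K0] [Field K] [Algebra K0 K] (x : K)
    (hx : Transcendental K0 x) :
    ∃ F' : IntermediateField K0 K, algebraicClosure F' K = ⊥ ∧ trdeg F' K = 1 ∧ x ∉ F' := by
  obtain ⟨F', closed, basis⟩ := exists_algebraicClosure_eq_bot_isTranscendenceBasis
    (algebraicIndependent_iff_transcendental.mpr hx)
  have trdeg_eq_one : trdeg F' K = 1 := by
    simpa [trdeg_eq_algebra_trdeg] using basis.lift_cardinalMk_eq_trdeg.symm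
  have transcendental_x : Transcendental F' x :=
    algebraicIndependent_iff_transcendental.mp basis.1
  exact ⟨F', closed, trdeg_eq_one, notMem_of_transcendental transcendental_x⟩

theorem statement0 (K0 K : Type*) [Field K0] [Field K] [Algebra K0 K]
    [IsAlgClosed K0] [IsAlgClosed K] (x : K) (hx : Transcendental K0 x) :
    ∃ F' : IntermediateField K0 K, IsAlgClosed F' ∧ trdeg F' K = 1 ∧ x ∉ F' := by
  obtain ⟨F', closed, h⟩ := statement0_general K0 K x hx
  exact ⟨F', (IsAlgClosed.algebraicClosure_eq_bot_iff F' K).mp closed, h⟩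
end

section
/- Let $F$ be an algebraically closed field of characteristic zero and let $W$ be an elliptic curve over $F$ (a Weierstrass curve over $F$ with nonzero discriminant). Then the rank of the group $W(F)$ of $F$-rational points of $W$ is infinite, i.e. the $\mathbb{Q}$-vector space $W(F) \otimes_{\mathbb{Z}} \mathbb{Q}$ is infinite-dimensional. -/
open TensorProduct

/-!
`F` is algebraic over the fraction field `M` of a polynomial ring over `ℤ`, and the 2-adic valuation
of `M` extends to a valuation `v` of `F`, with `v(Mˣ)` generated by `v(2) < 1`. If the rank were
finite, every point would have a nonzero multiple in a finitely generated group, hence in `W(L)` for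
some `L` finite over `M` over which `W` is defined. The group `v(Lˣ)` is then not divisible by 2, so
there is a point `P` whose abscissa `x` lies in `L` with `v(x)` as large as we please and not a
square in `v(Lˣ)`.

Completing the square in the Weierstrass equation, `(2y + a₁x + a₃)²` has the value `v(4) v(x)³` of
its leading term, which is not a square in `v(Lˣ)`. So `y ∉ L`, and a conjugation over `L` that
moves `y` sends `P` to `-P`. It fixes every multiple `nP` in `W(L)`, so that `2nP = 0`. But `P` is
not torsion: the duplication formula gives `v(x(2P)) = v(x) / v(4) > v(x)`, and iterating it gives
infinitely many multiples.
-/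

section Rank

universe v w

theorem exists_finite_smul_mem_span_of_rank_lt_aleph0 {R M : Type*} [CommRing R] [IsDomain R]
    [AddCommGroup M] [Module R M] (h : Module.rank R M < Cardinal.aleph0) :
    ∃ s : Set M, s.Finite ∧ ∀ x, ∃ a : R, a ≠ 0 ∧ a • x ∈ Submodule.span R s := by
  obtain ⟨s, hs, hli⟩ := exists_set_linearIndependent R M
  refine ⟨s, Cardinal.lt_aleph0_iff_set_finite.mp (hs ▸ h), fun x ↦ ?_⟩
  have quotient_rank : Module.rank R (M ⧸ Submodule.span R s) = 0 := by
    have hadd := rank_quotient_add_rank_of_isDomain (Submodule.span R s)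
    rw [rank_span_set hli, hs] at hadd
    exact Cardinal.eq_of_add_eq_add_right (by rw [hadd, zero_add]) h
  obtain ⟨a, ha, hax⟩ := rank_eq_zero_iff.mp quotient_rank (Submodule.Quotient.mk x)
  exact ⟨a, ha, by rwa [← Submodule.Quotient.mk_smul, Submodule.Quotient.mk_eq_zero] at hax⟩

theorem lift_rank_tensorProduct_of_isFractionRing (R : Type*) (K : Type v) (M : Type w)
    [CommRing R] [CommRing K] [Algebra R K] [IsFractionRing R K] [AddCommGroup M] [Module R M] :
    Cardinal.lift.{w} (Module.rank K (K ⊗[R] M)) =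
      Cardinal.lift.{max v w} (Module.rank R M) := by
  have : IsLocalizedModule (nonZeroDivisors R) (TensorProduct.mk R K M 1) :=
    (isLocalizedModule_iff_isBaseChange (nonZeroDivisors R) K _).mpr
      (TensorProduct.isBaseChange R M K)
  rw [IsFractionRing.rank_right_eq R K,
    IsLocalizedModule.lift_rank_eq (nonZeroDivisors R) (TensorProduct.mk R K M 1) le_rfl]

theorem exists_finite_zsmul_mem_closure_of_rank_lt_aleph0 {G : Type*} [AddCommGroup G]
    (h : Module.rank ℚ (ℚ ⊗[ℤ] G) < Cardinal.aleph0) :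
    ∃ s : Set G, s.Finite ∧ ∀ g, ∃ n : ℤ, n ≠ 0 ∧ n • g ∈ AddSubgroup.closure s := by
  have hrank : Module.rank ℚ (ℚ ⊗[ℤ] G) = Module.rank ℤ G := by
    simpa using lift_rank_tensorProduct_of_isFractionRing ℤ ℚ G
  obtain ⟨s, hs, hspan⟩ := exists_finite_smul_mem_span_of_rank_lt_aleph0 (hrank ▸ h)
  refine ⟨s, hs, fun g ↦ ?_⟩
  obtain ⟨n, hn, hng⟩ := hspan g
  exact ⟨n, hn, Submodule.span_int_eq_addSubgroupClosure s ▸ hng⟩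

end Rank

section Valuation

theorem exists_ne_valuation_eq_of_sum_eq_zero {R Γ ι : Type*} [Ring R]
    [LinearOrderedCommGroupWithZero Γ] (v : Valuation R Γ) {s : Finset ι} {f : ι → R}
    (hsum : ∑ i ∈ s, f i = 0) (hne : ∃ i ∈ s, v (f i) ≠ 0) :
    ∃ i ∈ s, ∃ j ∈ s, i ≠ j ∧ v (f i) = v (f j) ∧ v (f i) ≠ 0 := by
  classical
  obtain ⟨k, hk, hfk⟩ := hne
  obtain ⟨i, hi, hmax⟩ := s.exists_max_image (fun i ↦ v (f i)) ⟨k, hk⟩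
  have hfi : v (f i) ≠ 0 := ((zero_lt_iff.mpr hfk).trans_le (hmax k hk)).ne'
  by_contra! hdistinct
  refine hfi ?_
  rw [← v.map_sum_eq_of_lt hi, hsum, map_zero]
  intro j hj
  obtain ⟨hjs, hji⟩ := Finset.mem_sdiff.mp hj
  refine (hmax j hjs).lt_of_ne fun heq ↦ hfi (hdistinct i hi j hjs ?_ heq.symm)
  exact fun hij ↦ hji (Finset.mem_singleton.mpr hij.symm)

variable {K L Γ : Type*} [Field K] [Field L] [Algebra K L] [LinearOrderedCommGroupWithZero Γ]
  (v : Valuation L Γ)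

theorem exists_valuation_pow_eq_valuation_algebraMap {x : L} (hx : IsIntegral K x) (hx0 : x ≠ 0) :
    ∃ n, 0 < n ∧ n ≤ (minpoly K x).natDegree ∧ ∃ a : K, v x ^ n = v (algebraMap K L a) := by
  set p := minpoly K x
  have hvx : v x ≠ 0 := v.ne_zero_iff.mpr hx0
  have hsum : ∑ i ∈ Finset.range (p.natDegree + 1), algebraMap K L (p.coeff i) * x ^ i = 0 := by
    simp_rw [← Algebra.smul_def, ← Polynomial.aeval_eq_sum_range]
    exact minpoly.aeval K x
  have hlead : v (algebraMap K L (p.coeff p.natDegree) * x ^ p.natDegree) ≠ 0 := by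
    simp [p, (minpoly.monic hx).coeff_natDegree, hx0]
  obtain ⟨i, hi, j, hj, hij, heq, hne⟩ := exists_ne_valuation_eq_of_sum_eq_zero v hsum
    ⟨_, Finset.self_mem_range_succ _, hlead⟩
  wlog hlt : i < j generalizing i j
  · exact this j hj i hi hij.symm heq.symm (heq ▸ hne) (hij.symm.lt_of_le (not_lt.mp hlt))
  refine ⟨j - i, by lia, by grind, p.coeff i / p.coeff j, ?_⟩
  have hcj : v (algebraMap K L (p.coeff j)) ≠ 0 := left_ne_zero_of_mul (map_mul v _ _ ▸ heq ▸ hne)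
  simp only [map_mul, map_pow] at heq
  rw [map_div₀, map_div₀, pow_sub₀ _ hvx hlt.le, eq_div_iff hcj, mul_right_comm,
    mul_comm _ (v _), ← heq, mul_assoc, mul_inv_cancel₀ (pow_ne_zero _ hvx), mul_one]

theorem exists_valuation_lt_valuation_algebraMap [Algebra.IsAlgebraic K L] {a : K}
    (ha : 1 < v (algebraMap K L a)) (z : L) : ∃ b : K, v z < v (algebraMap K L b) := by
  rcases le_or_gt (v z) 1 with hz | hz
  · exact ⟨a, hz.trans_lt ha⟩
  · have hz0 : z ≠ 0 := v.ne_zero_iff.mp (zero_lt_one.trans hz).ne'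
    obtain ⟨n, hn, -, b, hb⟩ := exists_valuation_pow_eq_valuation_algebraMap v
      (Algebra.IsIntegral.isIntegral (R := K) z) hz0
    refine ⟨b * a, ?_⟩
    calc v z ≤ v (algebraMap K L b) := hb ▸ le_self_pow hz.le hn.ne'
      _ < v (algebraMap K L b) * v (algebraMap K L a) :=
        lt_mul_of_one_lt_right (hb ▸ pow_pos (zero_lt_one.trans hz) n) ha
      _ = v (algebraMap K L (b * a)) := by rw [map_mul, map_mul]

theorem exists_forall_valuation_pow_ne [FiniteDimensional K L] {π : K} (hπ0 : π ≠ 0)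
    (hπ1 : v (algebraMap K L π) < 1)
    (hdisc : ∀ a : K, a ≠ 0 → ∃ k : ℤ, v (algebraMap K L a) = v (algebraMap K L π) ^ k)
    {q : ℕ} (hq : 1 < q) : ∃ c : L, ∀ d : L, v d ^ q ≠ v c := by
  by_contra! hdiv
  have root_tower (k : ℕ) : ∃ c : L, v c ^ q ^ k = v (algebraMap K L π) := by
    induction k with
    | zero => exact ⟨algebraMap K L π, pow_one _⟩
    | succ k ih =>
      obtain ⟨c, hc⟩ := ih
      obtain ⟨d, hd⟩ := hdiv c
      exact ⟨d, by rw [pow_succ', pow_mul, hd, hc]⟩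
  have hvπ : 0 < v (algebraMap K L π) := v.pos_iff.mpr (by simpa using hπ0)
  obtain ⟨c, hc⟩ := root_tower (Module.finrank K L)
  have hc0 : c ≠ 0 := by
    rintro rfl
    refine hvπ.ne ?_
    rw [← hc, map_zero, zero_pow (pow_pos (zero_lt_one.trans hq) _).ne']
  obtain ⟨n, hn, hn_le, a, ha⟩ := exists_valuation_pow_eq_valuation_algebraMap v
    (Algebra.IsIntegral.isIntegral (R := K) c) hc0
  have ha0 : a ≠ 0 := by
    rintro rfl
    simp [hc0] at ha
  obtain ⟨m, hm⟩ := hdisc a ha0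
  have hexp : (n : ℤ) = m * (q ^ Module.finrank K L : ℕ) := by
    refine zpow_right_injective₀ hvπ hπ1.ne ?_
    simp only [zpow_mul, zpow_natCast]
    rw [← hm, ← ha, ← hc, pow_right_comm]
  have hdvd : q ^ Module.finrank K L ∣ n := Int.natCast_dvd_natCast.mp ⟨m, by rw [hexp, mul_comm]⟩
  exact (Nat.le_of_dvd hn hdvd).not_gt
    ((hn_le.trans (minpoly.natDegree_le c)).trans_lt (Nat.lt_pow_self hq))

theorem exists_lt_valuation_forall_valuation_sq_ne {v : Valuation L Γ}
    (hcof : ∀ γ, ∃ b : L, γ < v b) {c : L} (hc : ∀ d : L, v d ^ 2 ≠ v c) (γ : Γ) :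
    ∃ x : L, γ < v x ∧ ∀ d : L, v d ^ 2 ≠ v x := by
  have hvc : 0 < v c := zero_lt_iff.mpr fun h0 ↦ hc 0 (by simp [h0])
  obtain ⟨b, hb⟩ := hcof (max 1 (γ / v c))
  obtain ⟨hb_one, hb_γ⟩ := max_lt_iff.mp hb
  have hvb : v b ≠ 0 := (zero_lt_one.trans hb_one).ne'
  refine ⟨c * b ^ 2, ?_, fun d hd ↦ hc (d / b) ?_⟩
  · calc γ < v c * v b := (div_lt_iff₀' hvc).mp hb_γ
      _ ≤ v c * v b ^ 2 := by
        gcongr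
        exact le_self_pow hb_one.le two_ne_zero
      _ = v (c * b ^ 2) := by rw [map_mul, map_pow]
  · rw [map_div₀, div_pow, hd, map_mul, map_pow,
      mul_div_cancel_right₀ _ (pow_ne_zero 2 hvb)]

theorem exists_lt_valuation_forall_valuation_sq_ne_of_finiteDimensional {F : Type*} [Field F]
    [Algebra K F] [Algebra L F] [IsScalarTower K L F] [FiniteDimensional K L]
    [Algebra.IsAlgebraic L F] {v : Valuation F Γ} (hsurj : Function.Surjective v) {π : K}
    (hπ0 : π ≠ 0) (hπ1 : v (algebraMap K F π) < 1)
    (hdisc : ∀ a : K, a ≠ 0 → ∃ k : ℤ, v (algebraMap K F a) = v (algebraMap K F π) ^ k) (γ : Γ) :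
    ∃ x : L, γ < v (algebraMap L F x) ∧
      ∀ d : L, v (algebraMap L F d) ^ 2 ≠ v (algebraMap L F x) := by
  have hpos : 0 < v (algebraMap K F π) := v.pos_iff.mpr (by simpa using hπ0)
  simp only [IsScalarTower.algebraMap_apply K L F] at hπ1 hdisc hpos
  have hcof (γ : Γ) : ∃ b : L, γ < v (algebraMap L F b) := by
    obtain ⟨z, rfl⟩ := hsurj γ
    refine exists_valuation_lt_valuation_algebraMap v (a := (algebraMap K L π)⁻¹) ?_ z
    rwa [map_inv₀, map_inv₀, one_lt_inv₀ hpos]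
  obtain ⟨c, hc⟩ := exists_forall_valuation_pow_ne (v.comap (algebraMap L F)) hπ0 hπ1 hdisc
    one_lt_two
  exact exists_lt_valuation_forall_valuation_sq_ne (v := v.comap (algebraMap L F)) hcof hc γ

end Valuation

section Extension

theorem exists_valuationSubring_forall_prime_dvd_iff {A F : Type*} [CommRing A] [IsDomain A]
    [Field F] [Algebra A F] [FaithfulSMul A F] {p : A} (hp : Prime p) :
    ∃ B : ValuationSubring F, ∀ a : A, B.valuation (algebraMap A F a) ≤ 1 ∧
      (B.valuation (algebraMap A F a) < 1 ↔ p ∣ a) := by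
  have : (Ideal.span {p}).IsPrime := (Ideal.span_singleton_prime hp.ne_zero).mpr hp
  let R := Localization.AtPrime (Ideal.span {p})
  have units_to_units (s : (Ideal.span {p}).primeCompl) : IsUnit (algebraMap A F s) := by
    refine IsUnit.mk0 _ ((FaithfulSMul.algebraMap_eq_zero_iff A F).not.mpr ?_)
    intro hs
    exact s.2 (hs ▸ zero_mem _)
  let f : R →+* F := IsLocalization.lift units_to_units
  have hf (a : A) : f (algebraMap A R a) = algebraMap A F a := IsLocalization.lift_eq _ a
  obtain ⟨B, hB, hlocal⟩ := IsLocalRing.exists_factor_valuationRing f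
  have hle (a : A) : B.valuation (algebraMap A F a) ≤ 1 :=
    (B.valuation_le_one_iff _).mpr (hf a ▸ hB _)
  refine ⟨B, fun a ↦ ⟨hle a, ?_⟩⟩
  rw [(hle a).lt_iff_ne, ← Ideal.mem_span_singleton, ← not_iff_not, not_not, ← hf a]
  exact (B.valuation_eq_one_iff ⟨_, hB _⟩).symm.trans
    ((isUnit_map_iff (f.codRestrict B.toSubring hB) _).trans
      (IsLocalization.AtPrime.isUnit_to_map_iff R _ a))

theorem exists_valuationSubring_forall_eq_pow_prime {A F : Type*} [CommRing A] [IsDomain A]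
    [WfDvdMonoid A] [Field F] [Algebra A F] [FaithfulSMul A F] {p : A} (hp : Prime p) :
    ∃ B : ValuationSubring F, B.valuation (algebraMap A F p) < 1 ∧ ∀ a : A, a ≠ 0 →
      ∃ n : ℕ, B.valuation (algebraMap A F a) = B.valuation (algebraMap A F p) ^ n := by
  obtain ⟨B, hB⟩ := exists_valuationSubring_forall_prime_dvd_iff (F := F) hp
  refine ⟨B, (hB p).2.mpr dvd_rfl, fun a ha ↦ ?_⟩
  obtain ⟨n, b, hpb, rfl⟩ := WfDvdMonoid.max_power_factor' ha hp.not_isUnit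
  have hb : B.valuation (algebraMap A F b) = 1 :=
    (hB b).1.antisymm (not_lt.mp ((hB b).2.not.mpr hpb))
  exact ⟨n, by rw [map_mul, map_mul, hb, mul_one, map_pow, map_pow]⟩

theorem isAlgebraic_subfieldClosure {F : Type*} [Field F] (A : Subring F)
    [Algebra.IsAlgebraic A F] : Algebra.IsAlgebraic (Subfield.closure (A : Set F)) F :=
  have hA : A ≤ (Subfield.closure (A : Set F)).toSubring := Subfield.subset_closure
  .ringHom_of_comp_eq (Subring.inclusion hA) (RingHom.id F) (Subring.inclusion_injective hA)
    Function.surjective_id rfl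

variable (F : Type*) [Field F] [CharZero F]

theorem exists_subring_isAlgebraic_prime_two :
    ∃ A : Subring F, WfDvdMonoid A ∧ Algebra.IsAlgebraic A F ∧ Prime (2 : A) := by
  obtain ⟨ι, x, hx⟩ := exists_isTranscendenceBasis' ℤ F
  let e := hx.1.aevalEquiv
  have hUFD : UniqueFactorizationMonoid (Algebra.adjoin ℤ (Set.range x)) :=
    e.toMulEquiv.uniqueFactorizationMonoid inferInstance
  have htwo : Prime (e (MvPolynomial.C 2)) :=
    (MulEquiv.prime_iff e).mpr ((MvPolynomial.prime_C_iff ι).mpr Int.prime_two)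
  rw [map_ofNat, map_ofNat] at htwo
  exact ⟨(Algebra.adjoin ℤ (Set.range x)).toSubring, hUFD.toIsWellFounded, hx.isAlgebraic, htwo⟩

theorem exists_subfield_isAlgebraic_valuation_eq_two_zpow :
    ∃ (M : Subfield F) (B : ValuationSubring F), Algebra.IsAlgebraic M F ∧
      B.valuation 2 < 1 ∧ ∀ a : M, a ≠ 0 → ∃ k : ℤ, B.valuation a = B.valuation 2 ^ k := by
  obtain ⟨A, _, _, htwo⟩ := exists_subring_isAlgebraic_prime_two F
  obtain ⟨B, hlt, hpow⟩ := exists_valuationSubring_forall_eq_pow_prime (F := F) htwo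
  rw [map_ofNat] at hlt hpow
  have hpow_mem (b : F) (hb : b ∈ A) (hb0 : b ≠ 0) :
      ∃ n : ℕ, B.valuation b = B.valuation 2 ^ n := hpow ⟨b, hb⟩ (Subtype.coe_ne_coe.mp hb0)
  refine ⟨Subfield.closure A, B, isAlgebraic_subfieldClosure A, hlt, fun a ha ↦ ?_⟩
  obtain ⟨y, hy, z, hz, hyz⟩ := Subfield.mem_closure_iff.mp a.2
  rw [Subring.closure_eq] at hy hz
  have hdiv0 : y / z ≠ 0 := hyz ▸ Subtype.coe_ne_coe.mpr ha
  obtain ⟨hy0, hz0⟩ := div_ne_zero_iff.mp hdiv0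
  obtain ⟨m, hm⟩ := hpow_mem y hy hy0
  obtain ⟨n, hn⟩ := hpow_mem z hz hz0
  have htwo0 : B.valuation 2 ≠ 0 := B.valuation.ne_zero_iff.mpr two_ne_zero
  exact ⟨m - n, by rw [← hyz, map_div₀, hm, hn, zpow_sub₀ htwo0, zpow_natCast, zpow_natCast]⟩

end Extension

section LargeArguments

open Polynomial

theorem exists_forall_lt_valuation_eval_eq {F Γ : Type*} [Field F]
    [LinearOrderedCommGroupWithZero Γ] (v : Valuation F Γ) (p : F[X]) :
    ∃ γ : Γ, ∀ x, γ < v x → v (p.eval x) = v p.leadingCoeff * v x ^ p.natDegree := by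
  rcases eq_or_ne p 0 with rfl | hp
  · simp
  have hlead : 0 < v p.leadingCoeff := v.pos_iff.mpr (leadingCoeff_ne_zero.mpr hp)
  classical
  obtain ⟨γ, hγ⟩ := (insert 1 ((Finset.range p.natDegree).image
    fun i ↦ v (p.coeff i) / v p.leadingCoeff)).exists_le
  refine ⟨γ, fun x hx ↦ ?_⟩
  have one_le : 1 ≤ v x := (hγ 1 (Finset.mem_insert_self _ _)).trans hx.le
  have coeff_lt (i : ℕ) (hi : i < p.natDegree) : v (p.coeff i) < v p.leadingCoeff * v x := by
    rw [← div_lt_iff₀' hlead]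
    exact (hγ _ (Finset.mem_insert_of_mem
      (Finset.mem_image_of_mem _ (Finset.mem_range.mpr hi)))).trans_lt hx
  rw [eval_eq_sum_range, v.map_sum_eq_of_lt (Finset.self_mem_range_succ p.natDegree), map_mul,
    map_pow, leadingCoeff]
  intro i hi
  have hi_lt : i < p.natDegree := by grind
  calc v (p.coeff i * x ^ i) = v (p.coeff i) * v x ^ i := by rw [map_mul, map_pow]
    _ < v p.leadingCoeff * v x * v x ^ i :=
      mul_lt_mul_of_pos_right (coeff_lt i hi_lt) (pow_pos (zero_lt_one.trans_le one_le) i)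
    _ = v p.leadingCoeff * v x ^ (i + 1) := by rw [pow_succ', mul_assoc]
    _ ≤ v p.leadingCoeff * v x ^ p.natDegree := by gcongr; exact hi_lt
    _ = v (p.coeff p.natDegree * x ^ p.natDegree) := by rw [map_mul, map_pow, leadingCoeff]

end LargeArguments

section Duplication

open WeierstrassCurve

theorem sub_negY_sq_eq_eval_Ψ₂Sq {R : Type*} [CommRing R] {W : Affine R} {x y : R}
    (h : W.Equation x y) : (y - W.negY x y) ^ 2 = W.Ψ₂Sq.eval x := by
  rw [Affine.equation_iff] at h
  simp only [Affine.negY, Ψ₂Sq, b₂, b₄, b₆, Polynomial.eval_add, Polynomial.eval_mul,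
    Polynomial.eval_C, Polynomial.eval_pow, Polynomial.eval_X]
  linear_combination 4 * h

variable {F : Type*} [Field F] {W : Affine F} {x y : F}

theorem addX_self_mul_eval_Ψ₂Sq [DecidableEq F] (h : W.Equation x y) (hy : y ≠ W.negY x y) :
    W.addX x x (W.slope x x y y) * W.Ψ₂Sq.eval x = (W.Φ 2).eval x := by
  have hy0 : y - W.negY x y ≠ 0 := sub_ne_zero.mpr hy
  rw [← sub_negY_sq_eq_eval_Ψ₂Sq h, Affine.slope_of_Y_ne rfl hy, Affine.addX, Φ_two]
  rw [Affine.equation_iff] at h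
  simp only [b₄, b₆, b₈, Polynomial.eval_sub, Polynomial.eval_mul,
    Polynomial.eval_C, Polynomial.eval_pow, Polynomial.eval_X]
  field_simp
  simp only [Affine.negY]
  grind

variable {Γ : Type*} [LinearOrderedCommGroupWithZero Γ] {v : Valuation F Γ} {γ : Γ}

/-- `γ` bounds the part of the `x`-line on which `Ψ₂Sq` and `Φ 2`, the denominator and the numerator
of `x(2P)` as rational functions of `x(P)`, do not have the value of their leading term. -/
structure IsDuplicationBound (W : Affine F) (v : Valuation F Γ) (γ : Γ) : Prop where
  map_eval_Ψ₂Sq : ∀ x, γ < v x → v (W.Ψ₂Sq.eval x) = v 4 * v x ^ 3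
  map_eval_Φ_two : ∀ x, γ < v x → v ((W.Φ 2).eval x) = v x ^ 4

theorem exists_isDuplicationBound [NeZero (4 : F)] (W : Affine F) (v : Valuation F Γ) :
    ∃ γ, IsDuplicationBound W v γ := by
  obtain ⟨γ₁, h₁⟩ := exists_forall_lt_valuation_eval_eq v W.Ψ₂Sq
  obtain ⟨γ₂, h₂⟩ := exists_forall_lt_valuation_eval_eq v (W.Φ 2)
  rw [W.leadingCoeff_Ψ₂Sq four_ne_zero, W.natDegree_Ψ₂Sq four_ne_zero] at h₁
  rw [W.leadingCoeff_Φ, W.natDegree_Φ, map_one] at h₂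
  refine ⟨max γ₁ γ₂, fun x hx ↦ h₁ x (max_lt_iff.mp hx).1, fun x hx ↦ ?_⟩
  simpa using h₂ x (max_lt_iff.mp hx).2

namespace IsDuplicationBound

variable [NeZero (4 : F)]

theorem Y_ne_negY (hγ : IsDuplicationBound W v γ) (hx : γ < v x) (h : W.Equation x y) :
    y ≠ W.negY x y := by
  rw [← sub_ne_zero, ← pow_ne_zero_iff two_ne_zero, sub_negY_sq_eq_eval_Ψ₂Sq h,
    ← v.ne_zero_iff, hγ.map_eval_Ψ₂Sq x hx]
  exact mul_ne_zero (v.ne_zero_iff.mpr four_ne_zero) (pow_ne_zero 3 (zero_le.trans_lt hx).ne')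

theorem nonsingular (hγ : IsDuplicationBound W v γ) (hx : γ < v x) (h : W.Equation x y) :
    W.Nonsingular x y :=
  (W.nonsingular_iff x y).mpr ⟨h, .inr (hγ.Y_ne_negY hx h)⟩

variable [DecidableEq F]

theorem valuation_addX_self (hγ : IsDuplicationBound W v γ) (hx : γ < v x)
    (h : W.Equation x y) : v (W.addX x x (W.slope x x y y)) = v x / v 4 := by
  have hvx : v x ≠ 0 := (zero_le.trans_lt hx).ne'
  have hv4 : v 4 ≠ 0 := v.ne_zero_iff.mpr four_ne_zero
  have hdup := congrArg v (addX_self_mul_eval_Ψ₂Sq h (hγ.Y_ne_negY hx h))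
  rw [map_mul, hγ.map_eval_Ψ₂Sq x hx, hγ.map_eval_Φ_two x hx] at hdup
  rw [eq_div_iff hv4]
  refine mul_right_cancel₀ (pow_ne_zero 3 hvx) ?_
  rw [mul_assoc, hdup, pow_succ']

theorem two_zsmul_some (hγ : IsDuplicationBound W v γ) (hx : γ < v x) (hv : v 4 < 1)
    (h : W.Nonsingular x y) :
    ∃ x' y', ∃ h' : W.Nonsingular x' y',
      (2 : ℤ) • Affine.Point.some x y h = .some x' y' h' ∧ v x < v x' := by
  refine ⟨_, _, _, (two_zsmul _).trans
    (Affine.Point.add_self_of_Y_ne (hγ.Y_ne_negY hx h.1)), ?_⟩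
  rw [hγ.valuation_addX_self hx h.1, lt_div_iff₀ (v.pos_iff.mpr four_ne_zero)]
  exact mul_lt_of_lt_one_right (zero_le.trans_lt hx) hv

theorem not_isOfFinAddOrder_some (hγ : IsDuplicationBound W v γ) (hx : γ < v x)
    (hv : v 4 < 1) (h : W.Nonsingular x y) :
    ¬ IsOfFinAddOrder (Affine.Point.some x y h) := by
  intro hfin
  let X : Set F := {x' | γ < v x' ∧ ∃ y', ∃ h' : W.Nonsingular x' y',
    Affine.Point.some x' y' h' ∈ AddSubgroup.zmultiples (Affine.Point.some x y h)}
  have hX : X.Finite := by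
    refine ((finite_zmultiples.mpr hfin).image fun P ↦ P.xRep 0).subset ?_
    rintro x' ⟨-, y', h', hmem⟩
    exact ⟨_, hmem, by simp⟩
  obtain ⟨x₀, ⟨hx₀, y₀, h₀, hmem⟩, hmax⟩ := X.exists_max_image v hX
    ⟨x, hx, y, h, AddSubgroup.mem_zmultiples _⟩
  obtain ⟨x₁, y₁, h₁, heq, hlt⟩ := hγ.two_zsmul_some hx₀ hv h₀
  exact (hmax x₁ ⟨hx₀.trans hlt, y₁, h₁, heq ▸ zsmul_mem hmem 2⟩).not_gt hlt

end IsDuplicationBound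

end Duplication

section Descent

open WeierstrassCurve WeierstrassCurve.Affine

theorem exists_algHom_algebraicClosure_apply_ne {K L : Type*} [Field K] [PerfectField K] [Field L]
    [Algebra K L] [Algebra.IsAlgebraic K L] {y : L} (hy : y ∉ (algebraMap K L).range) :
    ∃ τ : L →ₐ[K] AlgebraicClosure L, τ y ≠ algebraMap L (AlgebraicClosure L) y := by
  let E := AlgebraicClosure L
  have : IsAlgClosure K E := ⟨inferInstance, .trans K L E⟩
  by_contra! hfix
  obtain ⟨a, ha⟩ := (InfiniteGalois.mem_range_algebraMap_iff_fixed (k := K) (algebraMap L E y)).mpr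
    fun σ ↦ hfix ((σ : E →ₐ[K] E).comp (IsScalarTower.toAlgHom K L E))
  rw [IsScalarTower.algebraMap_apply K L E] at ha
  exact hy ⟨a, (algebraMap L E).injective ha⟩

theorem exists_equation_of_forall_isSquare {F : Type*} [Field F] [NeZero (2 : F)]
    (hF : ∀ a : F, IsSquare a) (W : Affine F) (x : F) : ∃ y, W.Equation x y := by
  obtain ⟨s, hs⟩ := hF ((W.a₁ * x + W.a₃) ^ 2 + 4 * (x ^ 3 + W.a₂ * x ^ 2 + W.a₄ * x + W.a₆))
  refine ⟨(s - (W.a₁ * x + W.a₃)) / 2, (W.equation_iff _ _).mpr ?_⟩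
  field_simp
  linear_combination -hs

variable {L F Γ : Type*} [Field L] [Field F] [Algebra L F]
  [LinearOrderedCommGroupWithZero Γ] {v : Valuation F Γ}

theorem IsDuplicationBound.Y_notMem_range [NeZero (4 : F)] {W : Affine L} {γ : Γ}
    (hγ : IsDuplicationBound (W⁄F) v γ) {x : L} {y : F} (hx : γ < v (algebraMap L F x))
    (hsq : ∀ d : L, v (algebraMap L F d) ^ 2 ≠ v (algebraMap L F x))
    (h : (W⁄F).Equation (algebraMap L F x) y) : y ∉ (algebraMap L F).range := by
  rintro ⟨y, rfl⟩
  have hvx : v (algebraMap L F x) ≠ 0 := (zero_le.trans_lt hx).ne'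
  have hvfour : v 4 ≠ 0 := v.ne_zero_iff.mpr four_ne_zero
  have hvtwo : v 2 ^ 2 = v 4 := by rw [← map_pow]; norm_num
  have hdisc : v (algebraMap L F (y - W.negY x y)) ^ 2 = v 4 * v (algebraMap L F x) ^ 3 := by
    rw [← hγ.map_eval_Ψ₂Sq _ hx, ← sub_negY_sq_eq_eval_Ψ₂Sq h, map_sub, map_pow, ← map_negY]
    rfl
  refine hsq ((y - W.negY x y) / (2 * x)) ?_
  rw [map_div₀, map_mul, map_ofNat, map_div₀, map_mul, div_pow, mul_pow, hvtwo, hdisc]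
  field_simp

/-- The affine coordinates of a point of a Weierstrass curve; the point at infinity has none. -/
def affineCoords {R : Type*} [CommRing R] {W : Affine R} : W.Point → Set R
  | 0 => ∅
  | .some x y _ => {x, y}

theorem finite_affineCoords {R : Type*} [CommRing R] {W : Affine R} (P : W.Point) :
    (affineCoords P).Finite := by
  cases P with
  | zero => exact Set.finite_empty
  | some x y => exact Set.toFinite {x, y}

theorem exists_intermediateField_finiteDimensional_baseChange_eq (M : Type*) [Field M]
    [Algebra M F] [Algebra.IsAlgebraic M F] (W : Affine F) {T : Set W.Point} (hT : T.Finite) :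
    ∃ (L : IntermediateField M F) (W₀ : Affine L), FiniteDimensional M L ∧ (W₀⁄F) = W ∧
      ∀ P ∈ T, affineCoords P ⊆ L := by
  let S : Set F := {W.a₁, W.a₂, W.a₃, W.a₄, W.a₆} ∪ ⋃ P ∈ T, affineCoords P
  have hS : S.Finite := (Set.toFinite _).union (hT.biUnion fun P _ ↦ finite_affineCoords P)
  let L := IntermediateField.adjoin M S
  have hSL : S ⊆ L := IntermediateField.subset_adjoin M S
  have hcoeff : {W.a₁, W.a₂, W.a₃, W.a₄, W.a₆} ⊆ (L : Set F) := Set.subset_union_left.trans hSL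
  refine ⟨L, ⟨⟨W.a₁, hcoeff (by simp)⟩, ⟨W.a₂, hcoeff (by simp)⟩, ⟨W.a₃, hcoeff (by simp)⟩,
    ⟨W.a₄, hcoeff (by simp)⟩, ⟨W.a₆, hcoeff (by simp)⟩⟩, ?_, rfl, fun P hP ↦ ?_⟩
  · have := hS.to_subtype
    exact IntermediateField.finiteDimensional_adjoin fun x _ ↦ Algebra.IsIntegral.isIntegral x
  · exact (Set.subset_biUnion_of_mem hP).trans (Set.subset_union_right.trans hSL)

variable [DecidableEq L] [DecidableEq F]

theorem isOfFinAddOrder_of_zsmul_mem_range_baseChange [PerfectField L] [Algebra.IsAlgebraic L F]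
    {W : Affine L} {x y : F} {h : (W⁄F).Nonsingular x y}
    (hx : x ∈ (algebraMap L F).range) (hy : y ∉ (algebraMap L F).range) {n : ℤ} (hn : n ≠ 0)
    (hmem : n • Point.some x y h ∈ (Point.baseChange (W' := W) L F).range) :
    IsOfFinAddOrder (Point.some x y h) := by
  classical
  obtain ⟨τ, hτ⟩ := exists_algHom_algebraicClosure_apply_ne hy
  let ι := IsScalarTower.toAlgHom L F (AlgebraicClosure F)
  set P := Point.some x y h
  -- `P` and its conjugate are the two points above the `L`-rational abscissa `x`.
  have conj_neg : Point.map (W' := W) τ P = -Point.map ι P := by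
    obtain ⟨x₀, rfl⟩ := hx
    have hx_eq : τ (algebraMap L F x₀) = ι (algebraMap L F x₀) := by simp [ι]
    refine (Point.X_eq_iff.mp hx_eq).resolve_left fun heq ↦ hτ ?_
    exact (Point.some.inj heq).2
  have conj_fix : Point.map (W' := W) τ (n • P) = Point.map ι (n • P) := by
    obtain ⟨Q, hQ⟩ := hmem
    rw [← hQ, Point.map_baseChange, Point.map_baseChange]
  have neg_fix : -(n • P) = n • P := by
    refine Point.map_injective ι ?_
    rw [← conj_fix, map_neg, map_zsmul, map_zsmul, conj_neg, smul_neg]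
  refine isOfFinAddOrder_iff_zsmul_eq_zero.mpr ⟨2 * n, mul_ne_zero two_ne_zero hn, ?_⟩
  rw [mul_smul, two_zsmul, ← eq_neg_iff_add_eq_zero, neg_fix]

theorem mem_range_baseChange_of_affineCoords_subset {W : Affine L} {P : (W⁄F).Point}
    (hP : affineCoords P ⊆ (algebraMap L F).range) :
    P ∈ (Point.baseChange (W' := W) L F).range := by
  cases P with
  | zero => exact zero_mem _
  | some x y h =>
    obtain ⟨x, rfl⟩ := hP (Set.mem_insert x {y})
    obtain ⟨y, rfl⟩ := hP (Set.mem_insert_of_mem _ (Set.mem_singleton y))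
    exact ⟨.some x y ((W.baseChange_nonsingular (Algebra.ofId L F).injective x y).mp h), rfl⟩

theorem exists_point_forall_zsmul_notMem_range_baseChange [PerfectField L]
    [Algebra.IsAlgebraic L F] [NeZero (4 : F)] (hF : ∀ a : F, IsSquare a) (W : Affine L)
    (hv : v 2 < 1) (hlarge : ∀ γ, ∃ x : L, γ < v (algebraMap L F x) ∧
      ∀ d : L, v (algebraMap L F d) ^ 2 ≠ v (algebraMap L F x)) :
    ∃ P : (W⁄F).Point, ∀ n : ℤ, n ≠ 0 → n • P ∉ (Point.baseChange (W' := W) L F).range := by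
  obtain ⟨γ, hγ⟩ := exists_isDuplicationBound (W⁄F) v
  obtain ⟨x, hx, hsq⟩ := hlarge γ
  have : NeZero (2 : F) := ⟨fun h ↦ four_ne_zero (α := F) (by linear_combination 2 * h)⟩
  have hfour : v 4 < 1 := by
    rw [show (4 : F) = 2 ^ 2 by norm_num, map_pow]
    exact pow_lt_one₀ zero_le hv two_ne_zero
  obtain ⟨y, hy⟩ := exists_equation_of_forall_isSquare hF (W⁄F) (algebraMap L F x)
  refine ⟨.some _ y (hγ.nonsingular hx hy), fun n hn hmem ↦ ?_⟩
  exact hγ.not_isOfFinAddOrder_some hx hfour _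
    (isOfFinAddOrder_of_zsmul_mem_range_baseChange ⟨x, rfl⟩ (hγ.Y_notMem_range hx hsq hy) hn hmem)

end Descent

theorem statement6_general {F : Type*} [Field F] [CharZero F] [DecidableEq F]
    (hF : ∀ a : F, IsSquare a) (W : WeierstrassCurve.Affine F) :
    Cardinal.aleph0 ≤ Module.rank ℚ (ℚ ⊗[ℤ] W.Point) := by
  classical
  by_contra! hrank
  obtain ⟨T, hT, hmul⟩ := exists_finite_zsmul_mem_closure_of_rank_lt_aleph0 hrank
  obtain ⟨M, B, _, htwo, hdisc⟩ := exists_subfield_isAlgebraic_valuation_eq_two_zpow F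
  obtain ⟨L, W₀, _, rfl, hcoords⟩ :=
    exists_intermediateField_finiteDimensional_baseChange_eq M W hT
  have hclosure : AddSubgroup.closure T ≤
      (WeierstrassCurve.Affine.Point.baseChange (W' := W₀) L F).range :=
    (AddSubgroup.closure_le _).mpr fun P hP ↦
      mem_range_baseChange_of_affineCoords_subset fun c hc ↦ ⟨⟨c, hcoords P hP hc⟩, rfl⟩
  have hlarge := exists_lt_valuation_forall_valuation_sq_ne_of_finiteDimensional (L := L)
    B.valuation_surjective (two_ne_zero (α := M)) htwo hdisc
  have : NeZero (4 : F) := .charZero_ofNat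
  obtain ⟨P, hP⟩ := exists_point_forall_zsmul_notMem_range_baseChange hF W₀ htwo hlarge
  obtain ⟨n, hn, hmem⟩ := hmul P
  exact hP n hn (hclosure hmem)

open scoped Classical in
theorem statement6 (F : Type*) [Field F] [IsAlgClosed F] [CharZero F]
    (W : WeierstrassCurve.Affine F) (hΔ : W.Δ ≠ 0) :
    Cardinal.aleph0 ≤ Module.rank ℚ (ℚ ⊗[ℤ] W.Point) := by
  exact statement6_general IsAlgClosed.exists_eq_mul_self W
end

section
/- Let $p$ be a prime, let $F$ be an algebraically closed field of characteristic $p$ that is not algebraic over its prime field $\mathbb{F}_p$ (i.e. some element of $F$ is transcendental over $\mathbb{F}_p$), and let $W$ be an elliptic curve over $F$ (a Weierstrass curve over $F$ with nonzero discriminant). Then the rank of the group $W(F)$ of $F$-rational points of $W$ is infinite, i.e. the $\mathbb{Q}$-vector space $W(F) \otimes_{\mathbb{Z}} \mathbb{Q}$ is infinite-dimensional. -/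
open TensorProduct

/-!
Write `k(X)` for a rational function field contained in `F`. A curve over an algebraically closed
field is determined by its `j`-invariant, and there is a curve with any prescribed `j`, so `W` may
be replaced by the base change of a curve `V` over `k[X]`, and `F` by the algebraic closure of
`k(X)`.

If the rank were finite, the points defined over some finite extension `L` of `k(X)` would generate
the whole group up to torsion. Choose a prime `π` of `k[X]` unramified in the separable part of
`L` and a point `P` with `x`-coordinate `a / π`, where `π ∤ a`. After scaling, its `y`-coordinate
is a root of a quadratic polynomial that is Eisenstein at `π`, so it does not lie in `L` and some
automorphism over `L` sends `P` to `-P`. Since a multiple `nP` with `n ≠ 0` is defined over `L`,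
it follows that `2nP = 0`. On the other hand doubling multiplies the height of the `x`-coordinate
by `4` up to a bounded error, so `P` has infinite order as soon as `a / π` has large height.
-/

open Polynomial

section Rank

lemma exists_finite_forall_exists_smul_mem_span {R M : Type*} [CommRing R] [IsDomain R]
    [AddCommGroup M] [Module R M] (h : Module.rank R M < Cardinal.aleph0) :
    ∃ S : Set M, S.Finite ∧ ∀ x : M, ∃ r : R, r ≠ 0 ∧ r • x ∈ Submodule.span R S := by
  obtain ⟨S, hScard, hSindep⟩ := exists_set_linearIndependent R M
  refine ⟨S, Cardinal.lt_aleph0_iff_set_finite.1 (hScard ▸ h), fun x => ?_⟩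
  have hquot : Module.rank R (M ⧸ Submodule.span R S) = 0 := by
    refine (Cardinal.add_right_inj_of_lt_aleph0 h).1 ?_
    rw [zero_add]
    simpa only [rank_span_set hSindep, hScard] using
      Submodule.rank_quotient_add_rank (Submodule.span R S)
  obtain ⟨r, hr, hrx⟩ := rank_eq_zero_iff.1 hquot (Submodule.Quotient.mk x)
  exact ⟨r, hr, by rwa [← Submodule.Quotient.mk_smul, Submodule.Quotient.mk_eq_zero] at hrx⟩

lemma aleph0_le_rank_of_forall_finite_exists_map_eq_neg {M : Type*} [AddCommGroup M]
    (h : ∀ S : Set M, S.Finite → ∃ φ : M →+ M, (∀ Q ∈ S, φ Q = Q) ∧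
      ∃ P, ¬ IsOfFinAddOrder P ∧ φ P = -P) :
    Cardinal.aleph0 ≤ Module.rank ℤ M := by
  by_contra! hrank
  obtain ⟨S, hS, hspan⟩ := exists_finite_forall_exists_smul_mem_span hrank
  obtain ⟨φ, hφS, P, hP, hφP⟩ := h S hS
  obtain ⟨n, hn, hnP⟩ := hspan P
  have hfix : φ (n • P) = n • P :=
    LinearMap.eqOn_span (f := φ.toIntLinearMap) (g := LinearMap.id) hφS hnP
  have hneg : φ (n • P) = -(n • P) := by rw [map_zsmul, hφP, smul_neg]
  refine hP (isOfFinAddOrder_iff_zsmul_eq_zero.2 ⟨2 * n, mul_ne_zero two_ne_zero hn, ?_⟩)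
  rw [mul_zsmul, two_zsmul, ← eq_neg_iff_add_eq_zero, ← hneg, hfix]

lemma aleph0_le_rank_int_of_injective {M N : Type*} [AddCommGroup M] [AddCommGroup N] (f : M →+ N)
    (hf : Function.Injective f) (h : Cardinal.aleph0 ≤ Module.rank ℤ M) :
    Cardinal.aleph0 ≤ Module.rank ℤ N := by
  simpa using (Cardinal.lift_le.2 h).trans
    (LinearMap.lift_rank_le_of_injective f.toIntLinearMap hf)

end Rank

section Eisenstein

lemma le_span_singleton_sup_sq {A : Type*} [CommRing A] [IsDedekindDomain A] {𝔭 : Ideal A}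
    [𝔭.IsPrime] (h𝔭 : 𝔭 ≠ ⊥) {a : A} (ha : a ∈ 𝔭) (ha' : a ∉ 𝔭 ^ 2) :
    𝔭 ≤ Ideal.span {a} ⊔ 𝔭 ^ 2 := fun c hc => by
  obtain ⟨d, e, he, rfl⟩ := Ideal.exists_mul_add_mem_pow_succ (i := 1) h𝔭 a c
    (by rwa [pow_one]) ha' (by rwa [pow_one])
  exact Ideal.mem_span_singleton_sup.2 ⟨d, e, he, by ring⟩

lemma algebraMap_coeff_zero_mem_sq {A B : Type*} [CommRing A] [CommRing B] [Algebra A B]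
    {𝔭 : Ideal A} {P : Ideal B} [P.IsPrime] (hP : 𝔭.map (algebraMap A B) ≤ P) {f : A[X]}
    (hf : f.IsEisensteinAt 𝔭) (hmonic : f.Monic) (hdeg : 2 ≤ f.natDegree) {Y : B}
    (hY : aeval Y f = 0) : algebraMap A B (f.coeff 0) ∈ P ^ 2 := by
  have hYP : Y ∈ P := Ideal.IsPrime.mem_of_pow_mem ‹_› _
    (hP <| hf.isWeaklyEisensteinAt.pow_natDegree_le_of_aeval_zero_of_monic_mem_map hY hmonic _
      le_rfl)
  rw [aeval_eq_sum_range, Finset.sum_range_succ', pow_zero, Algebra.smul_def, mul_one] at hY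
  rw [eq_neg_of_add_eq_zero_right hY, neg_mem_iff]
  refine sum_mem fun i hi => ?_
  rcases Nat.eq_zero_or_pos i with rfl | hi0
  · rw [Algebra.smul_def, pow_two, zero_add, pow_one]
    exact Ideal.mul_mem_mul (hP (Ideal.mem_map_of_mem _ (hf.mem (by lia)))) hYP
  · exact Submodule.smul_of_tower_mem _ _
      (Ideal.pow_le_pow_right (by lia) (Ideal.pow_mem_pow hYP _))

attribute [local instance] FractionRing.liftAlgebra FractionRing.isScalarTower_liftAlgebra

lemma aeval_ne_zero_of_isEisensteinAt_of_notMem_differentIdeal {A B : Type*} [CommRing A]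
    [IsDedekindDomain A] [CommRing B] [IsDedekindDomain B] [Algebra A B] [Module.IsTorsionFree A B]
    [Module.Finite A B] [Algebra.IsSeparable (FractionRing A) (FractionRing B)] {𝔭 : Ideal A}
    [𝔭.IsMaximal] (h𝔭0 : 𝔭 ≠ ⊥) {d : A} (hd : algebraMap A B d ∈ differentIdeal A B)
    (hd𝔭 : d ∉ 𝔭) {f : A[X]} (hf : f.IsEisensteinAt 𝔭) (hmonic : f.Monic)
    (hdeg : 2 ≤ f.natDegree) (Y : B) : aeval Y f ≠ 0 := fun hY => by
  obtain ⟨P, hPmax, hPover⟩ := Ideal.exists_maximal_ideal_liesOver_of_isIntegral (S := B) 𝔭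
  have h𝔭P : 𝔭.map (algebraMap A B) ≤ P := Ideal.map_le_iff_le_comap.2 hPover.over.le
  have hramified : 𝔭.map (algebraMap A B) ≤ P ^ 2 := by
    refine (Ideal.map_mono (le_span_singleton_sup_sq h𝔭0 (hf.mem (by lia)) hf.notMem)).trans ?_
    rw [Ideal.map_sup, Ideal.map_span, Set.image_singleton, Ideal.map_pow, sup_le_iff,
      Ideal.span_singleton_le_iff_mem]
    exact ⟨algebraMap_coeff_zero_mem_sq h𝔭P hf hmonic hdeg hY, Ideal.pow_right_mono h𝔭P 2⟩
  have hPdiff : P ∣ differentIdeal A B := by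
    simpa using pow_sub_one_dvd_differentIdeal A P 2 h𝔭0 (Ideal.dvd_iff_le.2 hramified)
  exact hd𝔭 (hPover.over.ge (Ideal.le_of_dvd hPdiff hd))

lemma exists_forall_isEisensteinAt_aeval_ne_zero (A K M : Type*) [CommRing A] [IsDedekindDomain A]
    [Field K] [Field M] [Algebra A K] [IsFractionRing A K] [Algebra K M] [Algebra A M]
    [IsScalarTower A K M] [FiniteDimensional K M] [Algebra.IsSeparable K M] :
    ∃ d : A, d ≠ 0 ∧ ∀ 𝔭 : Ideal A, 𝔭.IsMaximal → 𝔭 ≠ ⊥ → d ∉ 𝔭 → ∀ f : A[X],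
      f.IsEisensteinAt 𝔭 → f.Monic → 2 ≤ f.natDegree → ∀ Y : M, aeval Y f ≠ 0 := by
  let B := integralClosure A M
  have : IsDedekindDomain B := integralClosure.isDedekindDomain A K M
  have : Module.Finite A B := IsIntegralClosure.finite A K M B
  have : IsFractionRing B M := integralClosure.isFractionRing_of_finite_extension K M
  have : FaithfulSMul A K := inferInstance
  have : FaithfulSMul A M := .trans A K M
  have : Algebra.IsSeparable (FractionRing A) (FractionRing B) :=
    .of_equiv_equiv (FractionRing.algEquiv A K).symm.toRingEquiv
      (FractionRing.algEquiv B M).symm.toRingEquiv <| RingHom.ext fun _ =>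
        IsFractionRing.algEquiv_commutes (FractionRing.algEquiv A K).symm
          (FractionRing.algEquiv B M).symm _
  have hdiff : (differentIdeal A B).comap (algebraMap A B) ≠ ⊥ := fun h =>
    differentIdeal_ne_bot (Ideal.eq_bot_of_comap_eq_bot h)
  obtain ⟨d, hd, hd0⟩ := Submodule.exists_mem_ne_zero_of_ne_bot hdiff
  refine ⟨d, hd0, fun 𝔭 _ h𝔭0 hd𝔭 f hf hmonic hdeg Y hY => ?_⟩
  have hYint : IsIntegral A Y := ⟨f, hmonic, hY⟩
  refine aeval_ne_zero_of_isEisensteinAt_of_notMem_differentIdeal h𝔭0 hd hd𝔭 hf hmonic hdeg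
    (⟨Y, hYint⟩ : B) ?_
  exact Subtype.ext ((aeval_algebraMap_apply M (⟨Y, hYint⟩ : B) f).symm.trans hY)

end Eisenstein

section Galois

lemma exists_algEquiv_apply_eq_of_natDegree_eq_two {L F : Type*} [Field L] [Field F] [Algebra L F]
    [Normal L F] {f : L[X]} (hmonic : f.Monic) (hdeg : f.natDegree = 2) {y y' : F}
    (hy : aeval y f = 0) (hy' : aeval y' f = 0) (hyL : y ∉ (algebraMap L F).range) :
    ∃ σ : F ≃ₐ[L] F, σ y = y' := by
  have hint : IsIntegral L y := ⟨f, hmonic, hy⟩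
  have hminpoly : f = minpoly L y :=
    eq_of_monic_of_dvd_of_natDegree_le (minpoly.monic hint) hmonic (minpoly.dvd L y hy)
      (hdeg ▸ (minpoly.two_le_natDegree_iff hint).2 hyL)
  exact minpoly.exists_algEquiv_of_root' hint.isAlgebraic (hminpoly ▸ hy')

lemma isSeparable_of_aeval_eq_zero_of_ne {K F : Type*} [Field K] [Field F] [Algebra K F] {f : K[X]}
    (hmonic : f.Monic) (hdeg : f.natDegree = 2) {y y' : F} (hy : aeval y f = 0)
    (hy' : aeval y' f = 0) (hne : y ≠ y') : IsSeparable K y := by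
  have hcoprime : IsCoprime (X - C y) (X - C y') :=
    isCoprime_X_sub_C_of_isUnit_sub (sub_ne_zero.2 hne).isUnit
  have hfactor : f.map (algebraMap K F) = (X - C y) * (X - C y') := by
    refine eq_of_monic_of_dvd_of_natDegree_le ((monic_X_sub_C y).mul (monic_X_sub_C y'))
      (hmonic.map _) (hcoprime.mul_dvd ?_ ?_) ?_
    · rwa [dvd_iff_isRoot, IsRoot.def, eval_map_algebraMap]
    · rwa [dvd_iff_isRoot, IsRoot.def, eval_map_algebraMap]
    · rw [natDegree_map, hdeg, natDegree_mul (X_sub_C_ne_zero y) (X_sub_C_ne_zero y'),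
        natDegree_X_sub_C, natDegree_X_sub_C]
  refine Separable.of_dvd ?_ (minpoly.dvd K y hy)
  rw [← separable_map (algebraMap K F), hfactor]
  exact separable_X_sub_C.mul separable_X_sub_C hcoprime

end Galois

section Height

variable {k : Type*} [Field k]

lemma exists_forall_natDegree_eval_le {σ : Type*} {p : MvPolynomial σ k[X]} {n : ℕ}
    (hp : p.IsHomogeneous n) : ∃ c, ∀ (x : σ → k[X]) (m : ℕ), (∀ i, (x i).natDegree ≤ m) →
      (MvPolynomial.eval x p).natDegree ≤ n * m + c := by
  refine ⟨p.support.sup fun s => (p.coeff s).natDegree, fun x m hx => ?_⟩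
  rw [MvPolynomial.eval_eq]
  refine natDegree_sum_le_of_forall_le _ _ fun s hs => ?_
  have hmonomial : (∏ i ∈ s.support, x i ^ s i).natDegree ≤ n * m :=
    calc (∏ i ∈ s.support, x i ^ s i).natDegree
        ≤ ∑ i ∈ s.support, (x i ^ s i).natDegree := natDegree_prod_le _ _
      _ ≤ ∑ i ∈ s.support, s i * m :=
        Finset.sum_le_sum fun i _ => natDegree_pow_le.trans (Nat.mul_le_mul_left _ (hx i))
      _ = n * m := by
        rw [← Finset.sum_mul, ← hp (MvPolynomial.mem_support_iff.1 hs),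
          ← Finsupp.degree_apply, Finsupp.degree_eq_weight_one, Pi.one_def]
  have hcoeff : (p.coeff s).natDegree ≤ p.support.sup fun s => (p.coeff s).natDegree :=
    Finset.le_sup (f := fun s => (p.coeff s).natDegree) hs
  exact natDegree_mul_le.trans (by lia)

variable {K : Type*} [Field K] [Algebra k[X] K] [IsFractionRing k[X] K]

variable (k) in
/-- The height of an element of the rational function field `K = k(X)`: the maximum of the degrees
of its numerator and denominator in lowest terms. -/
noncomputable def fractionHeight (x : K) : ℕ :=
  max (IsFractionRing.num k[X] x).natDegree (IsFractionRing.den k[X] x : k[X]).natDegree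

lemma algebraMap_den_ne_zero (x : K) : algebraMap k[X] K (IsFractionRing.den k[X] x) ≠ 0 :=
  IsFractionRing.to_map_ne_zero_of_mem_nonZeroDivisors (IsFractionRing.den k[X] x).2

variable (K) in
lemma max_natDegree_le_fractionHeight_div_add {a b d : k[X]} (hb : b ≠ 0) (hd : d ≠ 0)
    (h : ∀ g, g ∣ a → g ∣ b → g ∣ d) :
    max a.natDegree b.natDegree ≤
      fractionHeight k (algebraMap k[X] K a / algebraMap k[X] K b) + d.natDegree := by
  set x := algebraMap k[X] K a / algebraMap k[X] K b with hx
  have hbK : algebraMap k[X] K b ≠ 0 := IsFractionRing.to_map_ne_zero_of_mem_nonZeroDivisors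
    (mem_nonZeroDivisors_of_ne_zero hb)
  have hcross : a * IsFractionRing.den k[X] x = IsFractionRing.num k[X] x * b := by
    refine IsFractionRing.injective k[X] K ?_
    rw [map_mul, map_mul, ← div_eq_div_iff hbK (algebraMap_den_ne_zero x), ← hx,
      IsFractionRing.mk'_num_den']
  obtain ⟨g, hg⟩ : (IsFractionRing.den k[X] x : k[X]) ∣ b :=
    (IsFractionRing.num_den_reduced k[X] x).symm.dvd_of_dvd_mul_left (Dvd.intro_left a hcross)
  have hag : a = IsFractionRing.num k[X] x * g := by
    refine mul_right_cancel₀ (nonZeroDivisors.coe_ne_zero (IsFractionRing.den k[X] x)) ?_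
    rw [hcross, hg]; ring
  have hgd := natDegree_le_of_dvd (h g (hag ▸ dvd_mul_left _ _) (hg ▸ dvd_mul_left _ _)) hd
  have := natDegree_mul_le (p := IsFractionRing.num k[X] x) (q := g)
  have := natDegree_mul_le (p := (IsFractionRing.den k[X] x : k[X])) (q := g)
  rw [← hg] at this
  rw [fractionHeight, hag]
  lia

end Height

section Duplication

open WeierstrassCurve

section CommRing

variable {R S : Type*} [CommRing R] [CommRing S] (W : WeierstrassCurve R)

/-- The numerator `a⁴ - b₄a²b² - 2b₆ab³ - b₈b⁴` of the `x`-coordinate of twice a point whose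
`x`-coordinate is `a / b`. -/
def duplicationNum (a b : R) : R :=
  a ^ 4 - W.b₄ * a ^ 2 * b ^ 2 - 2 * W.b₆ * a * b ^ 3 - W.b₈ * b ^ 4

/-- The denominator `4a³b + b₂a²b² + 2b₄ab³ + b₆b⁴` of the `x`-coordinate of twice a point whose
`x`-coordinate is `a / b`. -/
def duplicationDenom (a b : R) : R :=
  4 * a ^ 3 * b + W.b₂ * a ^ 2 * b ^ 2 + 2 * W.b₄ * a * b ^ 3 + W.b₆ * b ^ 4

lemma map_duplicationNum (f : R →+* S) (a b : R) :
    f (duplicationNum W a b) = duplicationNum (W.map f) (f a) (f b) := by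
  simp [duplicationNum, map_ofNat]

lemma map_duplicationDenom (f : R →+* S) (a b : R) :
    f (duplicationDenom W a b) = duplicationDenom (W.map f) (f a) (f b) := by
  simp [duplicationDenom, map_ofNat]

lemma duplicationNum_mul_mul (a b c : R) :
    duplicationNum W (a * c) (b * c) = duplicationNum W a b * c ^ 4 := by
  simp only [duplicationNum]; ring

lemma duplicationDenom_mul_mul (a b c : R) :
    duplicationDenom W (a * c) (b * c) = duplicationDenom W a b * c ^ 4 := by
  simp only [duplicationDenom]; ring

-- On the diagonal the components of `addSubMap W` are `duplicationNum W`, `duplicationDenom W`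
-- and `0`.
lemma addSubMapCoeff_mul_duplicationNum_add (a b : R) (i : Fin 3) :
    (addSubMapCoeff W (i, 0)).eval ![a ^ 2, 2 * a * b, b ^ 2] * duplicationNum W a b +
      (addSubMapCoeff W (i, 1)).eval ![a ^ 2, 2 * a * b, b ^ 2] * duplicationDenom W a b =
        W.Δ * ![a ^ 2, 2 * a * b, b ^ 2] i ^ 4 := by
  simp only [addSubMapCoeff, duplicationNum, duplicationDenom, WeierstrassCurve.Δ,
    Function.uncurry_apply_pair]
  fin_cases i <;>
    simp only [Fin.zero_eta, Fin.mk_one, Fin.reduceFinMk, Matrix.cons_val, map_add, map_sub,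
      map_neg, map_mul, map_pow, MvPolynomial.eval_C, MvPolynomial.eval_X] <;>
    grind only [WeierstrassCurve.b_relation]

variable {W} in
lemma dvd_discr_of_dvd_duplicationNum_of_dvd_duplicationDenom {a b q : R} (hab : IsCoprime a b)
    (hnum : q ∣ duplicationNum W a b) (hdenom : q ∣ duplicationDenom W a b) : q ∣ W.Δ := by
  have hdvd (i : Fin 3) : q ∣ W.Δ * ![a ^ 2, 2 * a * b, b ^ 2] i ^ 4 :=
    addSubMapCoeff_mul_duplicationNum_add W a b i ▸
      dvd_add (hnum.mul_left _) (hdenom.mul_left _)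
  obtain ⟨u, v, huv⟩ : IsCoprime ((a ^ 2) ^ 4) ((b ^ 2) ^ 4) := hab.pow.pow
  rw [← mul_one W.Δ, ← huv, mul_add, mul_left_comm, mul_left_comm W.Δ]
  exact dvd_add ((hdvd 0).mul_left u) ((hdvd 2).mul_left v)

end CommRing

section Field

variable {L : Type*} [Field L] (W : WeierstrassCurve L)

/-- The `x`-coordinate of twice a point on `W` with `x`-coordinate `x`, with junk value `0` when
that double is the point at infinity. -/
def duplicationX (x : L) : L :=
  duplicationNum W x 1 / duplicationDenom W x 1

variable {W} in
lemma duplicationDenom_div_one {a b : L} (hb : b ≠ 0) :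
    duplicationDenom W (a / b) 1 = duplicationDenom W a b / b ^ 4 := by
  rw [eq_div_iff (pow_ne_zero 4 hb), ← duplicationDenom_mul_mul, div_mul_cancel₀ a hb, one_mul]

variable {W} in
lemma duplicationX_div {a b : L} (hb : b ≠ 0) :
    duplicationX W (a / b) = duplicationNum W a b / duplicationDenom W a b := by
  rw [duplicationX, ← mul_div_mul_right _ _ (pow_ne_zero 4 hb), ← duplicationNum_mul_mul,
    ← duplicationDenom_mul_mul, div_mul_cancel₀ a hb, one_mul]

lemma map_duplicationX {L' : Type*} [Field L'] (f : L →+* L') (x : L) :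
    f (duplicationX W x) = duplicationX (W.map f) (f x) := by
  rw [duplicationX, map_div₀, map_duplicationNum, map_duplicationDenom, map_one, duplicationX]

variable [DecidableEq L] {W}

lemma exists_add_self_eq_some_duplicationX {x y : L} (h : W.toAffine.Nonsingular x y)
    (hdenom : duplicationDenom W x 1 ≠ 0) :
    ∃ y' h', (.some x y h + .some x y h : W.toAffine.Point) = .some (duplicationX W x) y' h' := by
  have heq := (Affine.equation_iff' ..).1 h.1
  have hsq : duplicationDenom W x 1 = (y - W.toAffine.negY x y) ^ 2 := by
    simp only [duplicationDenom, Affine.negY, b₂, b₄, b₆]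
    linear_combination -4 * heq
  have hY : y - W.toAffine.negY x y ≠ 0 := fun h0 => hdenom (by rw [hsq, h0, zero_pow two_ne_zero])
  have haddX : W.toAffine.addX x x (W.toAffine.slope x x y y) = duplicationX W x := by
    rw [Affine.slope_of_Y_ne rfl (sub_ne_zero.1 hY), duplicationX, eq_div_iff hdenom, hsq]
    simp only [Affine.addX, duplicationNum]
    field_simp
    simp only [Affine.negY, b₄, b₆, b₈]
    grind
  exact haddX ▸ ⟨_, _, Affine.Point.add_self_of_Y_ne (sub_ne_zero.1 hY)⟩

lemma exists_two_pow_nsmul_eq_some {x y : L} (h : W.toAffine.Nonsingular x y)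
    (hdenom : ∀ i, duplicationDenom W ((duplicationX W)^[i] x) 1 ≠ 0) (i : ℕ) :
    ∃ y' h', 2 ^ i • (.some x y h : W.toAffine.Point) = .some ((duplicationX W)^[i] x) y' h' := by
  induction i with
  | zero => exact ⟨y, h, one_nsmul _⟩
  | succ i ih =>
    obtain ⟨y', h', hi⟩ := ih
    rw [pow_succ, mul_nsmul, hi, two_nsmul, Function.iterate_succ_apply']
    exact exists_add_self_eq_some_duplicationX h' (hdenom i)

end Field

section Polynomial

variable {k : Type*} [Field k] {V : WeierstrassCurve k[X]}

lemma exists_forall_four_mul_max_natDegree_le (hΔ : V.Δ ≠ 0) : ∃ c, ∀ a b : k[X],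
    4 * max a.natDegree b.natDegree ≤
      max (duplicationNum V a b).natDegree (duplicationDenom V a b).natDegree + c := by
  choose c hc using fun ij => exists_forall_natDegree_eval_le (isHomogeneous_addSubMapCoeff V ij)
  refine ⟨∑ ij, c ij, fun a b => ?_⟩
  set m := max a.natDegree b.natDegree
  set x := ![a ^ 2, 2 * a * b, b ^ 2] with hx
  have hxdeg (i : Fin 3) : (x i).natDegree ≤ 2 * m := by
    have hmiddle : (2 * a * b).natDegree ≤ a.natDegree + b.natDegree := by
      rw [mul_assoc, ← C_ofNat]
      exact (natDegree_C_mul_le 2 (a * b)).trans natDegree_mul_le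
    fin_cases i
    · exact natDegree_pow_le.trans (Nat.mul_le_mul_left 2 (le_max_left ..))
    · exact hmiddle.trans (by lia)
    · exact natDegree_pow_le.trans (Nat.mul_le_mul_left 2 (le_max_right ..))
  have hcoeff (ij : Fin 3 × Fin 3) :
      ((addSubMapCoeff V ij).eval x).natDegree ≤ 4 * m + ∑ ij, c ij :=
    (hc ij x _ hxdeg).trans <| by
      have := Finset.single_le_sum (f := c) (fun _ _ => Nat.zero_le _) (Finset.mem_univ ij)
      lia
  have hlower (i : Fin 3) : 4 * (x i).natDegree ≤ 4 * m + ∑ ij, c ij +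
      max (duplicationNum V a b).natDegree (duplicationDenom V a b).natDegree := by
    rcases eq_or_ne (x i) 0 with h0 | h0
    · simp [h0]
    calc 4 * (x i).natDegree ≤ (V.Δ * x i ^ 4).natDegree := by
          rw [natDegree_mul hΔ (pow_ne_zero _ h0), natDegree_pow]; lia
      _ ≤ _ := by
        rw [← addSubMapCoeff_mul_duplicationNum_add]
        exact natDegree_add_le_of_degree_le
          (natDegree_mul_le.trans (add_le_add (hcoeff _) (le_max_left _ _)))
          (natDegree_mul_le.trans (add_le_add (hcoeff _) (le_max_right _ _)))
  have ha := hlower 0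
  have hb := hlower 2
  simp only [hx, Matrix.cons_val, natDegree_pow] at ha hb
  lia

lemma exists_forall_fractionHeight_lt_duplicationX (hΔ : V.Δ ≠ 0) (K : Type*) [Field K]
    [Algebra k[X] K] [IsFractionRing k[X] K] : ∃ c, ∀ ξ : K, c < fractionHeight k ξ →
      duplicationDenom (V⁄K) ξ 1 ≠ 0 ∧
        fractionHeight k ξ < fractionHeight k (duplicationX (V⁄K) ξ) := by
  obtain ⟨c, hc⟩ := exists_forall_four_mul_max_natDegree_le hΔ
  refine ⟨c + V.Δ.natDegree, fun ξ hξ => ?_⟩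
  set a := IsFractionRing.num k[X] ξ
  set b := (IsFractionRing.den k[X] ξ : k[X])
  have hcommon (g : k[X]) (hnum : g ∣ duplicationNum V a b) (hdenom : g ∣ duplicationDenom V a b) :
      g ∣ V.Δ :=
    dvd_discr_of_dvd_duplicationNum_of_dvd_duplicationDenom
      (IsFractionRing.num_den_reduced k[X] ξ).isCoprime hnum hdenom
  have hgrowth : 4 * fractionHeight k ξ ≤ _ := hc a b
  have hdenom : duplicationDenom V a b ≠ 0 := fun h0 => by
    have hnum := natDegree_le_of_dvd (hcommon _ dvd_rfl (h0 ▸ dvd_zero _)) hΔ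
    rw [h0, natDegree_zero, Nat.max_zero] at hgrowth
    lia
  have hb0 : algebraMap k[X] K b ≠ 0 := algebraMap_den_ne_zero ξ
  have hξ_eq : algebraMap k[X] K a / algebraMap k[X] K b = ξ := IsFractionRing.mk'_num_den' k[X] ξ
  have hnum_map : algebraMap k[X] K (duplicationNum V a b) =
    duplicationNum (V⁄K) (algebraMap k[X] K a) (algebraMap k[X] K b) := map_duplicationNum V _ a b
  have hdenom_map : algebraMap k[X] K (duplicationDenom V a b) =
    duplicationDenom (V⁄K) (algebraMap k[X] K a) (algebraMap k[X] K b) :=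
      map_duplicationDenom V _ a b
  have hlower := max_natDegree_le_fractionHeight_div_add K hdenom hΔ hcommon
  rw [hnum_map, hdenom_map, ← duplicationX_div hb0, hξ_eq] at hlower
  refine ⟨?_, by lia⟩
  rw [← hξ_eq, duplicationDenom_div_one hb0, ← hdenom_map]
  exact div_ne_zero ((map_ne_zero_iff _ (IsFractionRing.injective k[X] K)).2 hdenom)
    (pow_ne_zero 4 hb0)

lemma exists_forall_not_isOfFinAddOrder (hΔ : V.Δ ≠ 0) (K F : Type*) [Field K] [Algebra k[X] K]
    [IsFractionRing k[X] K] [Field F] [DecidableEq F] [Algebra k[X] F] [Algebra K F]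
    [IsScalarTower k[X] K F] : ∃ c, ∀ (ξ : K) (y : F) h, c < fractionHeight k ξ →
      ¬ IsOfFinAddOrder (.some (algebraMap K F ξ) y h : (V⁄F).toAffine.Point) := by
  obtain ⟨c, hc⟩ := exists_forall_fractionHeight_lt_duplicationX hΔ K
  refine ⟨c, fun ξ y h hξ hfin => ?_⟩
  have hV : (V⁄K).map (algebraMap K F) = V⁄F := V.map_baseChange (IsScalarTower.toAlgHom k[X] K F)
  have hmap (i : ℕ) : algebraMap K F ((duplicationX (V⁄K))^[i] ξ) =
      (duplicationX (V⁄F))^[i] (algebraMap K F ξ) :=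
    Function.Semiconj.iterate_right (fun x => hV ▸ map_duplicationX (V⁄K) (algebraMap K F) x) i ξ
  have hlarge (i : ℕ) : c < fractionHeight k ((duplicationX (V⁄K))^[i] ξ) := by
    induction i with
    | zero => exact hξ
    | succ i ih => rw [Function.iterate_succ_apply']; exact ih.trans (hc _ ih).2
  have hmono : StrictMono fun i => fractionHeight k ((duplicationX (V⁄K))^[i] ξ) :=
    strictMono_nat_of_lt_succ fun i => by
      rw [Function.iterate_succ_apply']; exact (hc _ (hlarge i)).2
  have hpoint := exists_two_pow_nsmul_eq_some h fun i => by
    have := (map_ne_zero (algebraMap K F)).2 (hc _ (hlarge i)).1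
    rwa [map_duplicationDenom, hV, hmap, map_one] at this
  have hinj : Function.Injective fun i : ℕ =>
      2 ^ i • (.some (algebraMap K F ξ) y h : (V⁄F).toAffine.Point) := fun i j hij => by
    obtain ⟨_, _, hi⟩ := hpoint i
    obtain ⟨_, _, hj⟩ := hpoint j
    have hX := (Affine.Point.some.inj (hi.symm.trans (hij.trans hj))).1
    rw [← hmap, ← hmap] at hX
    exact hmono.injective (congrArg (fractionHeight k) ((algebraMap K F).injective hX))
  exact Set.infinite_range_of_injective hinj
    (hfin.finite_multiples.subset (Set.range_subset_iff.2 fun i => ⟨2 ^ i, rfl⟩))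

end Polynomial

end Duplication

section GaloisConjugate

lemma exists_forall_isEisensteinAt_exists_algEquiv {A K F : Type*} [CommRing A]
    [IsDedekindDomain A] [Field K] [Algebra A K] [IsFractionRing A K] [Field F] [Algebra K F]
    [Algebra A F] [IsScalarTower A K F] [Normal K F] (L : IntermediateField K F)
    [FiniteDimensional K L] :
    ∃ d : A, d ≠ 0 ∧ ∀ 𝔭 : Ideal A, 𝔭.IsMaximal → 𝔭 ≠ ⊥ → d ∉ 𝔭 → ∀ f : A[X],
      f.IsEisensteinAt 𝔭 → f.Monic → f.natDegree = 2 → ∀ y y' : F, aeval y f = 0 →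
        aeval y' f = 0 → y ≠ y' → ∃ σ : F ≃ₐ[L] F, σ y = y' := by
  let M : IntermediateField K F := L ⊓ separableClosure K F
  have : FiniteDimensional K M :=
    .of_injective (IntermediateField.inclusion (inf_le_left : M ≤ L)).toLinearMap
      (IntermediateField.inclusion (inf_le_left : M ≤ L)).injective
  have : Algebra.IsSeparable K M := (le_separableClosure_iff K F M).1 inf_le_right
  obtain ⟨d, hd, hroot⟩ := exists_forall_isEisensteinAt_aeval_ne_zero A K M
  refine ⟨d, hd, fun 𝔭 h𝔭 h𝔭0 hd𝔭 f hf hmonic hdeg y y' hy hy' hne => ?_⟩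
  have hsep : IsSeparable K y :=
    isSeparable_of_aeval_eq_zero_of_ne (hmonic.map (algebraMap A K))
      (by rw [hmonic.natDegree_map, hdeg]) (by rwa [aeval_map_algebraMap])
      (by rwa [aeval_map_algebraMap]) hne
  have : IsScalarTower A L F := .of_algebraMap_eq fun _ => rfl
  have : IsScalarTower A M F := .of_algebraMap_eq fun _ => rfl
  have hyL : y ∉ L := fun hyL => by
    refine hroot 𝔭 h𝔭 h𝔭0 hd𝔭 f hf hmonic hdeg.ge ⟨y, hyL, mem_separableClosure_iff.2 hsep⟩ ?_
    refine (algebraMap M F).injective ?_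
    rw [← aeval_algebraMap_apply, map_zero]
    exact hy
  exact exists_algEquiv_apply_eq_of_natDegree_eq_two (hmonic.map (algebraMap A L))
    (by rw [hmonic.natDegree_map, hdeg]) (by rwa [aeval_map_algebraMap])
    (by rwa [aeval_map_algebraMap]) (by rintro ⟨z, rfl⟩; exact hyL z.2)

end GaloisConjugate

section FiberPolynomial

open WeierstrassCurve

section CommRing

variable {A : Type*} [CommRing A] (V : WeierstrassCurve A) (a b : A)

/-- The monic quadratic polynomial over `A` with roots `b ^ 2 * y`, where `(x, y)` runs over the
points of `V` with `x = a / b`. -/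
noncomputable def fiberPolynomial : A[X] :=
  X ^ 2 + C (b * (V.a₁ * a + V.a₃ * b)) * X -
    C (b * (a ^ 3 + V.a₂ * a ^ 2 * b + V.a₄ * a * b ^ 2 + V.a₆ * b ^ 3))

lemma natDegree_fiberPolynomial [Nontrivial A] : (fiberPolynomial V a b).natDegree = 2 := by
  rw [fiberPolynomial]
  compute_degree!

lemma monic_fiberPolynomial : (fiberPolynomial V a b).Monic := by
  rw [fiberPolynomial]
  monicity!

variable {V a b}

lemma aeval_fiberPolynomial {F : Type*} [CommRing F] [Algebra A F] {x y : F}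
    (hx : x * algebraMap A F b = algebraMap A F a) (h : (V⁄F).toAffine.Equation x y) :
    aeval (algebraMap A F b ^ 2 * y) (fiberPolynomial V a b) = 0 := by
  have heq : y ^ 2 + algebraMap A F V.a₁ * x * y + algebraMap A F V.a₃ * y -
      (x ^ 3 + algebraMap A F V.a₂ * x ^ 2 + algebraMap A F V.a₄ * x + algebraMap A F V.a₆) = 0 :=
    (Affine.equation_iff' ..).1 h
  simp only [fiberPolynomial, map_add, map_sub, map_mul, map_pow, aeval_X, aeval_C, ← hx]
  linear_combination algebraMap A F b ^ 4 * heq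

lemma isEisensteinAt_fiberPolynomial [IsDomain A] (hb : Prime b) (hab : ¬ b ∣ a) :
    (fiberPolynomial V a b).IsEisensteinAt (Ideal.span {b}) := by
  have hprime : (Ideal.span {b}).IsPrime := (Ideal.span_singleton_prime hb.ne_zero).2 hb
  have hcoeff_zero : (fiberPolynomial V a b).coeff 0 =
      -(b * (a ^ 3 + V.a₂ * a ^ 2 * b + V.a₄ * a * b ^ 2 + V.a₆ * b ^ 3)) := by
    simp only [fiberPolynomial, coeff_sub, coeff_add, coeff_X_pow, coeff_C_mul_X, coeff_C]
    simp
  have hcoeff_one : (fiberPolynomial V a b).coeff 1 = b * (V.a₁ * a + V.a₃ * b) := by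
    simp only [fiberPolynomial, coeff_sub, coeff_add, coeff_X_pow, coeff_C_mul_X, coeff_C]
    simp
  refine (monic_fiberPolynomial V a b).isEisensteinAt_of_mem_of_notMem hprime.ne_top
    (fun {n} hn => ?_) fun h => hab (hb.dvd_of_dvd_pow (n := 3) ?_)
  · rw [natDegree_fiberPolynomial] at hn
    rw [Ideal.mem_span_singleton]
    interval_cases n
    · exact hcoeff_zero ▸ (dvd_mul_right ..).neg_right
    · exact hcoeff_one ▸ dvd_mul_right ..
  · rw [hcoeff_zero, Ideal.span_singleton_pow, Ideal.mem_span_singleton, dvd_neg, sq b,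
      mul_dvd_mul_iff_left hb.ne_zero, add_assoc, add_assoc] at h
    have hrest : b ∣ V.a₂ * a ^ 2 * b + (V.a₄ * a * (b * b) + V.a₆ * b ^ 3) :=
      ⟨V.a₂ * a ^ 2 + V.a₄ * a * b + V.a₆ * b ^ 2, by ring⟩
    exact (dvd_add_left hrest).1 h

end CommRing

lemma exists_equation {F : Type*} [Field F] [IsAlgClosed F] (W : WeierstrassCurve F) (x : F) :
    ∃ y, W.toAffine.Equation x y := by
  obtain ⟨y, hy⟩ := IsAlgClosed.exists_root (fiberPolynomial W x 1)
    (degree_ne_of_natDegree_ne (by rw [natDegree_fiberPolynomial]; decide))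
  refine ⟨y, (Affine.equation_iff' ..).2 ?_⟩
  simp only [fiberPolynomial, IsRoot.def, eval_add, eval_sub, eval_mul, eval_pow, eval_X,
    eval_C] at hy
  linear_combination hy

end FiberPolynomial

section GaloisAction

open WeierstrassCurve

lemma exists_irreducible_not_dvd {k : Type*} [Field k] {d : k[X]} (hd : d ≠ 0) :
    ∃ π : k[X], Irreducible π ∧ ¬ π ∣ d := by
  have hdeg : 0 < (X * d + C 1).natDegree := by
    rw [natDegree_add_C, natDegree_X_mul hd]; exact Nat.succ_pos _
  obtain ⟨π, hπ, hdvd⟩ := WfDvdMonoid.exists_irreducible_factor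
    (not_isUnit_of_natDegree_pos _ hdeg) (ne_zero_of_natDegree_gt hdeg)
  refine ⟨π, hπ, fun h => hπ.not_isUnit (isUnit_of_dvd_one ?_)⟩
  rw [← C_1]
  exact (dvd_add_right (h.mul_left X)).1 hdvd

lemma exists_lt_fractionHeight_div {k : Type*} [Field k] (K : Type*) [Field K] [Algebra k[X] K]
    [IsFractionRing k[X] K] (c : ℕ) {π : k[X]} (hπ : Irreducible π) :
    ∃ a, ¬ π ∣ a ∧ c < fractionHeight k (algebraMap k[X] K a / algebraMap k[X] K π) := by
  have hcommon (g : k[X]) (hg : g ∣ π ^ (c + 1) + 1) (hgπ : g ∣ π) : g ∣ 1 :=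
    (dvd_add_right (dvd_pow hgπ c.succ_ne_zero)).1 hg
  refine ⟨π ^ (c + 1) + 1, fun h => hπ.not_isUnit (isUnit_of_dvd_one (hcommon π h dvd_rfl)), ?_⟩
  have hdeg : (π ^ (c + 1) + 1).natDegree = (c + 1) * π.natDegree := by
    rw [← C_1, natDegree_add_C, natDegree_pow]
  have hheight := max_natDegree_le_fractionHeight_div_add K hπ.ne_zero one_ne_zero hcommon
  rw [hdeg, natDegree_one, add_zero] at hheight
  have hpos := Nat.le_mul_of_pos_right (c + 1) hπ.natDegree_pos
  lia

variable {k K F : Type*} [Field k] [Field K] [Algebra k[X] K] [Field F]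
  [Algebra K F] [Algebra k[X] F] [IsScalarTower k[X] K F] {V : WeierstrassCurve k[X]}

lemma exists_algEquiv_apply_eq_negY [IsFractionRing k[X] K] [Normal K F]
    (L : IntermediateField K F) [FiniteDimensional K L] :
    ∃ π : k[X], Irreducible π ∧ ∀ a, ¬ π ∣ a → ∀ x y : F,
      x * algebraMap k[X] F π = algebraMap k[X] F a → (V⁄F).toAffine.Equation x y →
        y ≠ (V⁄F).toAffine.negY x y → ∃ σ : F ≃ₐ[L] F, σ y = (V⁄F).toAffine.negY x y := by
  obtain ⟨d, hd, hconj⟩ := exists_forall_isEisensteinAt_exists_algEquiv (A := k[X]) L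
  obtain ⟨π, hπ, hπd⟩ := exists_irreducible_not_dvd hd
  refine ⟨π, hπ, fun a ha x y hx heq hne => ?_⟩
  have hπF : algebraMap k[X] F π ^ 2 ≠ 0 := by
    have : FaithfulSMul k[X] F := .trans k[X] K F
    exact pow_ne_zero 2
      ((map_ne_zero_iff _ (FaithfulSMul.algebraMap_injective k[X] F)).2 hπ.ne_zero)
  obtain ⟨σ, hσ⟩ := hconj (Ideal.span {π}) (PrincipalIdealRing.isMaximal_of_irreducible hπ)
    (by rw [Ne, Ideal.span_singleton_eq_bot]; exact hπ.ne_zero)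
    (by rwa [Ideal.mem_span_singleton]) (fiberPolynomial V a π)
    (isEisensteinAt_fiberPolynomial hπ.prime ha) (monic_fiberPolynomial V a π)
    (natDegree_fiberPolynomial V a π) _ _ (aeval_fiberPolynomial hx heq)
    (aeval_fiberPolynomial hx ((Affine.equation_neg ..).2 heq))
    fun h => hne (mul_left_cancel₀ hπF h)
  have hσπ : σ (algebraMap k[X] F π) = algebraMap k[X] F π := by
    rw [IsScalarTower.algebraMap_apply k[X] K F]
    exact (σ.restrictScalars K).commutes _
  rw [map_mul, map_pow, hσπ] at hσ
  exact ⟨σ, mul_left_cancel₀ hπF hσ⟩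

variable [DecidableEq F]

variable (K) in
lemma exists_finiteDimensional_forall_map_eq [Algebra.IsAlgebraic K F]
    {S : Set (V⁄F).toAffine.Point} (hS : S.Finite) :
    ∃ L : IntermediateField K F, FiniteDimensional K L ∧
      ∀ σ : F →ₐ[L] F, ∀ Q ∈ S, Affine.Point.map (W' := V) (σ.restrictScalars K) Q = Q := by
  have hcoord (Q : (V⁄F).toAffine.Point) : ∃ T : Set F, T.Finite ∧ ∀ L : IntermediateField K F,
      T ⊆ L → ∀ σ : F →ₐ[L] F, Affine.Point.map (W' := V) (σ.restrictScalars K) Q = Q := by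
    rcases Q with _ | ⟨x, y, h⟩
    · exact ⟨∅, Set.finite_empty, fun _ _ σ => map_zero _⟩
    · refine ⟨{x, y}, Set.toFinite _, fun L hL σ => ?_⟩
      have hx : σ x = x := σ.commutes ⟨x, hL (by simp)⟩
      have hy : σ y = y := σ.commutes ⟨y, hL (by simp)⟩
      simp only [Affine.Point.map_some, AlgHom.coe_restrictScalars', hx, hy]
  choose T hTfin hT using hcoord
  have : Finite (⋃ Q ∈ S, T Q : Set F) := hS.biUnion fun Q _ => hTfin Q
  exact ⟨.adjoin K (⋃ Q ∈ S, T Q), IntermediateField.finiteDimensional_adjoin fun x _ =>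
    Algebra.IsIntegral.isIntegral x, fun σ Q hQ => hT Q _
      ((Set.subset_biUnion_of_mem hQ).trans (IntermediateField.subset_adjoin K _)) σ⟩

variable [IsFractionRing k[X] K] [IsAlgClosed F] [Algebra.IsAlgebraic K F]

lemma exists_not_isOfFinAddOrder_map_eq_neg (hΔ : V.Δ ≠ 0) (L : IntermediateField K F)
    [FiniteDimensional K L] :
    ∃ (σ : F →ₐ[L] F) (P : (V⁄F).toAffine.Point), ¬ IsOfFinAddOrder P ∧
      Affine.Point.map (W' := V) (σ.restrictScalars K) P = -P := by
  have : IsAlgClosure K F := ⟨‹_›, ‹_›⟩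
  have : Normal K F := IsAlgClosure.normal K F
  have : FaithfulSMul k[X] F := .trans k[X] K F
  have hΔF : (V⁄F).Δ ≠ 0 := by
    rw [baseChange, map_Δ]
    exact (map_ne_zero_iff _ (FaithfulSMul.algebraMap_injective k[X] F)).2 hΔ
  obtain ⟨π, hπ, hconj⟩ := exists_algEquiv_apply_eq_negY (V := V) L
  obtain ⟨c, hc⟩ := exists_forall_not_isOfFinAddOrder hΔ K F
  obtain ⟨a, ha, hheight⟩ := exists_lt_fractionHeight_div K c hπ
  set ξ := algebraMap k[X] K a / algebraMap k[X] K π with hξ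
  have hξπ : algebraMap K F ξ * algebraMap k[X] F π = algebraMap k[X] F a := by
    rw [IsScalarTower.algebraMap_apply k[X] K F, IsScalarTower.algebraMap_apply k[X] K F,
      ← map_mul, hξ, div_mul_cancel₀ _ ((map_ne_zero_iff _ (IsFractionRing.injective _ K)).2
        hπ.ne_zero)]
  obtain ⟨y, heq⟩ := exists_equation (V⁄F) (algebraMap K F ξ)
  have hns := (Affine.equation_iff_nonsingular_of_Δ_ne_zero hΔF).1 heq
  have hP := hc ξ y hns hheight
  have hne : y ≠ (V⁄F).toAffine.negY (algebraMap K F ξ) y := fun h =>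
    hP (isOfFinAddOrder_iff_nsmul_eq_zero.2
      ⟨2, two_pos, by rw [two_nsmul, Affine.Point.add_self_of_Y_eq h]⟩)
  obtain ⟨σ, hσ⟩ := hconj a ha _ y hξπ heq hne
  refine ⟨σ, .some _ y hns, hP, ?_⟩
  have hσξ : σ (algebraMap K F ξ) = algebraMap K F ξ := (σ.restrictScalars K).commutes ξ
  simp only [Affine.Point.map_some, Affine.Point.neg_some, AlgHom.coe_restrictScalars',
    AlgEquiv.coe_toAlgHom, hσ, hσξ]

lemma aleph0_le_rank_point_baseChange {k : Type*} [Field k] {V : WeierstrassCurve k[X]}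
    (hΔ : V.Δ ≠ 0) (K F : Type*) [Field K] [Algebra k[X] K] [IsFractionRing k[X] K] [Field F]
    [DecidableEq F] [IsAlgClosed F] [Algebra K F] [Algebra.IsAlgebraic K F] [Algebra k[X] F]
    [IsScalarTower k[X] K F] : Cardinal.aleph0 ≤ Module.rank ℤ (V⁄F).toAffine.Point := by
  refine aleph0_le_rank_of_forall_finite_exists_map_eq_neg fun S hS => ?_
  obtain ⟨L, _, hL⟩ := exists_finiteDimensional_forall_map_eq K hS
  obtain ⟨σ, P, hP, hσP⟩ := exists_not_isOfFinAddOrder_map_eq_neg hΔ L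
  exact ⟨Affine.Point.map (σ.restrictScalars K), hL σ, P, hP, hσP⟩

end GaloisAction

section VariableChange

open WeierstrassCurve

variable {F : Type*} [Field F] (C : VariableChange F)

/-- The `x`-coordinate on `W` of the point of `C • W` with `x`-coordinate `x`. -/
def variableChangeX (x : F) : F :=
  C.u ^ 2 * x + C.r

/-- The `y`-coordinate on `W` of the point of `C • W` with coordinates `(x, y)`. -/
def variableChangeY (x y : F) : F :=
  C.u ^ 3 * y + C.u ^ 2 * C.s * x + C.t

variable {C}

lemma variableChangeX_inj {x₁ x₂ : F} : variableChangeX C x₁ = variableChangeX C x₂ ↔ x₁ = x₂ := by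
  simp [variableChangeX]

lemma variableChangeY_inj {x y₁ y₂ : F} :
    variableChangeY C x y₁ = variableChangeY C x y₂ ↔ y₁ = y₂ := by
  simp [variableChangeY]

variable {W : WeierstrassCurve F}

lemma negY_variableChange (x y : F) :
    W.toAffine.negY (variableChangeX C x) (variableChangeY C x y) =
      variableChangeY C x ((C • W).toAffine.negY x y) := by
  simp only [Affine.negY, variableChangeX, variableChangeY, variableChange_def,
    Units.val_inv_eq_inv_val]
  field_simp
  ring

lemma equation_variableChange_iff {x y : F} :
    W.toAffine.Equation (variableChangeX C x) (variableChangeY C x y) ↔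
      (C • W).toAffine.Equation x y := by
  have hscale : W.toAffine.polynomial.evalEval (variableChangeX C x) (variableChangeY C x y) =
      C.u ^ 6 * (C • W).toAffine.polynomial.evalEval x y := by
    simp only [Affine.evalEval_polynomial, variableChangeX, variableChangeY, variableChange_def,
      Units.val_inv_eq_inv_val]
    field_simp
    ring
  rw [Affine.Equation, hscale, mul_eq_zero_iff_left (pow_ne_zero 6 C.u.ne_zero), Affine.Equation]

lemma nonsingular_variableChange {x y : F} (h : (C • W).toAffine.Nonsingular x y) :
    W.toAffine.Nonsingular (variableChangeX C x) (variableChangeY C x y) := by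
  have hX : C.u ^ 4 * (C • W).toAffine.polynomialX.evalEval x y =
      W.toAffine.polynomialX.evalEval (variableChangeX C x) (variableChangeY C x y) +
        C.s * W.toAffine.polynomialY.evalEval (variableChangeX C x) (variableChangeY C x y) := by
    simp only [Affine.evalEval_polynomialX, Affine.evalEval_polynomialY, variableChangeX,
      variableChangeY, variableChange_def, Units.val_inv_eq_inv_val]
    field_simp
    ring
  have hY : C.u ^ 3 * (C • W).toAffine.polynomialY.evalEval x y =
      W.toAffine.polynomialY.evalEval (variableChangeX C x) (variableChangeY C x y) := by
    simp only [Affine.evalEval_polynomialY, variableChangeX, variableChangeY, variableChange_def,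
      Units.val_inv_eq_inv_val]
    field_simp
    ring
  refine ⟨equation_variableChange_iff.2 h.1, ?_⟩
  contrapose! h
  rw [h.1, h.2, mul_zero, add_zero, mul_eq_zero_iff_left (pow_ne_zero 4 C.u.ne_zero)] at hX
  rw [h.2, mul_eq_zero_iff_left (pow_ne_zero 3 C.u.ne_zero)] at hY
  exact fun hns => hns.2.elim (· hX) (· hY)

lemma addX_variableChange (x₁ x₂ ℓ : F) :
    W.toAffine.addX (variableChangeX C x₁) (variableChangeX C x₂) (C.u * ℓ + C.s) =
      variableChangeX C ((C • W).toAffine.addX x₁ x₂ ℓ) := by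
  simp only [Affine.addX, variableChangeX, variableChange_def, Units.val_inv_eq_inv_val]
  field_simp
  ring

lemma addY_variableChange (x₁ x₂ y₁ ℓ : F) :
    W.toAffine.addY (variableChangeX C x₁) (variableChangeX C x₂) (variableChangeY C x₁ y₁)
      (C.u * ℓ + C.s) =
        variableChangeY C ((C • W).toAffine.addX x₁ x₂ ℓ) ((C • W).toAffine.addY x₁ x₂ y₁ ℓ) := by
  rw [Affine.addY, Affine.addY, addX_variableChange, ← negY_variableChange]
  congr 1
  rw [Affine.negAddY, Affine.negAddY, addX_variableChange]
  simp only [variableChangeX, variableChangeY]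
  ring

variable [DecidableEq F]

lemma slope_variableChange {x₁ x₂ y₁ y₂ : F} (h₁ : (C • W).toAffine.Equation x₁ y₁)
    (h₂ : (C • W).toAffine.Equation x₂ y₂)
    (hxy : ¬ (x₁ = x₂ ∧ y₁ = (C • W).toAffine.negY x₂ y₂)) :
    W.toAffine.slope (variableChangeX C x₁) (variableChangeX C x₂) (variableChangeY C x₁ y₁)
      (variableChangeY C x₂ y₂) = C.u * (C • W).toAffine.slope x₁ x₂ y₁ y₂ + C.s := by
  rcases eq_or_ne x₁ x₂ with rfl | hx
  · have hy : y₁ ≠ (C • W).toAffine.negY x₁ y₂ := fun h => hxy ⟨rfl, h⟩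
    obtain rfl := Affine.Y_eq_of_Y_ne h₁ h₂ rfl hy
    have hy' : variableChangeY C x₁ y₁ ≠
        W.toAffine.negY (variableChangeX C x₁) (variableChangeY C x₁ y₁) := by
      rwa [negY_variableChange, variableChangeY_inj.ne]
    have hsub : variableChangeY C x₁ y₁ -
        W.toAffine.negY (variableChangeX C x₁) (variableChangeY C x₁ y₁) =
          C.u ^ 3 * (y₁ - (C • W).toAffine.negY x₁ y₁) := by
      rw [negY_variableChange, variableChangeY, variableChangeY]; ring
    have hy0 := sub_ne_zero.2 hy
    rw [Affine.slope_of_Y_ne rfl hy, Affine.slope_of_Y_ne rfl hy', hsub]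
    field_simp
    simp only [Affine.negY, variableChangeX, variableChangeY, variableChange_def,
      Units.val_inv_eq_inv_val]
    field_simp
    ring
  · have hx0 := sub_ne_zero.2 hx
    have hsub : variableChangeX C x₁ - variableChangeX C x₂ = C.u ^ 2 * (x₁ - x₂) := by
      rw [variableChangeX, variableChangeX]; ring
    rw [Affine.slope_of_X_ne hx, Affine.slope_of_X_ne (variableChangeX_inj.ne.2 hx), hsub]
    simp only [variableChangeY]
    field_simp
    ring

variable (C W) in
/-- The group homomorphism on points induced by an admissible change of variables, from the
transformed curve to the original one. -/
def variableChangeHom : (C • W).toAffine.Point →+ W.toAffine.Point where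
  toFun
    | .zero => .zero
    | .some x y h => .some (variableChangeX C x) (variableChangeY C x y)
        (nonsingular_variableChange h)
  map_zero' := rfl
  map_add' := by
    rintro (_ | ⟨x₁, y₁, h₁⟩) (_ | ⟨x₂, y₂, h₂⟩)
    any_goals rfl
    by_cases hxy : x₁ = x₂ ∧ y₁ = (C • W).toAffine.negY x₂ y₂
    · obtain ⟨rfl, rfl⟩ := hxy
      rw [Affine.Point.add_of_Y_eq rfl rfl]
      exact (Affine.Point.add_of_Y_eq rfl (negY_variableChange ..).symm).symm
    · have hxy' : ¬ (variableChangeX C x₁ = variableChangeX C x₂ ∧ variableChangeY C x₁ y₁ =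
          W.toAffine.negY (variableChangeX C x₂) (variableChangeY C x₂ y₂)) := by
        rintro ⟨hX, hY⟩
        obtain rfl := variableChangeX_inj.1 hX
        exact hxy ⟨rfl, variableChangeY_inj.1 (hY.trans (negY_variableChange ..))⟩
      rw [Affine.Point.add_some hxy]
      refine .trans ?_ (Affine.Point.add_some hxy').symm
      simp only [slope_variableChange h₁.1 h₂.1 hxy, addX_variableChange, addY_variableChange]

variable (C W) in
lemma variableChangeHom_injective : Function.Injective (variableChangeHom C W) := by
  rintro (_ | ⟨x₁, y₁, h₁⟩) (_ | ⟨x₂, y₂, h₂⟩) h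
  · rfl
  · cases h
  · cases h
  · obtain ⟨hx, hy⟩ := Affine.Point.some.inj h
    obtain rfl := variableChangeX_inj.1 hx
    obtain rfl := variableChangeY_inj.1 hy
    rfl

end VariableChange

section Model

open WeierstrassCurve

lemma aleph0_le_rank_point_of_map_eq_of_j_eq {k F : Type*} [Field k] [Field F] [IsAlgClosed F]
    [DecidableEq F] {V : WeierstrassCurve k[X]} {f : k[X] →+* F} (hf : Function.Injective f)
    {E W : WeierstrassCurve F} [E.IsElliptic] [W.IsElliptic] (hE : V.map f = E) (hj : W.j = E.j) :
    Cardinal.aleph0 ≤ Module.rank ℤ W.toAffine.Point := by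
  classical
  let _ : Algebra k[X] F := f.toAlgebra
  let F₀ := AlgebraicClosure (FractionRing k[X])
  have : FaithfulSMul k[X] F := (faithfulSMul_iff_algebraMap_injective k[X] F).2 hf
  have : FaithfulSMul k[X] F₀ := .trans k[X] (FractionRing k[X]) F₀
  have : Algebra.IsAlgebraic k[X] F₀ :=
    (IsFractionRing.comap_isAlgebraic_iff (K := FractionRing k[X])).2 inferInstance
  have hΔ : V.Δ ≠ 0 := fun h => E.isUnit_Δ.ne_zero (by rw [← hE, map_Δ, h, map_zero])
  have hmodel : Cardinal.aleph0 ≤ Module.rank ℤ (V.map f).toAffine.Point :=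
    aleph0_le_rank_int_of_injective
      (Affine.Point.map (W' := V) (IsAlgClosed.lift : F₀ →ₐ[k[X]] F))
      (Affine.Point.map_injective _) (aleph0_le_rank_point_baseChange hΔ (FractionRing k[X]) F₀)
  obtain ⟨C, hC⟩ := exists_variableChange_of_j_eq W E hj
  refine aleph0_le_rank_int_of_injective (variableChangeHom C W)
    (variableChangeHom_injective C W) ?_
  rwa [hC, ← hE]

variable {k F : Type*} [Field k] [Field F] [IsAlgClosed F] [DecidableEq F] [Algebra k F]
  {W : WeierstrassCurve F} [W.IsElliptic]

lemma aleph0_le_rank_point_of_isAlgebraic_j (hj : IsAlgebraic k W.j) {t : F}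
    (ht : Transcendental k t) : Cardinal.aleph0 ≤ Module.rank ℤ W.toAffine.Point := by
  classical
  let k' := algebraicClosure k F
  have ht' : Transcendental k' t := fun h => ht (h.restrictScalars k)
  let j : k' := ⟨W.j, mem_algebraicClosure_iff.2 hj⟩
  have hmap : ((ofJ j).map C).map (aeval t).toRingHom = (ofJ j).map (algebraMap k' F) := by
    rw [WeierstrassCurve.map_map]
    congr 1
    exact RingHom.ext (aeval_C t)
  refine aleph0_le_rank_point_of_map_eq_of_j_eq (transcendental_iff_injective.1 ht') hmap ?_
  rw [map_j, ofJ_j]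
  rfl

lemma aleph0_le_rank_point_of_transcendental_j (hj : Transcendental k W.j) :
    Cardinal.aleph0 ≤ Module.rank ℤ W.toAffine.Point := by
  have hj0 : W.j ≠ 0 := fun h => hj (h ▸ isAlgebraic_zero)
  have hj1728 : W.j ≠ 1728 := fun h => hj (h ▸ isAlgebraic_natCast (R := k) (A := F) 1728)
  have hmap : (ofJNe0Or1728 (X : k[X])).map (aeval W.j).toRingHom = ofJ W.j := by
    rw [ofJ_ne_0_ne_1728 W.j hj0 hj1728]
    ext <;> simp [ofJNe0Or1728, map_ofNat]
  exact aleph0_le_rank_point_of_map_eq_of_j_eq (transcendental_iff_injective.1 hj) hmap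
    (ofJ_j W.j).symm

end Model

open scoped Classical in
theorem statement7_general {k F : Type*} [Field k] [Field F] [IsAlgClosed F] [Algebra k F]
    (hF : ∃ x : F, Transcendental k x) (W : WeierstrassCurve.Affine F) (hΔ : W.Δ ≠ 0) :
    Cardinal.aleph0 ≤ Module.rank ℚ (ℚ ⊗[ℤ] W.Point) := by
  rw [(TensorProduct.isBaseChange ℤ W.Point ℚ).rank_eq]
  have : W.IsElliptic := ⟨hΔ.isUnit⟩
  obtain ⟨t, ht⟩ := hF
  by_cases hj : IsAlgebraic k W.j
  · exact aleph0_le_rank_point_of_isAlgebraic_j hj ht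
  · exact aleph0_le_rank_point_of_transcendental_j hj

open scoped Classical in
theorem statement7 (p : ℕ) [Fact p.Prime] (F : Type*) [Field F] [IsAlgClosed F]
    [CharP F p] [Algebra (ZMod p) F] (hF : ∃ x : F, Transcendental (ZMod p) x)
    (W : WeierstrassCurve.Affine F) (hΔ : W.Δ ≠ 0) :
    Cardinal.aleph0 ≤ Module.rank ℚ (ℚ ⊗[ℤ] W.Point) :=
  statement7_general hF W hΔ
end

section
/- Let $p$ be a prime, let $F$ be a separably closed field of characteristic $p$ that is not algebraic over its prime field $\mathbb{F}_p$ (i.e. some element of $F$ is transcendental over $\mathbb{F}_p$), and let $W$ be an elliptic curve over $F$ (a Weierstrass curve over $F$ with nonzero discriminant). Then the rank of the group $W(F)$ of $F$-rational points of $W$ is infinite, i.e. the $\mathbb{Q}$-vector space $W(F) \otimes_{\mathbb{Z}} \mathbb{Q}$ is infinite-dimensional. -/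
open TensorProduct

/-!
Suppose the rank is finite. Then there is a finite set `S` of points such that every point has a
nonzero multiple in the span of `S`. Let `K` be a finitely generated subfield of `F` containing a
transcendental element, the coefficients of `W`, the coordinates of `S` and, if `p ≠ 2`, those of a
point `T` of order two. It suffices to find a non-torsion point `P = (x, y)` with `x ∈ K` and
`y ∉ K`: conjugation over `K` maps `P` to `-P`, so `n • P ∈ W(K)` would force `2n • P = 0`.

Since `K` has transcendence degree at least one over `𝔽_p`, it carries two independent discrete
valuations `v₁` and `v₂`. By weak approximation there is `x ∈ K` with a large pole of odd order at
`v₁`, and `v₂`-adically close to `x(T)` if `p ≠ 2`. As `F` is separably closed, `x` lifts to a point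
`P = (x, y)` of `W(F)`.
* `y ∉ K`, because `K`-rational points `v₁`-adically close to `0` have a pole of even order in `x`.
* Close to `0`, multiplication by `n` multiplies `1 / x` by `n²` up to smaller terms, so a torsion
  point close to `0` is killed by a power of `p`.
* If `p = 2`, no nonzero point close enough to `0` is killed by a power of two.
* If `p ≠ 2` and `P` is torsion, then `P` is `v₁`-adically and `P + T` is `v₂`-adically close to
  `0`, so both are killed by a power of `p`; hence so is `T`, which has order two.

All of this is done with `x`-coordinates in `K`, by means of the formulas for the sum and the
product of `x(P + Q)` and `x(P - Q)`, so that the valuations need not be extended to `F`.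
-/

namespace EllipticRank

open WeierstrassCurve WeierstrassCurve.Affine Filter Topology
open scoped WithZeroTopology

section Rank

lemma exists_finset_smul_mem_span_of_rank_lt_aleph0 {R M : Type*} [CommRing R] [IsDomain R]
    [AddCommGroup M] [Module R M] (h : Module.rank R M < Cardinal.aleph0) :
    ∃ S : Finset M, ∀ x : M, ∃ a : R, a ≠ 0 ∧ a • x ∈ Submodule.span R (S : Set M) := by
  obtain ⟨S, hcard, hS⟩ := exists_set_linearIndependent R M
  have hfin : S.Finite := Cardinal.lt_aleph0_iff_set_finite.mp (hcard ▸ h)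
  have hquot : Module.rank R (M ⧸ Submodule.span R S) = 0 := by
    have hadd := Submodule.rank_quotient_add_rank (Submodule.span R S)
    rw [rank_span_set hS, hcard] at hadd
    exact Cardinal.eq_of_add_eq_add_right (hadd.trans (zero_add _).symm) h
  refine ⟨hfin.toFinset, fun x ↦ ?_⟩
  obtain ⟨a, ha, hax⟩ := rank_eq_zero_iff.mp hquot (Submodule.Quotient.mk x)
  refine ⟨a, ha, ?_⟩
  rwa [hfin.coe_toFinset, ← Submodule.Quotient.mk_eq_zero, Submodule.Quotient.mk_smul]

end Rank

section AddSub

section CommRing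

variable {R : Type*} [CommRing R]

lemma eval_Ψ₂Sq (W : WeierstrassCurve R) (x : R) :
    W.Ψ₂Sq.eval x = 4 * x ^ 3 + W.b₂ * x ^ 2 + 2 * W.b₄ * x + W.b₆ := by
  simp [Ψ₂Sq]

lemma eval_Ψ₂Sq_eq_sq_sub_negY {W : WeierstrassCurve.Affine R} {x y : R} (h : W.Equation x y) :
    W.Ψ₂Sq.eval x = (y - W.negY x y) ^ 2 := by
  rw [equation_iff] at h
  simp only [eval_Ψ₂Sq, negY, b₂, b₄, b₆]
  linear_combination -4 * h

lemma addSubMap_eval (W : WeierstrassCurve R) (a b c : R) :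
    (fun i ↦ (addSubMap W i).eval ![a, b, c]) =
      ![a ^ 2 - W.b₄ * (a * c) - W.b₆ * (b * c) - W.b₈ * c ^ 2,
        2 * (b * a) + W.b₂ * (a * c) + W.b₄ * (b * c) + W.b₆ * c ^ 2, b ^ 2 - 4 * (a * c)] := by
  ext i
  fin_cases i <;> simp [addSubMap] <;> ring

end CommRing

variable {F : Type*} [Field F] [DecidableEq F] {W : WeierstrassCurve.Affine F}

lemma addX_add_addX_negY {x₁ x₂ y₁ y₂ : F} (h₁ : W.Equation x₁ y₁) (h₂ : W.Equation x₂ y₂)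
    (hx : x₁ ≠ x₂) :
    (x₁ - x₂) ^ 2 *
      (W.addX x₁ x₂ (W.slope x₁ x₂ y₁ y₂) + W.addX x₁ x₂ (W.slope x₁ x₂ y₁ (W.negY x₂ y₂))) =
    2 * (x₁ + x₂) * (x₁ * x₂) + W.b₂ * (x₁ * x₂) + W.b₄ * (x₁ + x₂) + W.b₆ := by
  have hd : x₁ - x₂ ≠ 0 := sub_ne_zero.mpr hx
  rw [equation_iff] at h₁ h₂
  rw [slope_of_X_ne hx, slope_of_X_ne hx]
  simp only [addX, negY, b₂, b₄, b₆]
  field_simp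
  linear_combination 2 * h₁ + 2 * h₂

lemma addX_mul_addX_negY {x₁ x₂ y₁ y₂ : F} (h₁ : W.Equation x₁ y₁) (h₂ : W.Equation x₂ y₂)
    (hx : x₁ ≠ x₂) :
    (x₁ - x₂) ^ 2 *
      (W.addX x₁ x₂ (W.slope x₁ x₂ y₁ y₂) * W.addX x₁ x₂ (W.slope x₁ x₂ y₁ (W.negY x₂ y₂))) =
    (x₁ * x₂) ^ 2 - W.b₄ * (x₁ * x₂) - W.b₆ * (x₁ + x₂) - W.b₈ := by
  have hd : x₁ - x₂ ≠ 0 := sub_ne_zero.mpr hx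
  rw [equation_iff] at h₁ h₂
  rw [slope_of_X_ne hx, slope_of_X_ne hx]
  simp only [addX, negY, b₄, b₆, b₈]
  field_simp
  grind

lemma sq_sub_negY_mul_addX_self {x y : F} (h : W.Equation x y) (hy : y ≠ W.negY x y) :
    (y - W.negY x y) ^ 2 * W.addX x x (W.slope x x y y) =
      x ^ 4 - W.b₄ * x ^ 2 - 2 * W.b₆ * x - W.b₈ := by
  have hd : y - W.negY x y ≠ 0 := sub_ne_zero.mpr hy
  rw [equation_iff] at h
  rw [slope_of_Y_ne rfl hy, addX]
  field_simp
  simp only [negY, b₄, b₆, b₈]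
  grind

lemma two_nsmul_some_eq_zero_iff {x y : F} (h : W.Nonsingular x y) :
    2 • Point.some x y h = 0 ↔ W.Ψ₂Sq.eval x = 0 := by
  rw [eval_Ψ₂Sq_eq_sq_sub_negY h.1, sq_eq_zero_iff, sub_eq_zero, two_nsmul,
    add_eq_zero_iff_eq_neg, Point.neg_some, Point.some.injEq]
  simp

lemma exists_addSubMap_eval_sym2x_self (P : W.Point) :
    ∃ c : F, (fun i ↦ (addSubMap W i).eval (P.sym2x P)) = c • (P + P).sym2x 0 := by
  rcases P with _ | ⟨x, y, h⟩
  · rw [← Point.zero_def, add_zero, Point.sym2x_zero_zero, addSubMap_eval]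
    exact ⟨1, by simp⟩
  have hψ := eval_Ψ₂Sq_eq_sq_sub_negY h.1
  rw [eval_Ψ₂Sq] at hψ
  rw [Point.sym2x_some_some, addSubMap_eval]
  by_cases hy : y = W.negY x y
  · rw [Point.add_self_of_Y_eq hy, Point.sym2x_zero_zero]
    rw [← hy, sub_self] at hψ
    refine ⟨x ^ 4 - W.b₄ * x ^ 2 - 2 * W.b₆ * x - W.b₈, ?_⟩
    rw [Matrix.smul_vec3]
    exact Matrix.vec3_eq (by rw [smul_eq_mul]; ring)
      (by rw [smul_eq_mul]; linear_combination hψ) (by rw [smul_eq_mul]; ring)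
  · rw [Point.add_self_of_Y_ne hy, Point.sym2x_some_zero]
    refine ⟨(y - W.negY x y) ^ 2, ?_⟩
    rw [Matrix.smul_vec3, smul_eq_mul, sq_sub_negY_mul_addX_self h.1 hy]
    exact Matrix.vec3_eq (by ring) (by rw [smul_eq_mul]; linear_combination hψ)
      (by rw [smul_eq_mul]; ring)

theorem exists_addSubMap_eval_sym2x (P Q : W.Point) :
    ∃ c : F, (fun i ↦ (addSubMap W i).eval (P.sym2x Q)) = c • (P + Q).sym2x (P - Q) := by
  by_cases hPQ : P = Q
  · subst hPQ
    simpa only [sub_self] using exists_addSubMap_eval_sym2x_self P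
  by_cases hPnQ : P = -Q
  · subst hPnQ
    obtain ⟨c, hc⟩ := exists_addSubMap_eval_sym2x_self Q
    refine ⟨c, ?_⟩
    rw [Point.sym2x_neg_left, hc, neg_add_cancel, Point.sym2x_comm, ← Point.sym2x_neg_right]
    congr 2
    abel
  rcases P with _ | ⟨x₁, y₁, h₁⟩
  · rcases Q with _ | ⟨x₂, y₂, h₂⟩
    · exact absurd rfl hPQ
    · refine ⟨1, ?_⟩
      rw [← Point.zero_def, Point.sym2x_zero_some, addSubMap_eval, zero_add, zero_sub,
        Point.sym2x_neg_right, Point.sym2x_some_some]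
      simp [sq, two_mul]
  rcases Q with _ | ⟨x₂, y₂, h₂⟩
  · refine ⟨1, ?_⟩
    rw [← Point.zero_def, Point.sym2x_some_zero, addSubMap_eval, add_zero, sub_zero,
      Point.sym2x_some_some]
    simp [sq, two_mul]
  have hx : x₁ ≠ x₂ := fun h ↦ (Point.X_eq_iff.mp h).elim hPQ hPnQ
  refine ⟨(x₁ - x₂) ^ 2, ?_⟩
  rw [sub_eq_add_neg (Point.some ..), Point.neg_some, Point.add_of_X_ne hx,
    Point.add_of_X_ne hx, Point.sym2x_some_some, Point.sym2x_some_some, addSubMap_eval,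
    Matrix.smul_vec3, smul_eq_mul, smul_eq_mul, addX_mul_addX_negY h₁.1 h₂.1 hx,
    addX_add_addX_negY h₁.1 h₂.1 hx]
  exact Matrix.vec3_eq (by ring) (by ring) (by rw [smul_eq_mul]; ring)

end AddSub

section InvX

/-- In terms of `s = 1 / x(P)` and `t = 1 / x(Q)`, the numerator of `1 / x(P + Q) + 1 / x(P - Q)`:
the second component of `addSubMap` at `(1 : s + t : s * t)`. -/
def invXNum {R : Type*} [CommRing R] (W : WeierstrassCurve R) (s t : R) : R :=
  2 * (s + t) + W.b₂ * (s * t) + W.b₄ * ((s + t) * (s * t)) + W.b₆ * (s * t) ^ 2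

/-- In terms of `s = 1 / x(P)` and `t = 1 / x(Q)`, the denominator of `1 / x(P + Q) + 1 / x(P - Q)`:
the first component of `addSubMap` at `(1 : s + t : s * t)`. -/
def invXDen {R : Type*} [CommRing R] (W : WeierstrassCurve R) (s t : R) : R :=
  1 - W.b₄ * (s * t) - W.b₆ * ((s + t) * (s * t)) - W.b₈ * (s * t) ^ 2

variable {K F : Type*} [Field K] [Field F] [Algebra K F] {W : WeierstrassCurve K}

/-- `s ∈ K` is the inverse of the `x`-coordinate of the `F`-point `P`, with the convention that the
point at infinity has inverse `x`-coordinate `0`; points with `x = 0` have none. -/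
def HasInvX (P : (W⁄F).Point) (s : K) : Prop :=
  P.xRep 0 * algebraMap K F s = P.xRep 1

lemma hasInvX_zero_iff {s : K} : HasInvX (0 : (W⁄F).Point) s ↔ s = 0 := by
  simp [HasInvX]

lemma hasInvX_some_iff {x y : F} {s : K} (h : (W⁄F).Nonsingular x y) :
    HasInvX (Point.some x y h) s ↔ x * algebraMap K F s = 1 := by
  simp [HasInvX]

lemma HasInvX.xRep_zero_ne_zero {P : (W⁄F).Point} {s : K} (hP : HasInvX P s) : P.xRep 0 ≠ 0 := by
  intro h0
  refine Point.xRep_ne_zero P (funext fun i ↦ ?_)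
  fin_cases i
  · exact h0
  · simpa [HasInvX, h0] using hP.symm

lemma HasInvX.eq_zero_iff {P : (W⁄F).Point} {s : K} (hP : HasInvX P s) : P = 0 ↔ s = 0 := by
  rcases P with _ | ⟨x, y, h⟩
  · simpa [← Point.zero_def] using hasInvX_zero_iff.mp hP
  · have hs : s ≠ 0 := by
      rintro rfl
      simp [hasInvX_some_iff] at hP
    simp [hs, Point.some_ne_zero]

lemma HasInvX.neg {P : (W⁄F).Point} {s : K} (hP : HasInvX P s) : HasInvX (-P) s := by
  rwa [HasInvX, Point.xRep_neg]

variable [DecidableEq F]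

theorem HasInvX.add {P Q : (W⁄F).Point} {s t u : K} (hP : HasInvX P s) (hQ : HasInvX Q t)
    (hPQ : HasInvX (P - Q) u) (hD : invXDen W s t ≠ 0) :
    HasInvX (P + Q) (invXNum W s t / invXDen W s t - u) := by
  obtain ⟨c, hc⟩ := exists_addSubMap_eval_sym2x P Q
  have hD' : algebraMap K F (invXDen W s t) ≠ 0 := (map_ne_zero _).mpr hD
  have hPQ0 := mul_ne_zero hP.xRep_zero_ne_zero hQ.xRep_zero_ne_zero
  simp only [HasInvX, Point.sym2x] at hP hQ hPQ hc ⊢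
  rw [← hP, ← hQ, ← hPQ, addSubMap_eval] at hc
  have hden := congrFun hc 0
  have hnum := congrFun hc 1
  simp only [WeierstrassCurve.baseChange, map_b₂, map_b₄, map_b₆, map_b₈,
    Matrix.cons_val_zero, Matrix.cons_val_one, Pi.smul_apply, smul_eq_mul] at hden hnum
  rw [map_sub, map_div₀]
  field_simp
  apply mul_left_cancel₀ (pow_ne_zero 2 hPQ0)
  simp only [invXNum, invXDen, map_sub, map_add, map_mul, map_pow, map_one, map_ofNat]
  linear_combination (P + Q).xRep 0 * hnum -
    ((P + Q).xRep 0 * algebraMap K F u + (P + Q).xRep 1) * hden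

end InvX

section Valuation

variable {K : Type*} [Field K] {Γ₀ : Type*} [LinearOrderedCommGroupWithZero Γ₀]
  {v : Valuation K Γ₀}

lemma map_mul_lt {a b : K} {γ : Γ₀} (ha : v a < 1) (hb : v b ≤ γ) (hγ : γ ≠ 0) :
    v (a * b) < γ := by
  rw [map_mul]
  exact (mul_le_mul_right hb _).trans_lt (mul_lt_of_lt_one_left (zero_lt_iff.mpr hγ) ha)

lemma map_mul_le {a b : K} {γ : Γ₀} (ha : v a ≤ 1) (hb : v b ≤ γ) : v (a * b) ≤ γ := by
  rw [map_mul]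
  exact mul_le_of_le_one_of_le ha hb

lemma map_natCast_le_one (n : ℕ) : v (n : K) ≤ 1 :=
  natCast_mem v.integer n

lemma map_natCast_eq_one_of_not_dvd (p : ℕ) [Fact p.Prime] [CharP K p] {n : ℕ} (hn : ¬p ∣ n) :
    v (n : K) = 1 := by
  have hp : p.Prime := Fact.out
  obtain ⟨m, -, hm⟩ := Nat.exists_mul_mod_eq_one_of_coprime
    (hp.coprime_iff_not_dvd.mpr hn).symm hp.one_lt
  have hnm : (n : K) * m = 1 := by
    exact_mod_cast (CharP.natCast_eq_natCast K p).mpr (hm.trans (Nat.mod_eq_of_lt hp.one_lt).symm)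
  refine le_antisymm (map_natCast_le_one n) ?_
  calc 1 = v (m * n : K) := by rw [mul_comm, hnm, map_one]
    _ ≤ v (n : K) := map_mul_le (map_natCast_le_one m) le_rfl

/-- `s` is small enough, compared with the invariants `bᵢ` of `W`, for a point with inverse
`x`-coordinate `s` to lie in the part of the formal group of `W` at `v` where `n • P` has inverse
`x`-coordinate `n² s` up to higher order terms. -/
structure IsSmall (v : Valuation K Γ₀) (W : WeierstrassCurve K) (s : K) : Prop where
  lt_one : v s < 1
  b₂_mul_lt_one : v (W.b₂ * s) < 1
  b₄_mul_lt_one : v (W.b₄ * s) < 1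
  b₆_mul_lt_one : v (W.b₆ * s) < 1
  b₈_mul_lt_one : v (W.b₈ * s) < 1

variable {W : WeierstrassCurve K} {s t : K}

lemma IsSmall.mono (hs : IsSmall v W s) (hts : v t ≤ v s) : IsSmall v W t := by
  have mul_mono (a : K) (ha : v (a * s) < 1) : v (a * t) < 1 := by
    rw [map_mul] at ha ⊢
    exact (mul_le_mul_right hts _).trans_lt ha
  exact ⟨hts.trans_lt hs.1, mul_mono _ hs.2, mul_mono _ hs.3, mul_mono _ hs.4, mul_mono _ hs.5⟩

lemma IsSmall.map_invXDen_sub_one_lt (hs : IsSmall v W s) (hts : v t ≤ v s) :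
    v (invXDen W s t - 1) < 1 := by
  have hs1 := hs.lt_one.le
  have ht1 := hts.trans hs1
  have hst1 : v (s + t) ≤ 1 := v.map_add_le hs1 ht1
  have expand : invXDen W s t - 1 =
      -(W.b₄ * s * t + W.b₆ * s * ((s + t) * t) + W.b₈ * s * (s * t * t)) := by
    rw [invXDen]; ring
  rw [expand, Valuation.map_neg]
  exact v.map_add_lt (v.map_add_lt (map_mul_lt hs.b₄_mul_lt_one ht1 one_ne_zero)
    (map_mul_lt hs.b₆_mul_lt_one (map_mul_le hst1 ht1) one_ne_zero))
    (map_mul_lt hs.b₈_mul_lt_one (map_mul_le (map_mul_le hs1 ht1) ht1) one_ne_zero)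

lemma IsSmall.map_invXDen (hs : IsSmall v W s) (hts : v t ≤ v s) : v (invXDen W s t) = 1 := by
  rw [← add_sub_cancel 1 (invXDen W s t), v.map_one_add_of_lt (hs.map_invXDen_sub_one_lt hts)]

lemma IsSmall.invXDen_ne_zero (hs : IsSmall v W s) (hts : v t ≤ v s) : invXDen W s t ≠ 0 :=
  (v.ne_zero_iff).mp (by rw [hs.map_invXDen hts]; exact one_ne_zero)

lemma IsSmall.map_invXNum_div_invXDen_sub_lt (hs : IsSmall v W s) (hs0 : s ≠ 0)
    (hts : v t ≤ v s) : v (invXNum W s t / invXDen W s t - 2 * (s + t)) < v s := by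
  have hD0 := hs.invXDen_ne_zero hts
  have hs1 := hs.lt_one.le
  have hst : v (s + t) ≤ v s := v.map_add_le le_rfl hts
  have hv : v s ≠ 0 := v.ne_zero_iff.mpr hs0
  have expand : invXNum W s t / invXDen W s t - 2 * (s + t) =
      (W.b₂ * s * t + W.b₄ * s * ((s + t) * t) + W.b₆ * s * (s * t * t) +
        -(invXDen W s t - 1) * (2 * (s + t))) / invXDen W s t := by
    field_simp
    rw [invXNum]; ring
  rw [expand, map_div₀, hs.map_invXDen hts, div_one]
  refine v.map_add_lt (v.map_add_lt (v.map_add_lt (map_mul_lt hs.b₂_mul_lt_one hts hv)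
    (map_mul_lt hs.b₄_mul_lt_one (map_mul_le (hst.trans hs1) hts) hv))
    (map_mul_lt hs.b₆_mul_lt_one (map_mul_le (map_mul_le hs1 (hts.trans hs1)) hts) hv)) ?_
  refine map_mul_lt ?_ (map_mul_le (mod_cast map_natCast_le_one 2) hst) hv
  rw [Valuation.map_neg]
  exact hs.map_invXDen_sub_one_lt hts

variable {F : Type*} [Field F] [DecidableEq F] [Algebra K F]

lemma map_le_of_map_sub_sq_mul_lt {n : ℕ} {u : K} (h : v (u - (n : K) ^ 2 * s) < v s) :
    v u ≤ v s := by
  rw [← sub_add_cancel u ((n : K) ^ 2 * s)]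
  refine v.map_add_le h.le (map_mul_le ?_ le_rfl)
  exact_mod_cast map_natCast_le_one (n ^ 2)

theorem HasInvX.nsmul {P : (W⁄F).Point} (hP : HasInvX P s) (hs : IsSmall v W s) (hs0 : s ≠ 0)
    (n : ℕ) : ∃ u : K, HasInvX (n • P) u ∧ v (u - (n : K) ^ 2 * s) < v s := by
  have hv : 0 < v s := zero_lt_iff.mpr (v.ne_zero_iff.mpr hs0)
  induction n using Nat.twoStepInduction with
  | zero => exact ⟨0, by simpa using hasInvX_zero_iff.mpr rfl, by simpa using hv⟩
  | one => exact ⟨s, by simpa using hP, by simpa using hv⟩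
  | more n ih₀ ih₁ =>
    obtain ⟨u₀, hu₀, hu₀s⟩ := ih₀
    obtain ⟨u₁, hu₁, hu₁s⟩ := ih₁
    have hu₁v := map_le_of_map_sub_sq_mul_lt hu₁s
    have hsub : HasInvX (P - (n + 1) • P) u₀ := by
      rw [succ_nsmul, sub_add_cancel_right]
      exact hu₀.neg
    refine ⟨invXNum W s u₁ / invXDen W s u₁ - u₀, ?_, ?_⟩
    · rw [succ_nsmul']
      exact hP.add hu₁ hsub (hs.invXDen_ne_zero hu₁v)
    · have expand : invXNum W s u₁ / invXDen W s u₁ - u₀ - ((n + 2 : ℕ) : K) ^ 2 * s =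
          (invXNum W s u₁ / invXDen W s u₁ - 2 * (s + u₁)) - (u₀ - (n : K) ^ 2 * s) +
            2 * (u₁ - ((n + 1 : ℕ) : K) ^ 2 * s) := by
        push_cast; ring
      rw [expand]
      refine v.map_add_lt (v.map_sub_lt (hs.map_invXNum_div_invXDen_sub_lt hs0 hu₁v) hu₀s) ?_
      exact (map_mul_le (mod_cast map_natCast_le_one 2) le_rfl).trans_lt hu₁s

theorem IsSmall.exists_prime_pow_nsmul_eq_zero (p : ℕ) [Fact p.Prime] [CharP K p]
    {P : (W⁄F).Point} (hs : IsSmall v W s) (hP : HasInvX P s) (htors : IsOfFinAddOrder P) :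
    ∃ k : ℕ, p ^ k • P = 0 := by
  obtain ⟨N, hN, hNP⟩ := isOfFinAddOrder_iff_nsmul_eq_zero.mp htors
  obtain ⟨k, m, hm, rfl⟩ := Nat.exists_eq_pow_mul_and_not_dvd hN.ne' p (Fact.out : p.Prime).ne_one
  refine ⟨k, by_contra fun hne ↦ ?_⟩
  have hs0 : s ≠ 0 := fun h ↦ hne (by rw [hP.eq_zero_iff.mpr h, smul_zero])
  obtain ⟨u, hu, hus⟩ := hP.nsmul hs hs0 (p ^ k)
  have hu0 : u ≠ 0 := fun h ↦ hne (hu.eq_zero_iff.mpr h)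
  obtain ⟨w, hw, hwu⟩ := hu.nsmul (hs.mono (map_le_of_map_sub_sq_mul_lt hus)) hu0 m
  rw [smul_smul, mul_comm, hNP, hasInvX_zero_iff] at hw
  rw [hw, zero_sub, Valuation.map_neg, map_mul, map_pow,
    map_natCast_eq_one_of_not_dvd p hm, one_pow, one_mul] at hwu
  exact lt_irrefl _ hwu

end Valuation

section NearZero

variable {K : Type*} [Field K] {Γ₀ : Type*} [LinearOrderedCommGroupWithZero Γ₀]
  {v : Valuation K Γ₀}

-- `comap v (𝓝 0)` is the filter of `v`-adic neighbourhoods of `0` in `K`.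
lemma eventually_comap_nhds_zero_iff {p : K → Prop} :
    (∀ᶠ s in comap v (𝓝 0), p s) ↔ ∃ γ : Γ₀, γ ≠ 0 ∧ ∀ s, v s < γ → p s := by
  simpa using! (WithZeroTopology.hasBasis_nhds_zero.comap v).eventually_iff

lemma eventually_forall_map_le {p : K → Prop} (hp : ∀ᶠ s in comap v (𝓝 0), p s) :
    ∀ᶠ s in comap v (𝓝 0), ∀ t, v t ≤ v s → p t := by
  obtain ⟨γ, hγ, hp⟩ := eventually_comap_nhds_zero_iff.mp hp
  exact eventually_comap_nhds_zero_iff.mpr ⟨γ, hγ, fun s hs t hts ↦ hp t (hts.trans_lt hs)⟩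

lemma exists_map_eval_le (f : Polynomial K) :
    ∃ γ : Γ₀, γ ≠ 0 ∧ ∀ s, v s ≤ 1 → v (f.eval s) ≤ γ := by
  induction f using Polynomial.induction_on' with
  | add f g hf hg =>
    obtain ⟨γ, hγ, hf⟩ := hf
    obtain ⟨δ, -, hg⟩ := hg
    refine ⟨max γ δ, (lt_max_of_lt_left (zero_lt_iff.mpr hγ)).ne', fun s hs ↦ ?_⟩
    rw [Polynomial.eval_add]
    exact v.map_add_le (le_max_of_le_left (hf s hs)) (le_max_of_le_right (hg s hs))
  | monomial n a =>
    refine ⟨max 1 (v a), (lt_max_of_lt_left zero_lt_one).ne', fun s hs ↦ ?_⟩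
    rw [Polynomial.eval_monomial, mul_comm]
    exact map_mul_le (by rw [map_pow]; exact pow_le_one' hs n) (le_max_right ..)

lemma eventually_map_eval_lt (f : Polynomial K) (hf : f.eval 0 = 0) {γ : Γ₀} (hγ : γ ≠ 0) :
    ∀ᶠ s in comap v (𝓝 0), v (f.eval s) < γ := by
  obtain ⟨g, rfl⟩ := Polynomial.X_dvd_iff.mpr ((Polynomial.coeff_zero_eq_eval_zero f).trans hf)
  obtain ⟨δ, hδ, hg⟩ := exists_map_eval_le (v := v) g
  refine eventually_comap_nhds_zero_iff.mpr ⟨min 1 (γ / δ), ?_, fun s hs ↦ ?_⟩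
  · exact (lt_min zero_lt_one (zero_lt_iff.mpr (div_ne_zero hγ hδ))).ne'
  · obtain ⟨hs1, hsγ⟩ := lt_min_iff.mp hs
    rw [Polynomial.eval_mul, Polynomial.eval_X, map_mul]
    exact (mul_le_mul_right (hg s hs1.le) _).trans_lt ((lt_div_iff₀ (zero_lt_iff.mpr hδ)).mp hsγ)

lemma eventually_map_mul_lt (a : K) {γ : Γ₀} (hγ : γ ≠ 0) :
    ∀ᶠ s in comap v (𝓝 0), v (a * s) < γ := by
  simpa using eventually_map_eval_lt (v := v) (.C a * .X) (by simp) hγ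

lemma eventually_eval_inv_ne_zero {f : Polynomial K} (hf : f ≠ 0) :
    ∀ᶠ s in comap v (𝓝 0), s ≠ 0 → f.eval s⁻¹ ≠ 0 := by
  classical
  have away_from_root (r : K) : ∀ᶠ s in comap v (𝓝 0), s ≠ 0 → s⁻¹ ≠ r := by
    filter_upwards [eventually_map_mul_lt (v := v) r one_ne_zero] with s hs hs0 hr
    simp [← hr, hs0] at hs
  filter_upwards [(eventually_all_finset f.roots.toFinset).mpr fun r _ ↦ away_from_root r]
    with s hs hs0 hroot
  exact hs s⁻¹ (by simpa [hf] using hroot) hs0 rfl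

lemma eventually_isSmall (W : WeierstrassCurve K) : ∀ᶠ s in comap v (𝓝 0), IsSmall v W s := by
  filter_upwards [eventually_map_mul_lt (v := v) 1 one_ne_zero,
    eventually_map_mul_lt W.b₂ one_ne_zero, eventually_map_mul_lt W.b₄ one_ne_zero,
    eventually_map_mul_lt W.b₆ one_ne_zero, eventually_map_mul_lt W.b₈ one_ne_zero]
    with s h h₂ h₄ h₆ h₈
  exact ⟨by rwa [one_mul] at h, h₂, h₄, h₆, h₈⟩

variable {W : WeierstrassCurve K}

lemma Ψ₂Sq_ne_zero_of_Δ_ne_zero (hΔ : W.Δ ≠ 0) : W.Ψ₂Sq ≠ 0 := by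
  intro h
  have hb₆ : W.b₆ = 0 := by simpa [Ψ₂Sq] using congrArg (Polynomial.coeff · 0) h
  have hb₂ : W.b₂ = 0 := by
    simpa [Ψ₂Sq, Polynomial.coeff_X] using congrArg (Polynomial.coeff · 2) h
  have h4 : (4 : K) = 0 := by
    simpa [Ψ₂Sq, Polynomial.coeff_X] using congrArg (Polynomial.coeff · 3) h
  apply hΔ
  rw [Δ, hb₂, hb₆]
  linear_combination -2 * W.b₄ ^ 3 * h4

variable {F : Type*} [Field F] [Algebra K F]

lemma eval_Ψ₂Sq_algebraMap (x : K) :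
    (W⁄F).Ψ₂Sq.eval (algebraMap K F x) = algebraMap K F (W.Ψ₂Sq.eval x) := by
  rw [eval_Ψ₂Sq, eval_Ψ₂Sq]
  simp only [WeierstrassCurve.baseChange, map_b₂, map_b₄, map_b₆, map_add, map_mul, map_pow,
    map_ofNat]

lemma HasInvX.two_nsmul_ne_zero [DecidableEq F] {P : (W⁄F).Point} {s : K} (hP : HasInvX P s)
    (hs0 : s ≠ 0) (hψ : W.Ψ₂Sq.eval s⁻¹ ≠ 0) : 2 • P ≠ 0 := by
  rcases P with _ | ⟨x, y, h⟩
  · exact absurd (hasInvX_zero_iff.mp hP) hs0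
  · obtain rfl : x = algebraMap K F s⁻¹ := by
      rw [map_inv₀]
      exact eq_inv_of_mul_eq_one_left ((hasInvX_some_iff h).mp hP)
    rwa [Ne, two_nsmul_some_eq_zero_iff, eval_Ψ₂Sq_algebraMap, map_eq_zero]

theorem eventually_two_pow_nsmul_ne_zero [DecidableEq F] (hΔ : W.Δ ≠ 0) :
    ∀ᶠ s in comap v (𝓝 0), ∀ P : (W⁄F).Point, HasInvX P s → P ≠ 0 → ∀ k : ℕ, 2 ^ k • P ≠ 0 := by
  filter_upwards [eventually_isSmall W,
    eventually_forall_map_le (v := v) (eventually_eval_inv_ne_zero (Ψ₂Sq_ne_zero_of_Δ_ne_zero hΔ))]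
    with s hs hψ P hP hP0 k
  induction k generalizing P s with
  | zero => simpa using hP0
  | succ k ih =>
    have hs0 : s ≠ 0 := hP.eq_zero_iff.not.mp hP0
    obtain ⟨u, hu, hus⟩ := hP.nsmul hs hs0 2
    have huv := map_le_of_map_sub_sq_mul_lt hus
    rw [pow_succ, mul_smul]
    exact ih u (hs.mono huv) (fun t htu ↦ hψ t (htu.trans huv)) (2 • P) hu
      (hP.two_nsmul_ne_zero hs0 (hψ s le_rfl hs0))

theorem eventually_isSquare_map (W : WeierstrassCurve.Affine K) :
    ∀ᶠ s in comap v (𝓝 0), ∀ y : K, W.Equation s⁻¹ y → IsSquare (v s) := by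
  filter_upwards [
    eventually_map_eval_lt (v := v) (.C W.a₂ * .X + .C W.a₄ * .X ^ 2 + .C W.a₆ * .X ^ 3) (by simp)
      one_ne_zero,
    eventually_map_eval_lt (v := v) (.X * (.C W.a₁ + .C W.a₃ * .X) ^ 2) (by simp) one_ne_zero]
    with s hcubic hlinear y hy
  simp only [Polynomial.eval_add, Polynomial.eval_mul, Polynomial.eval_pow, Polynomial.eval_C,
    Polynomial.eval_X] at hcubic hlinear
  rcases eq_or_ne s 0 with rfl | hs0
  · exact ⟨0, by simp⟩
  set e := W.a₁ + W.a₃ * s with he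
  have heq : s * (y * s) * (y * s + e) = 1 + (W.a₂ * s + W.a₄ * s ^ 2 + W.a₆ * s ^ 3) := by
    rw [equation_iff] at hy
    field_simp at hy
    linear_combination hy
  -- The right-hand side is a unit, which forces `y * s` to dominate `e`.
  have hval : v s * v (y * s) * v (y * s + e) = 1 := by
    rw [← map_mul, ← map_mul, heq, v.map_one_add_of_lt hcubic]
  have hlt : v e < v (y * s) := by
    by_contra! hle
    refine hlinear.not_ge (hval.symm.trans_le ?_)
    rw [map_mul v s (e ^ 2), map_pow, mul_assoc, sq]
    exact mul_le_mul_right (mul_le_mul' hle (v.map_add_le hle le_rfl)) _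
  rw [v.map_add_eq_of_lt_left hlt, mul_assoc] at hval
  exact ⟨(v (y * s))⁻¹, by rw [← mul_inv]; exact eq_inv_of_mul_eq_one_left hval⟩

end NearZero

section NearTwoTorsion

variable {K : Type*} [Field K] {Γ₀ : Type*} [LinearOrderedCommGroupWithZero Γ₀]
  {v : Valuation K Γ₀} {W : WeierstrassCurve K}

lemma eventually_map_eval_eq {f : Polynomial K} (hf : f.eval 0 ≠ 0) :
    ∀ᶠ s in comap v (𝓝 0), v (f.eval s) = v (f.eval 0) := by
  filter_upwards [eventually_map_eval_lt (f - .C (f.eval 0)) (by simp) (v.ne_zero_iff.mpr hf)]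
    with s hs
  simp only [Polynomial.eval_sub, Polynomial.eval_C] at hs
  exact v.map_eq_of_sub_lt hs

variable (W) in
/-- The polynomial whose value at `x₁` is `(x₁ - x₂)² x(P + Q) x(P - Q)`, for points `P` and `Q`
with `x`-coordinates `x₁` and `x₂`. -/
noncomputable def addSubProd (x₂ : K) : Polynomial K :=
  .C (x₂ ^ 2) * .X ^ 2 - .C W.b₄ * (.X * .C x₂) - .C W.b₆ * (.X + .C x₂) - .C W.b₈

lemma eval_addSubProd (x₁ x₂ : K) : (addSubProd W x₂).eval x₁ =
    (x₁ * x₂) ^ 2 - W.b₄ * (x₁ * x₂) - W.b₆ * (x₁ + x₂) - W.b₈ := by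
  simp only [addSubProd, Polynomial.eval_sub, Polynomial.eval_mul, Polynomial.eval_add,
    Polynomial.eval_pow, Polynomial.eval_C, Polynomial.eval_X]
  ring

lemma eval_addSubProd_self_ne_zero [W.IsElliptic] {x : K} (hx : W.Ψ₂Sq.eval x = 0) :
    (addSubProd W x).eval x ≠ 0 := by
  intro h0
  refine addSubMap_ne_zero W (x := ![x * x, x + x, 1]) (fun h ↦ ?_) ?_
  · simpa using congrFun h 2
  · rw [eval_addSubProd] at h0
    rw [eval_Ψ₂Sq] at hx
    rw [addSubMap_eval]
    ext i
    fin_cases i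
    · simpa using h0
    · change 2 * ((x + x) * (x * x)) + W.b₂ * (x * x * 1) + W.b₄ * ((x + x) * 1) + W.b₆ * 1 ^ 2 = 0
      linear_combination hx
    · change (x + x) ^ 2 - 4 * (x * x * 1) = 0
      ring

lemma exists_eq_mul_xRep_of_two_nsmul_eq_zero [DecidableEq K] {W : WeierstrassCurve.Affine K}
    {x₁ x₂ y₁ y₂ : K} (h₁ : W.Nonsingular x₁ y₁) {h₂ : W.Nonsingular x₂ y₂}
    (hT : 2 • Point.some _ _ h₂ = 0) :
    ∃ c : K, (addSubProd W x₂).eval x₁ = c * (Point.some _ _ h₁ + Point.some _ _ h₂).xRep 0 ^ 2 ∧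
      2 * ((x₁ + x₂) * (x₁ * x₂)) + W.b₂ * (x₁ * x₂) + W.b₄ * (x₁ + x₂) + W.b₆ =
        2 * c * ((Point.some _ _ h₁ + Point.some _ _ h₂).xRep 0 *
          (Point.some _ _ h₁ + Point.some _ _ h₂).xRep 1) ∧
      (x₁ - x₂) ^ 2 = c * (Point.some _ _ h₁ + Point.some _ _ h₂).xRep 1 ^ 2 := by
  have hsub : Point.some _ _ h₁ - Point.some _ _ h₂ = Point.some _ _ h₁ + Point.some _ _ h₂ := by
    rw [sub_eq_add_neg, ← eq_neg_of_add_eq_zero_left ((two_nsmul _).symm.trans hT)]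
  obtain ⟨c, hc⟩ := exists_addSubMap_eval_sym2x (Point.some _ _ h₁) (Point.some _ _ h₂)
  rw [hsub, Point.sym2x_some_some, addSubMap_eval] at hc
  have hprod := congrFun hc 0
  have hsum := congrFun hc 1
  have hdiff := congrFun hc 2
  simp only [Point.sym2x, Matrix.cons_val, Pi.smul_apply, smul_eq_mul] at hprod hsum hdiff
  rw [eval_addSubProd]
  exact ⟨c, by linear_combination hprod, by linear_combination hsum, by linear_combination hdiff⟩

variable {F : Type*} [Field F] [DecidableEq F] [Algebra K F]

lemma exists_hasInvX_add_of_two_nsmul_eq_zero (h2 : (2 : K) ≠ 0) {x₁ x₂ : K} {y₁ y₂ : F}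
    (h₁ : (W⁄F).Nonsingular (algebraMap K F x₁) y₁) {h₂ : (W⁄F).Nonsingular (algebraMap K F x₂) y₂}
    (hT : 2 • Point.some _ _ h₂ = 0) (hD : (addSubProd W x₂).eval x₁ ≠ 0) :
    ∃ s : K, HasInvX (Point.some _ _ h₁ + Point.some _ _ h₂) s ∧
      s ^ 2 * (addSubProd W x₂).eval x₁ = (x₁ - x₂) ^ 2 := by
  -- As `2 • T = 0`, `P + T = P - T`, so half of `x(P + T) + x(P - T)` is `x(P + T)`, up to scaling.
  obtain ⟨c, hprod, hsum, hdiff⟩ := exists_eq_mul_xRep_of_two_nsmul_eq_zero h₁ hT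
  set X := (Point.some _ _ h₁ + Point.some _ _ h₂).xRep 0
  set Z := (Point.some _ _ h₁ + Point.some _ _ h₂).xRep 1
  rw [eval_addSubProd] at hprod
  simp only [WeierstrassCurve.baseChange, map_b₂, map_b₄, map_b₆, map_b₈] at hprod hsum
  set N : K := 2 * ((x₁ + x₂) * (x₁ * x₂)) + W.b₂ * (x₁ * x₂) + W.b₄ * (x₁ + x₂) + W.b₆
  rw [eval_addSubProd] at hD ⊢
  set D : K := (x₁ * x₂) ^ 2 - W.b₄ * (x₁ * x₂) - W.b₆ * (x₁ + x₂) - W.b₈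
  have hDF : algebraMap K F D = c * X ^ 2 := by simpa [D] using hprod
  have hNF : algebraMap K F N = 2 * c * (X * Z) := by simpa [N, map_ofNat] using hsum
  have hdF : algebraMap K F ((x₁ - x₂) ^ 2) = c * Z ^ 2 := by simpa using hdiff
  obtain ⟨hc, hX⟩ := mul_ne_zero_iff.mp (hDF ▸ (map_ne_zero (algebraMap K F)).mpr hD)
  have hX0 : X ≠ 0 := ne_zero_pow two_ne_zero hX
  have h2F : (2 : F) ≠ 0 := map_ofNat (algebraMap K F) 2 ▸ (map_ne_zero (algebraMap K F)).mpr h2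
  refine ⟨N / (2 * D), ?_, (algebraMap K F).injective ?_⟩
  · rw [HasInvX, map_div₀, map_mul, map_ofNat, hNF, hDF]
    field_simp
    rfl
  · rw [map_mul, map_pow, map_div₀, map_mul, map_ofNat, hdF, hNF, hDF]
    field_simp

theorem eventually_exists_isSmall_of_two_nsmul_eq_zero [W.IsElliptic] (h2 : (2 : K) ≠ 0) {x₂ : K}
    {y₂ : F} {h₂ : (W⁄F).Nonsingular (algebraMap K F x₂) y₂} (hT : 2 • Point.some _ _ h₂ = 0) :
    ∀ᶠ d in comap v (𝓝 0), ∀ (y : F) (h : (W⁄F).Nonsingular (algebraMap K F (x₂ + d)) y),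
      ∃ s : K, HasInvX (Point.some _ _ h + Point.some _ _ h₂) s ∧ IsSmall v W s := by
  have hψ : W.Ψ₂Sq.eval x₂ = 0 := by
    rwa [two_nsmul_some_eq_zero_iff, eval_Ψ₂Sq_algebraMap, map_eq_zero] at hT
  have hc := eval_addSubProd_self_ne_zero hψ
  obtain ⟨γ, hγ, hsmall⟩ := eventually_comap_nhds_zero_iff.mp (eventually_isSmall (v := v) W)
  filter_upwards [eventually_map_eval_eq (v := v) (f := (addSubProd W x₂).comp (.C x₂ + .X))
      (by simpa using hc),
    eventually_map_eval_lt (v := v) (.X ^ 2) (by simp)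
      (mul_ne_zero (pow_ne_zero 2 hγ) (v.ne_zero_iff.mpr hc))] with d hDd hd y h
  simp only [Polynomial.eval_comp, Polynomial.eval_add, Polynomial.eval_C, Polynomial.eval_X,
    Polynomial.eval_pow, add_zero] at hDd hd
  obtain ⟨s, hs, hsD⟩ := exists_hasInvX_add_of_two_nsmul_eq_zero h2 h hT
    (v.ne_zero_iff.mp (hDd ▸ v.ne_zero_iff.mpr hc))
  refine ⟨s, hs, hsmall s (lt_of_pow_lt_pow_left' 2 ?_)⟩
  rw [add_sub_cancel_left] at hsD
  rw [← hsD, map_mul, hDd, map_pow] at hd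
  exact lt_of_mul_lt_mul_right' hd

end NearTwoTorsion

section SepClosed

variable {F : Type*} [Field F] [IsSepClosed F] {W : WeierstrassCurve.Affine F}

lemma exists_equation_of_eval_Ψ₂Sq_ne_zero {x : F} (hx : W.Ψ₂Sq.eval x ≠ 0) :
    ∃ y : F, W.Equation x y := by
  set b := W.a₁ * x + W.a₃ with hb
  set c := x ^ 3 + W.a₂ * x ^ 2 + W.a₄ * x + W.a₆ with hc
  set f : Polynomial F := .X ^ 2 + .C b * .X - .C c with hf
  have hdeg : f.degree = 2 := by rw [hf]; compute_degree!
  have hdisc : W.Ψ₂Sq.eval x = b ^ 2 + 4 * c := by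
    rw [eval_Ψ₂Sq, b₂, b₄, b₆, hb, hc]; ring
  have hsep : f.Separable := by
    have hinv : (.C (W.Ψ₂Sq.eval x)⁻¹ : Polynomial F) * (.C b ^ 2 + 4 * .C c) = 1 := by
      have := congrArg Polynomial.C (inv_mul_cancel₀ hx)
      rwa [Polynomial.C_mul, Polynomial.C_1, hdisc, Polynomial.C_add, Polynomial.C_mul,
        Polynomial.C_pow, Polynomial.C_ofNat, ← hdisc] at this
    refine ⟨-4 * .C (W.Ψ₂Sq.eval x)⁻¹, .C (W.Ψ₂Sq.eval x)⁻¹ * f.derivative, ?_⟩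
    have hderiv : f.derivative = 2 * .X + .C b := by
      simp [hf, one_add_one_eq_two, Polynomial.C_ofNat]
    rw [hderiv, hf]
    linear_combination hinv
  obtain ⟨y, hy⟩ := IsSepClosed.exists_root f (by rw [hdeg]; decide) hsep
  have hroot : y ^ 2 + b * y - c = 0 := by simpa [hf] using hy
  exact ⟨y, (equation_iff ..).mpr (by linear_combination hroot)⟩

lemma exists_eval_Ψ₂Sq_eq_zero (h2 : (2 : F) ≠ 0) (hΔ : W.Δ ≠ 0) :
    ∃ x : F, W.Ψ₂Sq.eval x = 0 := by
  have h4 : (4 : F) ≠ 0 := by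
    rw [show (4 : F) = 2 * 2 by norm_num]
    exact mul_ne_zero h2 h2
  have ha : W.twoTorsionPolynomial.a ≠ 0 := h4
  have hsplits : (W.twoTorsionPolynomial.toPoly.map (algebraMap F (AlgebraicClosure F))).Splits :=
    IsAlgClosed.splits _
  have hsep : W.twoTorsionPolynomial.toPoly.Separable := by
    rw [← Polynomial.nodup_aroots_iff_of_splits (Cubic.ne_zero_of_a_ne_zero ha) hsplits,
      Polynomial.aroots, ← Cubic.map_roots, ← Cubic.discr_ne_zero_iff_roots_nodup ha hsplits]
    exact twoTorsionPolynomial_discr_ne_zero W h2.isUnit hΔ.isUnit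
  obtain ⟨x, hx⟩ := IsSepClosed.exists_root _ (by rw [Cubic.degree_of_a_ne_zero ha]; decide) hsep
  exact ⟨x, by rwa [Ψ₂Sq_eq]⟩

theorem exists_addOrderOf_eq_two [DecidableEq F] (h2 : (2 : F) ≠ 0) (hΔ : W.Δ ≠ 0) :
    ∃ T : W.Point, addOrderOf T = 2 := by
  obtain ⟨x, hx⟩ := exists_eval_Ψ₂Sq_eq_zero h2 hΔ
  have hy : W.Equation x (-(W.a₁ * x + W.a₃) / 2) := by
    rw [eval_Ψ₂Sq, b₂, b₄, b₆] at hx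
    rw [equation_iff]
    field_simp
    linear_combination -hx
  have h : W.Nonsingular x _ := (equation_iff_nonsingular_of_Δ_ne_zero hΔ).mp hy
  refine ⟨Point.some _ _ h, addOrderOf_eq_prime ?_ (Point.some_ne_zero h)⟩
  rwa [two_nsmul_some_eq_zero_iff]

end SepClosed

section Places

open IsDedekindDomain

lemma not_isSquare_exp_of_odd {n : ℤ} (hn : Odd n) : ¬IsSquare (WithZero.exp n) := by
  rintro ⟨a, ha⟩
  have ha0 : a ≠ 0 := by
    rintro rfl
    simp at ha
  rw [← WithZero.exp_log ha0, ← WithZero.exp_add, WithZero.exp_inj] at ha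
  exact Int.not_even_iff_odd.mpr hn ⟨_, ha⟩

lemma exists_heightOneSpectrum_mem {A : Type*} [CommRing A] {a : A} (ha0 : a ≠ 0) (ha : ¬IsUnit a) :
    ∃ m : HeightOneSpectrum A, a ∈ m.asIdeal := by
  obtain ⟨m, hm, ham⟩ := exists_max_ideal_of_mem_nonunits ha
  exact ⟨⟨m, hm.isPrime, ne_of_mem_of_not_mem' ham ha0⟩, ham⟩

lemma exists_heightOneSpectrum_ne {A : Type*} [CommRing A] {a : A} (ha0 : a ≠ 0) (ha : ¬IsUnit a)
    (ha1 : a - 1 ≠ 0) (ha' : ¬IsUnit (a - 1)) : ∃ m₁ m₂ : HeightOneSpectrum A, m₁ ≠ m₂ := by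
  obtain ⟨m₁, hm₁⟩ := exists_heightOneSpectrum_mem ha0 ha
  obtain ⟨m₂, hm₂⟩ := exists_heightOneSpectrum_mem ha1 ha'
  refine ⟨m₁, m₂, fun h ↦ m₂.isPrime.ne_top ((Ideal.eq_top_iff_one _).mpr ?_)⟩
  have hsub : a - (a - 1) ∈ m₂.asIdeal := sub_mem (h ▸ hm₁) hm₂
  rwa [sub_sub_cancel] at hsub

section Dedekind

variable {A : Type*} [CommRing A] [IsDedekindDomain A] {K : Type*} [Field K] [Algebra A K]
  [IsFractionRing A K] {m₁ m₂ : HeightOneSpectrum A}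

lemma exists_valuation_eq_one_and_valuation_lt_one (hm : m₁ ≠ m₂) :
    ∃ c : K, m₁.valuation K c = 1 ∧ m₂.valuation K c < 1 := by
  obtain ⟨c, hc₂, hc₁⟩ : ∃ c ∈ m₂.asIdeal, c ∉ m₁.asIdeal :=
    SetLike.not_le_iff_exists.mp fun hle ↦
      hm (HeightOneSpectrum.ext (m₂.isMaximal.eq_of_le m₁.isPrime.ne_top hle).symm)
  exact ⟨algebraMap A K c, m₁.valuation_eq_one_iff_notMem.mpr hc₁,
    (m₂.valuation_lt_one_iff_mem c).mpr hc₂⟩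

lemma exists_not_isSquare_valuation_lt {γ : WithZero (Multiplicative ℤ)} (hγ : γ ≠ 0) :
    ∃ b : K, b ≠ 0 ∧ m₁.valuation K b < γ ∧ ¬IsSquare (m₁.valuation K b) := by
  obtain ⟨π, hπ⟩ := m₁.valuation_exists_uniformizer K
  have hπ1 : m₁.valuation K π < 1 := by rw [hπ, ← WithZero.exp_zero, WithZero.exp_lt_exp]; decide
  obtain ⟨n, hn⟩ := exists_pow_lt₀ hπ1 (Units.mk0 γ hγ)
  refine ⟨π ^ (2 * n + 1), ?_, ?_, ?_⟩
  · refine pow_ne_zero _ ((m₁.valuation K).ne_zero_iff.mp ?_)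
    rw [hπ]
    exact WithZero.exp_ne_zero
  · rw [map_pow]
    exact (pow_le_pow_right_of_le_one' hπ1.le (by lia)).trans_lt hn
  · rw [map_pow, hπ, ← WithZero.exp_nsmul]
    exact not_isSquare_exp_of_odd (by simp [parity_simps])

theorem exists_approx_of_ne (hm : m₁ ≠ m₂) {p q : K → Prop}
    (hp : ∀ᶠ s in comap (m₁.valuation K) (𝓝 0), p s)
    (hq : ∀ᶠ s in comap (m₂.valuation K) (𝓝 0), q s) (x₀ : K) :
    ∃ x : K, ¬IsSquare (m₁.valuation K x) ∧ p x⁻¹ ∧ q (x - x₀) := by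
  obtain ⟨γ, hγ, hp⟩ := eventually_comap_nhds_zero_iff.mp
    (hp.and (eventually_map_mul_lt x₀ one_ne_zero))
  obtain ⟨δ, hδ, hq⟩ := eventually_comap_nhds_zero_iff.mp hq
  obtain ⟨b, hb0, hbγ, hbsq⟩ := exists_not_isSquare_valuation_lt (K := K) (m₁ := m₁) hγ
  obtain ⟨c, hc₁, hc₂⟩ := exists_valuation_eq_one_and_valuation_lt_one (K := K) hm
  have hvb₂ : m₂.valuation K b ≠ 0 := (m₂.valuation K).ne_zero_iff.mpr hb0
  obtain ⟨N, hN⟩ := exists_pow_lt₀ hc₂ (Units.mk0 (δ * m₂.valuation K b) (mul_ne_zero hδ hvb₂))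
  have hvb₁ : 0 < m₁.valuation K b := zero_lt_iff.mpr ((m₁.valuation K).ne_zero_iff.mpr hb0)
  have hvx : m₁.valuation K (x₀ + c ^ N / b) = (m₁.valuation K b)⁻¹ := by
    have hve : m₁.valuation K (c ^ N / b) = (m₁.valuation K b)⁻¹ := by
      rw [map_div₀, map_pow, hc₁, one_pow, one_div]
    rw [Valuation.map_add_eq_of_lt_right, hve]
    rw [hve, ← one_div, lt_div_iff₀ hvb₁, ← map_mul]
    exact (hp b hbγ).2
  refine ⟨x₀ + c ^ N / b, ?_, (hp _ ?_).1, hq _ ?_⟩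
  · rwa [hvx, isSquare_inv]
  · rwa [map_inv₀, hvx, inv_inv]
  · rw [add_sub_cancel_left, map_div₀, map_pow, div_lt_iff₀ (zero_lt_iff.mpr hvb₂)]
    exact hN

end Dedekind

lemma exists_dedekind_subring_of_nonunits {R L : Type*} [CommRing R] [IsDedekindDomain R] [Field L]
    [Algebra R L] (E : Type*) [Field E] [Algebra R E] [IsFractionRing R E] [Algebra E L]
    [IsScalarTower R E L] [FiniteDimensional E L] [Algebra.IsSeparable E L] {a : R} (ha0 : a ≠ 0)
    (ha : ¬IsUnit a) (ha1 : a - 1 ≠ 0) (ha' : ¬IsUnit (a - 1)) :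
    ∃ (A : Subring L) (_ : IsDedekindDomain A) (_ : IsFractionRing A L)
      (m₁ m₂ : HeightOneSpectrum A), m₁ ≠ m₂ := by
  let A := integralClosure R L
  have : IsDedekindDomain A := integralClosure.isDedekindDomain R E L
  have : IsFractionRing A L := IsIntegralClosure.isFractionRing_of_finite_extension R E L A
  have : FaithfulSMul R L := .trans R E L
  have hinj : Function.Injective (algebraMap R A) := FaithfulSMul.algebraMap_injective R A
  have map_sub_one : algebraMap R A a - 1 = algebraMap R A (a - 1) := by rw [map_sub, map_one]
  refine ⟨A.toSubring, ‹_›, ‹_›, exists_heightOneSpectrum_ne (A := A) (a := algebraMap R A a)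
    ((map_ne_zero_iff _ hinj).mpr ha0) ?_ ?_ ?_⟩
  · rwa [isUnit_map_iff]
  · rw [map_sub_one]
    exact (map_ne_zero_iff _ hinj).mpr ha1
  · rwa [map_sub_one, isUnit_map_iff]

open IntermediateField

lemma exists_intermediateField_transcendental (k₀ : Type*) {L : Type*} [Field k₀] [PerfectField k₀]
    [Field L] [Algebra k₀ L] [Algebra.EssFiniteType k₀ L] {t : L} (ht : Transcendental k₀ t) :
    ∃ (k : IntermediateField k₀ L) (u : L), Transcendental k u ∧ FiniteDimensional k⟮u⟯ L ∧
      Algebra.IsSeparable k⟮u⟯ L := by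
  obtain ⟨s, hs, hsep⟩ := exists_isTranscendenceBasis_and_isSeparable_of_perfectField k₀ L
  obtain ⟨u⟩ : Nonempty s := hs.nonempty_iff_transcendental.mpr ⟨⟨t, ht⟩⟩
  set k := adjoin k₀ ((↑) '' {i : s | i ≠ u} : Set L)
  have htrans : Transcendental k (u : L) := by
    rw [transcendental_adjoin_iff]
    exact hs.1.transcendental_adjoin (by simp)
  have hadjoin : k⟮(u : L)⟯.restrictScalars k₀ = adjoin k₀ (s : Set L) := by
    rw [adjoin_adjoin_left]
    congr 1
    ext x
    suffices (x = u ∨ ∃ h : x ∈ s, (⟨x, h⟩ : s) ≠ u) ↔ x ∈ s by simpa using this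
    grind
  rw [← hadjoin] at hsep
  have : Algebra.EssFiniteType k⟮(u : L)⟯ L :=
    Algebra.EssFiniteType.of_comp k₀ (k⟮(u : L)⟯.restrictScalars k₀) L
  have : Algebra.IsSeparable k⟮(u : L)⟯ L := hsep
  exact ⟨k, u, htrans, Algebra.finite_of_essFiniteType_of_isAlgebraic, hsep⟩

open IntermediateField.algebraAdjoinAdjoin in
theorem exists_dedekind_subring_of_transcendental {k L : Type*} [Field k] [Field L] [Algebra k L]
    {t : L} (ht : Transcendental k t) [FiniteDimensional k⟮t⟯ L] [Algebra.IsSeparable k⟮t⟯ L] :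
    ∃ (A : Subring L) (_ : IsDedekindDomain A) (_ : IsFractionRing A L)
      (m₁ m₂ : HeightOneSpectrum A), m₁ ≠ m₂ := by
  let e := Polynomial.algEquivOfTranscendental k t ht
  have : IsPrincipalIdealRing (Algebra.adjoin k {t}) :=
    IsPrincipalIdealRing.of_surjective e.toRingHom e.surjective
  have map_sub_one : e .X - 1 = e (.X - .C 1) := by rw [map_sub, Polynomial.C_1, map_one]
  refine exists_dedekind_subring_of_nonunits (R := Algebra.adjoin k {t}) k⟮t⟯ (a := e .X)
    ?_ ?_ ?_ ?_
  · exact (map_ne_zero_iff e e.injective).mpr Polynomial.X_ne_zero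
  · rw [MulEquiv.isUnit_map]
    exact Polynomial.not_isUnit_X
  · rw [map_sub_one]
    exact (map_ne_zero_iff e e.injective).mpr (Polynomial.X_sub_C_ne_zero 1)
  · rw [map_sub_one, MulEquiv.isUnit_map]
    exact Polynomial.not_isUnit_X_sub_C 1

end Places

section Conjugation

open IntermediateField

variable {K F : Type*} [Field K] [Field F] [Algebra K F] (W : WeierstrassCurve K)

variable (F) in
/-- The subgroup `W(K)` of `W(F)`. -/
noncomputable def rationalPoints [DecidableEq K] [DecidableEq F] : AddSubgroup (W⁄F).Point :=
  (Point.map (W' := W) (Algebra.ofId K F)).range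

variable {W} {x : K} {y : F}

lemma exists_algHom_gen_eq_negY (h : (W⁄F).Equation (algebraMap K F x) y)
    (hy : y ∉ (algebraMap K F).range) :
    ∃ σ : K⟮y⟯ →ₐ[K] F, σ (AdjoinSimple.gen K y) = (W⁄F).negY (algebraMap K F x) y := by
  set b := W.a₁ * x + W.a₃ with hb
  set c := x ^ 3 + W.a₂ * x ^ 2 + W.a₄ * x + W.a₆ with hc
  set f : Polynomial K := .X ^ 2 + .C b * .X - .C c with hf
  have hmonic : f.Monic := by rw [hf]; monicity!
  have hdeg : f.natDegree = 2 := by rw [hf]; compute_degree!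
  have aeval_eq_zero (z : F) (hz : (W⁄F).Equation (algebraMap K F x) z) :
      Polynomial.aeval z f = 0 := by
    rw [equation_iff] at hz
    simp only [WeierstrassCurve.baseChange, map_a₁, map_a₂, map_a₃, map_a₄, map_a₆] at hz
    simp only [hf, hb, hc, map_sub, map_add, map_mul, map_pow, Polynomial.aeval_X,
      Polynomial.aeval_C]
    linear_combination hz
  have hyint : IsIntegral K y := ⟨f, hmonic, aeval_eq_zero y h⟩
  have hmin : f = minpoly K y := by
    refine Polynomial.eq_of_monic_of_dvd_of_natDegree_le (minpoly.monic hyint) hmonic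
      (minpoly.dvd K y (aeval_eq_zero y h)) ?_
    rw [hdeg]
    exact (minpoly.two_le_natDegree_iff hyint).mpr hy
  have hconj : (W⁄F).negY (algebraMap K F x) y ∈ (minpoly K y).aroots F := by
    rw [← hmin, Polynomial.mem_aroots]
    exact ⟨hmonic.ne_zero, aeval_eq_zero _ ((equation_neg ..).mpr h)⟩
  exact ⟨(algHomAdjoinIntegralEquiv K hyint).symm ⟨_, hconj⟩,
    algHomAdjoinIntegralEquiv_symm_apply_gen K hyint _⟩

theorem zsmul_notMem_rationalPoints [DecidableEq K] [DecidableEq F]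
    (h : (W⁄F).Nonsingular (algebraMap K F x) y) (hy : y ∉ (algebraMap K F).range)
    (htors : ¬IsOfFinAddOrder (Point.some _ _ h)) {n : ℤ} (hn : n ≠ 0) :
    n • Point.some _ _ h ∉ rationalPoints F W := by
  classical
  rintro ⟨Q, hQ⟩
  obtain ⟨σ, hσ⟩ := exists_algHom_gen_eq_negY h.1 hy
  have hgen : (W⁄K⟮y⟯).Nonsingular (algebraMap K K⟮y⟯ x) (AdjoinSimple.gen K y) :=
    (baseChange_nonsingular (W := W) (f := K⟮y⟯.val) K⟮y⟯.val.injective ..).mp h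
  set P : (W⁄K⟮y⟯).Point := Point.some _ _ hgen with hP
  have map_val : Point.map (W' := W) K⟮y⟯.val P = Point.some _ _ h := rfl
  have map_conj : Point.map (W' := W) σ P = -Point.some _ _ h := by
    rw [hP, Point.map_some, Point.neg_some, Point.some.injEq]
    exact ⟨σ.commutes x, hσ⟩
  have map_rational (f : K⟮y⟯ →ₐ[K] F) :
      Point.map (W' := W) f (Point.map (Algebra.ofId K K⟮y⟯) Q) = n • Point.some _ _ h := by
    rw [← hQ, Point.map_map, Subsingleton.elim (f.comp _) (Algebra.ofId K F)]
  have hPQ : n • P = Point.map (W' := W) (Algebra.ofId K K⟮y⟯) Q := by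
    apply Point.map_injective (W' := W) K⟮y⟯.val
    rw [map_rational, map_zsmul, map_val]
  have hneg : n • -Point.some _ _ h = n • Point.some _ _ h := by
    rw [← map_conj, ← map_zsmul, hPQ, map_rational]
  refine htors (isOfFinAddOrder_iff_zsmul_eq_zero.mpr ⟨2 * n, by simpa using hn, ?_⟩)
  rw [two_mul, add_smul]
  nth_rewrite 1 [← hneg]
  rw [smul_neg, neg_add_cancel]

end Conjugation

section NonTorsion

variable {K : Type*} [Field K] {Γ₀ : Type*} [LinearOrderedCommGroupWithZero Γ₀]
  {v : Valuation K Γ₀} {W : WeierstrassCurve K} {F : Type*} [Field F] [DecidableEq F] [Algebra K F]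

lemma eventually_not_isOfFinAddOrder_of_charTwo [CharP K 2] (hΔ : W.Δ ≠ 0) :
    ∀ᶠ s in comap v (𝓝 0), ∀ P : (W⁄F).Point, HasInvX P s → P ≠ 0 → ¬IsOfFinAddOrder P := by
  filter_upwards [eventually_isSmall W, eventually_two_pow_nsmul_ne_zero (F := F) hΔ]
    with s hs hpow P hP hP0 htors
  obtain ⟨k, hk⟩ := hs.exists_prime_pow_nsmul_eq_zero 2 hP htors
  exact hpow P hP hP0 k hk

lemma not_isOfFinAddOrder_of_isSmall_of_isSmall_add {Γ₁ : Type*}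
    [LinearOrderedCommGroupWithZero Γ₁] {v₁ : Valuation K Γ₁} {p : ℕ} [Fact p.Prime] [CharP K p]
    (hp : p ≠ 2) {P T : (W⁄F).Point} (hT : addOrderOf T = 2) {s t : K} (hP : HasInvX P s)
    (hs : IsSmall v W s) (hPT : HasInvX (P + T) t) (ht : IsSmall v₁ W t) :
    ¬IsOfFinAddOrder P := by
  intro htors
  have hTtors : IsOfFinAddOrder T := addOrderOf_pos_iff.mp (by rw [hT]; exact two_pos)
  obtain ⟨k, hk⟩ := hs.exists_prime_pow_nsmul_eq_zero p hP htors
  obtain ⟨l, hl⟩ := ht.exists_prime_pow_nsmul_eq_zero p hPT (htors.add hTtors)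
  have hpT : p ^ (k + l) • T = 0 := by
    rw [← add_sub_cancel_left P T, smul_sub, pow_add, mul_smul, hl, mul_comm, mul_smul, hk]
    simp
  have h2p : 2 ∣ p ^ (k + l) := hT ▸ addOrderOf_dvd_of_nsmul_eq_zero hpT
  exact hp ((Nat.prime_dvd_prime_iff_eq Nat.prime_two Fact.out).mp
    (Nat.prime_two.dvd_of_dvd_pow h2p)).symm

end NonTorsion

section ExistsPoint

open IsDedekindDomain

variable {A K F : Type*} [CommRing A] [IsDedekindDomain A] [Field K] [Algebra A K]
  [IsFractionRing A K] [Field F] [IsSepClosed F] [Algebra K F] {m₁ m₂ : HeightOneSpectrum A}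
  {W : WeierstrassCurve K} [W.IsElliptic]

lemma exists_point_approx (hm : m₁ ≠ m₂) {p q : K → Prop}
    (hp : ∀ᶠ s in comap (m₁.valuation K) (𝓝 0), p s)
    (hq : ∀ᶠ s in comap (m₂.valuation K) (𝓝 0), q s) (x₀ : K) :
    ∃ (x : K) (y : F) (h : (W⁄F).Nonsingular (algebraMap K F x) y),
      y ∉ (algebraMap K F).range ∧ HasInvX (Point.some _ _ h) x⁻¹ ∧ p x⁻¹ ∧ q (x - x₀) := by
  have hΨ := Ψ₂Sq_ne_zero_of_Δ_ne_zero W.isUnit_Δ.ne_zero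
  obtain ⟨x, hsq, ⟨hpx, hy, hΨx⟩, hqx⟩ := exists_approx_of_ne hm
    (hp.and ((eventually_isSquare_map W).and (eventually_eval_inv_ne_zero hΨ))) hq x₀
  have hx0 : x ≠ 0 := by
    rintro rfl
    exact hsq ⟨0, by simp⟩
  obtain ⟨y, h⟩ : ∃ y : F, (W⁄F).Equation (algebraMap K F x) y := by
    refine exists_equation_of_eval_Ψ₂Sq_ne_zero ?_
    rw [eval_Ψ₂Sq_algebraMap, map_ne_zero]
    simpa using hΨx (inv_ne_zero hx0)
  have : (W⁄F).IsElliptic := inferInstanceAs (W.map (algebraMap K F)).IsElliptic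
  refine ⟨x, y, equation_iff_nonsingular.mp h, ?_, ?_, hpx, hqx⟩
  · rintro ⟨y, rfl⟩
    rw [inv_inv, map_inv₀, isSquare_inv] at hy
    exact hsq (hy y ((baseChange_equation (W := W) (f := Algebra.ofId K F)
      (algebraMap K F).injective x y).mp h))
  · rw [hasInvX_some_iff, ← map_mul, mul_inv_cancel₀ hx0, map_one]

theorem exists_not_isOfFinAddOrder [DecidableEq K] [DecidableEq F] (hm : m₁ ≠ m₂) (p : ℕ)
    [Fact p.Prime] [CharP K p] (hT : p ≠ 2 → ∃ T ∈ rationalPoints F W, addOrderOf T = 2) :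
    ∃ (x : K) (y : F) (h : (W⁄F).Nonsingular (algebraMap K F x) y),
      y ∉ (algebraMap K F).range ∧ ¬IsOfFinAddOrder (Point.some _ _ h) := by
  rcases eq_or_ne p 2 with rfl | hp
  · obtain ⟨x, y, h, hy, hinv, hx, -⟩ := exists_point_approx (F := F) (W := W) hm
      (eventually_not_isOfFinAddOrder_of_charTwo (F := F) W.isUnit_Δ.ne_zero)
      (Eventually.of_forall fun _ ↦ trivial) 0
    exact ⟨x, y, h, hy, hx _ hinv (Point.some_ne_zero h)⟩
  · have h2 : (2 : K) ≠ 0 := Ring.two_ne_zero (by rwa [ringChar.eq K p])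
    obtain ⟨_, ⟨_ | ⟨xT, yT, h'⟩, rfl⟩, hT⟩ := hT hp
    · simp [← Point.zero_def] at hT
    obtain ⟨x, y, h, hy, hinv, hs, hx⟩ := exists_point_approx (F := F) (W := W) hm
      (eventually_isSmall W) (eventually_exists_isSmall_of_two_nsmul_eq_zero h2
        (hT ▸ addOrderOf_nsmul_eq_zero _)) xT
    obtain ⟨d, rfl⟩ : ∃ d, x = xT + d := ⟨x - xT, (add_sub_cancel xT x).symm⟩
    rw [add_sub_cancel_left] at hx
    obtain ⟨t, hPT, ht⟩ := hx y h
    exact ⟨_, y, h, hy, not_isOfFinAddOrder_of_isSmall_of_isSmall_add hp hT hinv hs hPT ht⟩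

end ExistsPoint

section Descent

variable {K F : Type*} [Field K] [Field F] [Algebra K F]

lemma exists_intermediateField_essFiniteType (W : WeierstrassCurve.Affine F) (S : Finset W.Point)
    (t : F) : ∃ (E : IntermediateField K F) (W₀ : WeierstrassCurve E), W₀⁄F = W ∧
      Algebra.EssFiniteType K E ∧ t ∈ E ∧ ∀ x y h, Point.some x y h ∈ S → x ∈ E ∧ y ∈ E := by
  classical
  let coords : W.Point → Finset F
    | .zero => ∅
    | .some x y _ => {x, y}
  set G : Finset F := {t, W.a₁, W.a₂, W.a₃, W.a₄, W.a₆} ∪ S.biUnion coords with hG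
  have mem_adjoin {z : F} (hz : z ∈ G) : z ∈ IntermediateField.adjoin K (G : Set F) :=
    IntermediateField.subset_adjoin K _ hz
  have mem_of_coords {P : W.Point} (hP : P ∈ S) {z : F} (hz : z ∈ coords P) : z ∈ G :=
    Finset.mem_union_right _ (Finset.mem_biUnion.mpr ⟨P, hP, hz⟩)
  exact ⟨.adjoin K (G : Set F),
    ⟨⟨W.a₁, mem_adjoin (by simp [hG])⟩, ⟨W.a₂, mem_adjoin (by simp [hG])⟩,
      ⟨W.a₃, mem_adjoin (by simp [hG])⟩, ⟨W.a₄, mem_adjoin (by simp [hG])⟩,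
      ⟨W.a₆, mem_adjoin (by simp [hG])⟩⟩,
    rfl, IntermediateField.essFiniteType_iff.mpr ⟨G, rfl⟩, mem_adjoin (by simp [hG]),
    fun x y h hP ↦ ⟨mem_adjoin (mem_of_coords hP (by simp [coords])),
      mem_adjoin (mem_of_coords hP (by simp [coords]))⟩⟩

variable [DecidableEq K] [DecidableEq F]

lemma mem_rationalPoints_of_coords {W : WeierstrassCurve K} {P : (W⁄F).Point}
    (hP : ∀ x y h, Point.some x y h = P →
      x ∈ (algebraMap K F).range ∧ y ∈ (algebraMap K F).range) :
    P ∈ rationalPoints F W := by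
  rcases P with _ | ⟨x, y, h⟩
  · exact zero_mem _
  · obtain ⟨⟨a, rfl⟩, b, rfl⟩ := hP x y h rfl
    exact ⟨.some a b ((baseChange_nonsingular (W := W) (f := Algebra.ofId K F)
      (algebraMap K F).injective a b).mp h), rfl⟩

theorem exists_forall_zsmul_notMem_rationalPoints [IsSepClosed F] (p : ℕ)
    [Fact p.Prime] [Algebra (ZMod p) K] [Algebra.EssFiniteType (ZMod p) K] {t : K}
    (ht : Transcendental (ZMod p) t) {W : WeierstrassCurve K} [W.IsElliptic]
    (hT : p ≠ 2 → ∃ T ∈ rationalPoints F W, addOrderOf T = 2) :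
    ∃ P : (W⁄F).Point, ∀ n : ℤ, n ≠ 0 → n • P ∉ rationalPoints F W := by
  have : CharP K p := charP_of_injective_algebraMap (algebraMap (ZMod p) K).injective p
  obtain ⟨k, u, hu, _, _⟩ := exists_intermediateField_transcendental (ZMod p) ht
  obtain ⟨A, _, _, m₁, m₂, hm⟩ := exists_dedekind_subring_of_transcendental hu
  obtain ⟨x, y, h, hy, htors⟩ := exists_not_isOfFinAddOrder hm p hT
  exact ⟨Point.some _ _ h, fun n ↦ zsmul_notMem_rationalPoints h hy htors⟩

end Descent

end EllipticRank

open scoped Classical in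
theorem statement8 (p : ℕ) [Fact p.Prime] (F : Type*) [Field F] [IsSepClosed F]
    [CharP F p] [Algebra (ZMod p) F] (hF : ∃ x : F, Transcendental (ZMod p) x)
    (W : WeierstrassCurve.Affine F) (hΔ : W.Δ ≠ 0) :
    Cardinal.aleph0 ≤ Module.rank ℚ (ℚ ⊗[ℤ] W.Point) := by
  by_contra! hlt
  rw [(TensorProduct.isBaseChange ℤ W.Point ℚ).rank_eq] at hlt
  obtain ⟨S, hS⟩ := EllipticRank.exists_finset_smul_mem_span_of_rank_lt_aleph0 hlt
  obtain ⟨t, ht⟩ := hF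
  have htwo (hp : p ≠ 2) : ∃ T : W.Point, addOrderOf T = 2 :=
    EllipticRank.exists_addOrderOf_eq_two (Ring.two_ne_zero (by rwa [ringChar.eq F p])) hΔ
  choose! T hT using htwo
  obtain ⟨K, W₀, rfl, _, htK, hcoords⟩ :=
    EllipticRank.exists_intermediateField_essFiniteType (K := ZMod p) W (insert T S) t
  have hrat : ∀ P ∈ insert T S, P ∈ EllipticRank.rationalPoints F W₀ := fun P hP ↦
    EllipticRank.mem_rationalPoints_of_coords fun x y h hxy ↦ by
      simpa using hcoords x y h (hxy ▸ hP)
  have : W₀.IsElliptic := ⟨.mk0 _ ((map_ne_zero _).mp (W₀.map_Δ (algebraMap K F) ▸ hΔ))⟩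
  obtain ⟨P, hP⟩ := EllipticRank.exists_forall_zsmul_notMem_rationalPoints (F := F) p
    (t := (⟨t, htK⟩ : K)) (fun halg ↦ ht (halg.algebraMap (A := F)))
    fun hp ↦ ⟨T, hrat T (Finset.mem_insert_self T S), hT hp⟩
  obtain ⟨n, hn, hmem⟩ := hS P
  have hspan : Submodule.span ℤ S ≤ (EllipticRank.rationalPoints F W₀).toIntSubmodule :=
    Submodule.span_le.mpr fun Q hQ ↦ hrat Q (Finset.mem_insert_of_mem hQ)
  exact hP n hn (hspan hmem)
end

section
/- Let $p$ be a prime and let $W$ be an elliptic curve over the field $\mathbb{Q}_p$ of $p$-adic numbers (a Weierstrass curve over $\mathbb{Q}_p$ with nonzero discriminant). Then the rank of the group $W(\mathbb{Q}_p)$ of $\mathbb{Q}_p$-rational points of $W$ is infinite, i.e. the $\mathbb{Q}$-vector space $W(\mathbb{Q}_p) \otimes_{\mathbb{Z}} \mathbb{Q}$ is infinite-dimensional. -/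
open TensorProduct

/-
Contracting the invariant differential `dx / (2y + a₁x + a₃)` of a Weierstrass curve over `R` with
an `R`-derivation `D` of a field `F` gives a homomorphism `W(F) → F`. In characteristic zero it
kills torsion, so the coordinates of a torsion point are annihilated by all derivations of `F` over
a field of definition of `W`, and are therefore algebraic over that field. The latter can be taken
countable, so the torsion subgroup of `W(F)` is countable. If `F` is also complete, then `W(F)` has
as many points as `F`: for `x` near infinity the discriminant `4x³ + b₂x² + 2b₄x + b₆` of the
Weierstrass equation in `y` is a nonzero square whenever `x` is, and being a nonzero square is an
open condition. An uncountable abelian group with countable torsion has rank equal to its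
cardinality.
-/

open Cardinal Filter Polynomial Topology

section Derivations

open scoped KaehlerDifferential

theorem formallySmooth_of_charZero (K L : Type*) [Field K] [CharZero K] [Field L] [Algebra K L] :
    Algebra.FormallySmooth K L := by
  obtain ⟨s, hs⟩ := exists_isTranscendenceBasis K L
  have := hs.isAlgebraic_field
  exact .of_algebraicIndependent_of_isSeparable hs.1

theorem mapBaseChange_injective_of_formallySmooth (R S T : Type*) [CommRing R] [CommRing S]
    [CommRing T] [Algebra R S] [Algebra R T] [Algebra S T] [IsScalarTower R S T]
    [Algebra.FormallySmooth S T] :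
    Function.Injective (KaehlerDifferential.mapBaseChange R S T) := by
  rw [injective_iff_map_eq_zero]
  intro ω hω
  obtain ⟨c, rfl⟩ := (Algebra.H1Cotangent.exact_δ_mapBaseChange R S T ω).mp hω
  rw [Subsingleton.elim c 0, map_zero]

variable {K L : Type*} [Field K] [CharZero K] [Field L] [Algebra K L]

theorem kaehlerDifferential_D_ne_zero_of_transcendental {s : L} (hs : Transcendental K s) :
    KaehlerDifferential.D K L s ≠ 0 := by
  let : Algebra K[X] L := (aeval s).toAlgebra
  have : IsScalarTower K K[X] L := .of_algebraMap_eq' (aeval s).comp_algebraMap.symm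
  have : FaithfulSMul K[X] L :=
    (faithfulSMul_iff_algebraMap_injective K[X] L).2 (transcendental_iff_injective.1 hs)
  let : Algebra (FractionRing K[X]) L := FractionRing.liftAlgebra K[X] L
  have : Algebra.FormallySmooth K[X] L := by
    have : Algebra.FormallySmooth K[X] (FractionRing K[X]) := .of_isLocalization (nonZeroDivisors _)
    have := formallySmooth_of_charZero (FractionRing K[X]) L
    exact .comp _ (FractionRing K[X]) _
  let ddX : L ⊗[K[X]] Ω[K[X]⁄K] →ₗ[L] L := LinearMap.liftBaseChange L
    (Algebra.linearMap K[X] L ∘ₗ (KaehlerDifferential.polynomialEquiv K).toLinearMap)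
  have hX : (1 : L) ⊗ₜ KaehlerDifferential.D K K[X] X ≠ 0 := fun h ↦ by
    simpa [ddX] using congrArg ddX h
  have hX_map : KaehlerDifferential.mapBaseChange K K[X] L (1 ⊗ₜ KaehlerDifferential.D K K[X] X) =
      KaehlerDifferential.D K L s := by
    simp [RingHom.algebraMap_toAlgebra]
  rw [← hX_map]
  exact (map_ne_zero_iff _ (mapBaseChange_injective_of_formallySmooth K K[X] L)).2 hX

theorem isAlgebraic_of_forall_derivation_eq_zero {s : L} (h : ∀ D : Derivation K L L, D s = 0) :
    IsAlgebraic K s := by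
  by_contra hs
  exact kaehlerDifferential_D_ne_zero_of_transcendental hs
    ((Module.forall_dual_apply_eq_zero_iff L _).1 fun φ ↦ h (φ.compDer (KaehlerDifferential.D K L)))

end Derivations

section Cardinals

theorem ker_mk_one_eq_torsion (G : Type*) [AddCommGroup G] :
    (TensorProduct.mk ℤ ℚ G 1).toAddMonoidHom.ker = AddCommGroup.torsion G := by
  have : IsLocalizedModule (nonZeroDivisors ℤ) (TensorProduct.mk ℤ ℚ G 1) :=
    (isLocalizedModule_iff_isBaseChange (nonZeroDivisors ℤ) ℚ _).2
      (TensorProduct.isBaseChange ℤ G ℚ)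
  ext g
  rw [AddCommGroup.mem_torsion, isOfFinAddOrder_iff_zsmul_eq_zero]
  exact (IsLocalizedModule.eq_zero_iff (nonZeroDivisors ℤ) (TensorProduct.mk ℤ ℚ G 1)).trans
    (by simp [Submonoid.smul_def])

theorem mk_le_rank_rat_tensorProduct (G : Type*) [AddCommGroup G] [Uncountable G]
    [Countable (AddCommGroup.torsion G)] : #G ≤ Module.rank ℚ (ℚ ⊗[ℤ] G) := by
  let ι : G →+ ℚ ⊗[ℤ] G := (TensorProduct.mk ℤ ℚ G 1).toAddMonoidHom
  have hker : #ι.ker ≤ ℵ₀ := by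
    rw [ker_mk_one_eq_torsion]
    exact mk_le_aleph0
  have hG : ℵ₀ < #G := aleph0_lt_mk_iff.2 ‹_›
  have hmul : #G ≤ #(ℚ ⊗[ℤ] G) * ℵ₀ := calc
    #G = #(G ⧸ ι.ker) * #ι.ker := by
      rw [mk_congr AddSubgroup.addGroupEquivQuotientProdAddSubgroup, mul_def]
    _ ≤ #(ℚ ⊗[ℤ] G) * ℵ₀ :=
      mul_le_mul' (mk_le_of_injective (QuotientAddGroup.kerLift_injective ι)) hker
  have hle : #G ≤ #(ℚ ⊗[ℤ] G) := by
    simpa [le_max_iff, hG.not_ge] using hmul.trans (mul_le_max _ _)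
  rw [Module.Free.rank_eq_mk_of_infinite_lt ℚ (ℚ ⊗[ℤ] G) (by simpa using hG.trans_le hle)]
  exact hle

end Cardinals

open WeierstrassCurve
open scoped WeierstrassCurve.Affine

section Line

variable {F : Type*} [Field F] [DecidableEq F] {W : Affine F} {x₁ x₂ y₁ y₂ : F}

theorem slope_mul_sub_add (h₁ : W.Equation x₁ y₁) (h₂ : W.Equation x₂ y₂)
    (hxy : ¬(x₁ = x₂ ∧ y₁ = W.negY x₂ y₂)) : W.slope x₁ x₂ y₁ y₂ * (x₂ - x₁) + y₁ = y₂ := by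
  by_cases hx : x₁ = x₂
  · rw [Affine.Y_eq_of_Y_ne h₁ h₂ hx fun h ↦ hxy ⟨hx, h⟩, hx, sub_self, mul_zero, zero_add]
  · have := sub_ne_zero.2 hx
    rw [Affine.slope_of_X_ne hx]
    field_simp
    ring

/-- The left-hand side is minus the derivative of the Weierstrass polynomial along the line through
the two points, on which it equals `-(t - x₁)(t - x₂)(t - x₃)` with `x₃ = W.addX x₁ x₂ _`. -/
theorem derivative_addPolynomial_slope_eval (h₁ : W.Equation x₁ y₁) (h₂ : W.Equation x₂ y₂)
    (hxy : ¬(x₁ = x₂ ∧ y₁ = W.negY x₂ y₂)) {t s : F}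
    (hts : W.slope x₁ x₂ y₁ y₂ * (t - x₁) + y₁ = s) :
    3 * t ^ 2 + 2 * W.a₂ * t + W.a₄ - W.a₁ * s -
        W.slope x₁ x₂ y₁ y₂ * (2 * s + W.a₁ * t + W.a₃) =
      (t - x₁) * (t - x₂) + (t - x₁) * (t - W.addX x₁ x₂ (W.slope x₁ x₂ y₁ y₂)) +
        (t - x₂) * (t - W.addX x₁ x₂ (W.slope x₁ x₂ y₁ y₂)) := by
  have hderiv := congrArg (eval t) (Affine.derivative_addPolynomial_slope h₁ h₂ hxy)
  simp only [Affine.addPolynomial_eq, Cubic.toPoly, derivative_neg, derivative_add,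
    derivative_mul, derivative_C, derivative_X_pow, derivative_X, eval_neg, eval_add, eval_mul,
    eval_sub, eval_C, eval_X, eval_pow, eval_zero, eval_one] at hderiv
  push_cast at hderiv
  subst hts
  linear_combination -hderiv

end Line

section LogDeriv

variable {R F : Type*} [CommRing R] [Field F] [Algebra R F] {W : Affine R}
  {D : Derivation R F F}

/-- `w` is the value at `D` of the invariant differential `dx / (2y + a₁x + a₃)` of `W` at the
point `(x, y)`. The two equations avoid dividing by either partial derivative of the Weierstrass
polynomial, and determine `w` at nonsingular points. -/
def IsLogDerivAt (W : Affine R) (D : Derivation R F F) (x y w : F) : Prop :=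
  D x = w * (W⁄F).polynomialY.evalEval x y ∧ D y = -w * (W⁄F).polynomialX.evalEval x y

theorem isLogDerivAt_iff {x y w : F} : IsLogDerivAt W D x y w ↔
    D x = w * (2 * y + (W⁄F).a₁ * x + (W⁄F).a₃) ∧
      D y = w * (3 * x ^ 2 + 2 * (W⁄F).a₂ * x + (W⁄F).a₄ - (W⁄F).a₁ * y) := by
  rw [IsLogDerivAt, Affine.evalEval_polynomialX, Affine.evalEval_polynomialY, neg_mul_comm, neg_sub]

theorem polynomialX_mul_derivation_add (D : Derivation R F F) {x y : F}
    (h : (W⁄F).Equation x y) :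
    (W⁄F).polynomialX.evalEval x y * D x + (W⁄F).polynomialY.evalEval x y * D y = 0 := by
  have hD := congrArg D ((Affine.equation_iff ..).1 h)
  simp only [Affine.baseChange_a₁, Affine.baseChange_a₂, Affine.baseChange_a₃,
    Affine.baseChange_a₄, Affine.baseChange_a₆, map_add, Derivation.leibniz,
    Derivation.leibniz_pow, D.map_algebraMap, smul_eq_mul, nsmul_eq_mul] at hD
  simp only [Affine.evalEval_polynomialX, Affine.evalEval_polynomialY, Affine.baseChange_a₁,
    Affine.baseChange_a₂, Affine.baseChange_a₃, Affine.baseChange_a₄]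
  linear_combination hD

theorem exists_isLogDerivAt (D : Derivation R F F) {x y : F} (h : (W⁄F).Nonsingular x y) :
    ∃ w, IsLogDerivAt W D x y w := by
  have htangent := polynomialX_mul_derivation_add D h.1
  rcases h.2 with hX | hY
  · refine ⟨-D y / (W⁄F).polynomialX.evalEval x y, ?_, ?_⟩
    · field_simp
      linear_combination htangent
    · field_simp
  · refine ⟨D x / (W⁄F).polynomialY.evalEval x y, ?_, ?_⟩
    · field_simp
    · field_simp
      linear_combination htangent

theorem IsLogDerivAt.unique {x y w w' : F} (h : (W⁄F).Nonsingular x y)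
    (hw : IsLogDerivAt W D x y w) (hw' : IsLogDerivAt W D x y w') : w = w' := by
  rcases h.2 with hX | hY
  · exact neg_injective (mul_right_cancel₀ hX (hw.2.symm.trans hw'.2))
  · exact mul_right_cancel₀ hY (hw.1.symm.trans hw'.1)

theorem IsLogDerivAt.neg {x y w : F} (hw : IsLogDerivAt W D x y w) :
    IsLogDerivAt W D x ((W⁄F).negY x y) (-w) := by
  rw [isLogDerivAt_iff] at hw ⊢
  simp only [Affine.negY, map_sub, map_neg, Derivation.leibniz, hw.1, hw.2, Affine.baseChange_a₁,
    Affine.baseChange_a₃, D.map_algebraMap, smul_eq_mul]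
  constructor <;> ring

/-- The logarithmic derivative of a point along `D`: the invariant differential of `W` contracted
with `D`, with value `0` at the point at infinity. -/
noncomputable def pointLogDeriv (W : Affine R) (D : Derivation R F F) : (W⁄F).Point → F
  | 0 => 0
  | .some _ _ h => (exists_isLogDerivAt D h).choose

theorem isLogDerivAt_pointLogDeriv (D : Derivation R F F) {x y : F} (h : (W⁄F).Nonsingular x y) :
    IsLogDerivAt W D x y (pointLogDeriv W D (.some x y h)) :=
  (exists_isLogDerivAt D h).choose_spec

variable [DecidableEq F] {x₁ x₂ y₁ y₂ w₁ w₂ : F}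

theorem derivation_slope_of_X_ne (h₁ : (W⁄F).Equation x₁ y₁) (h₂ : (W⁄F).Equation x₂ y₂)
    (hx : x₁ ≠ x₂) (hw₁ : IsLogDerivAt W D x₁ y₁ w₁) (hw₂ : IsLogDerivAt W D x₂ y₂ w₂) :
    D ((W⁄F).slope x₁ x₂ y₁ y₂) =
      w₁ * (x₁ - (W⁄F).addX x₁ x₂ ((W⁄F).slope x₁ x₂ y₁ y₂)) +
        w₂ * (x₂ - (W⁄F).addX x₁ x₂ ((W⁄F).slope x₁ x₂ y₁ y₂)) := by
  have hxy : ¬(x₁ = x₂ ∧ y₁ = (W⁄F).negY x₂ y₂) := fun h ↦ hx h.1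
  have hline := slope_mul_sub_add h₁ h₂ hxy
  have hderiv₁ := derivative_addPolynomial_slope_eval h₁ h₂ hxy (t := x₁) (s := y₁) (by ring)
  have hderiv₂ := derivative_addPolynomial_slope_eval h₁ h₂ hxy hline
  have hDline := congrArg D hline
  rw [isLogDerivAt_iff] at hw₁ hw₂
  simp only [Derivation.leibniz, map_sub, map_add, smul_eq_mul, hw₁, hw₂] at hDline
  refine mul_right_cancel₀ (sub_ne_zero.2 hx) ?_
  linear_combination -hDline + w₁ * hderiv₁ - w₂ * hderiv₂

theorem derivation_slope_self {x y w : F}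
    (hy : y ≠ (W⁄F).negY x y) (hw : IsLogDerivAt W D x y w) :
    D ((W⁄F).slope x x y y) = 2 * w * (x - (W⁄F).addX x x ((W⁄F).slope x x y y)) := by
  have hy0 : 2 * y + (W⁄F).a₁ * x + (W⁄F).a₃ ≠ 0 := fun h ↦
    hy (by rw [Affine.negY]; linear_combination h)
  have hℓ : (W⁄F).slope x x y y * (2 * y + (W⁄F).a₁ * x + (W⁄F).a₃) =
      3 * x ^ 2 + 2 * (W⁄F).a₂ * x + (W⁄F).a₄ - (W⁄F).a₁ * y := by
    rw [Affine.slope_of_Y_ne rfl hy, div_mul_eq_mul_div, div_eq_iff (sub_ne_zero.2 hy), Affine.negY]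
    ring
  set ℓ := (W⁄F).slope x x y y
  have hDℓ := congrArg D hℓ
  rw [isLogDerivAt_iff] at hw
  have h2 : D 2 = 0 := mod_cast D.map_natCast 2
  have h3 : D 3 = 0 := mod_cast D.map_natCast 3
  simp only [Affine.baseChange_a₁, Affine.baseChange_a₂, Affine.baseChange_a₃,
    Affine.baseChange_a₄, Affine.addX, map_add, map_sub, Derivation.leibniz,
    Derivation.leibniz_pow, D.map_algebraMap, smul_eq_mul, nsmul_eq_mul, hw, h2, h3] at hDℓ hℓ hy0 ⊢
  refine mul_right_cancel₀ hy0 ?_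
  linear_combination hDℓ + w * (2 * ℓ + algebraMap R F W.a₁) * hℓ

theorem derivation_slope (h₁ : (W⁄F).Nonsingular x₁ y₁) (h₂ : (W⁄F).Nonsingular x₂ y₂)
    (hxy : ¬(x₁ = x₂ ∧ y₁ = (W⁄F).negY x₂ y₂))
    (hw₁ : IsLogDerivAt W D x₁ y₁ w₁) (hw₂ : IsLogDerivAt W D x₂ y₂ w₂) :
    D ((W⁄F).slope x₁ x₂ y₁ y₂) =
      w₁ * (x₁ - (W⁄F).addX x₁ x₂ ((W⁄F).slope x₁ x₂ y₁ y₂)) +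
        w₂ * (x₂ - (W⁄F).addX x₁ x₂ ((W⁄F).slope x₁ x₂ y₁ y₂)) := by
  by_cases hx : x₁ = x₂
  · have hy : y₁ ≠ (W⁄F).negY x₂ y₂ := fun h ↦ hxy ⟨hx, h⟩
    obtain rfl := Affine.Y_eq_of_Y_ne h₁.1 h₂.1 hx hy
    subst hx
    obtain rfl := hw₁.unique h₁ hw₂
    rw [derivation_slope_self hy hw₁]
    ring
  · exact derivation_slope_of_X_ne h₁.1 h₂.1 hx hw₁ hw₂

theorem IsLogDerivAt.negAdd (h₁ : (W⁄F).Nonsingular x₁ y₁) (h₂ : (W⁄F).Nonsingular x₂ y₂)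
    (hxy : ¬(x₁ = x₂ ∧ y₁ = (W⁄F).negY x₂ y₂))
    (hw₁ : IsLogDerivAt W D x₁ y₁ w₁) (hw₂ : IsLogDerivAt W D x₂ y₂ w₂) :
    IsLogDerivAt W D ((W⁄F).addX x₁ x₂ ((W⁄F).slope x₁ x₂ y₁ y₂))
      ((W⁄F).negAddY x₁ x₂ y₁ ((W⁄F).slope x₁ x₂ y₁ y₂)) (-(w₁ + w₂)) := by
  have hDℓ := derivation_slope h₁ h₂ hxy hw₁ hw₂
  have hline := slope_mul_sub_add h₁.1 h₂.1 hxy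
  have hderiv₁ := derivative_addPolynomial_slope_eval h₁.1 h₂.1 hxy (t := x₁) (s := y₁) (by ring)
  have hderiv₃ := derivative_addPolynomial_slope_eval h₁.1 h₂.1 hxy
    (t := (W⁄F).addX x₁ x₂ ((W⁄F).slope x₁ x₂ y₁ y₂)) rfl
  rw [isLogDerivAt_iff] at hw₁ hw₂ ⊢
  rw [Affine.negAddY]
  generalize (W⁄F).slope x₁ x₂ y₁ y₂ = ℓ at *
  have hx₃ : (W⁄F).addX x₁ x₂ ℓ = ℓ ^ 2 + (W⁄F).a₁ * ℓ - (W⁄F).a₂ - x₁ - x₂ := rfl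
  generalize (W⁄F).addX x₁ x₂ ℓ = x₃ at *
  have hDx₃ : D x₃ = -(w₁ + w₂) * (2 * (ℓ * (x₃ - x₁) + y₁) + (W⁄F).a₁ * x₃ + (W⁄F).a₃) := by
    have hD := congrArg D hx₃
    simp only [Affine.baseChange_a₁, Affine.baseChange_a₂, Affine.baseChange_a₃, map_add,
      map_sub, Derivation.leibniz, Derivation.leibniz_pow, D.map_algebraMap, smul_eq_mul,
      nsmul_eq_mul, hw₁, hw₂, hDℓ] at hD ⊢
    linear_combination hD + 2 * w₂ * hline
  refine ⟨hDx₃, ?_⟩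
  simp only [map_add, map_sub, Derivation.leibniz, smul_eq_mul, hDx₃, hDℓ, hw₁]
  linear_combination w₁ * hderiv₁ + (w₁ + w₂) * hderiv₃

theorem IsLogDerivAt.add (h₁ : (W⁄F).Nonsingular x₁ y₁) (h₂ : (W⁄F).Nonsingular x₂ y₂)
    (hxy : ¬(x₁ = x₂ ∧ y₁ = (W⁄F).negY x₂ y₂))
    (hw₁ : IsLogDerivAt W D x₁ y₁ w₁) (hw₂ : IsLogDerivAt W D x₂ y₂ w₂) :
    IsLogDerivAt W D ((W⁄F).addX x₁ x₂ ((W⁄F).slope x₁ x₂ y₁ y₂))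
      ((W⁄F).addY x₁ x₂ y₁ ((W⁄F).slope x₁ x₂ y₁ y₂)) (w₁ + w₂) := by
  simpa only [neg_neg, Affine.addY] using (negAdd h₁ h₂ hxy hw₁ hw₂).neg

theorem pointLogDeriv_add (D : Derivation R F F) :
    ∀ P Q : (W⁄F).Point, pointLogDeriv W D (P + Q) = pointLogDeriv W D P + pointLogDeriv W D Q
  | 0, Q => by rw [zero_add]; exact (zero_add _).symm
  | P, 0 => by rw [add_zero]; exact (add_zero _).symm
  | .some x₁ y₁ h₁, .some x₂ y₂ h₂ => by
    have hw₁ := isLogDerivAt_pointLogDeriv D h₁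
    have hw₂ := isLogDerivAt_pointLogDeriv D h₂
    by_cases hxy : x₁ = x₂ ∧ y₁ = (W⁄F).negY x₂ y₂
    · obtain ⟨rfl, rfl⟩ := hxy
      rw [Affine.Point.add_of_Y_eq rfl rfl, hw₁.unique h₁ hw₂.neg, neg_add_cancel]
      rfl
    · rw [Affine.Point.add_some hxy]
      have hadd := Affine.nonsingular_add h₁ h₂ hxy
      exact (isLogDerivAt_pointLogDeriv D hadd).unique hadd (hw₁.add h₁ h₂ hxy hw₂)

/-- The logarithmic derivative along `D` as a homomorphism to the additive group of `F`. -/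
noncomputable def pointLogDerivHom (W : Affine R) (D : Derivation R F F) : (W⁄F).Point →+ F :=
  .mk' (pointLogDeriv W D) (pointLogDeriv_add D)

theorem derivation_eq_zero_of_mem_torsion [CharZero F] (D : Derivation R F F) {x y : F}
    {h : (W⁄F).Nonsingular x y} (htors : .some x y h ∈ AddCommGroup.torsion (W⁄F).Point) :
    D x = 0 ∧ D y = 0 := by
  have hw := isLogDerivAt_pointLogDeriv D h
  have h0 : pointLogDeriv W D (.some x y h) = 0 := by
    rw [← isOfFinAddOrder_iff_eq_zero]
    exact (pointLogDerivHom W D).isOfFinAddOrder htors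
  simpa [IsLogDerivAt, h0] using hw

end LogDeriv

section Countable

instance countable_point {k : Type*} [Field k] [Countable k] (W : Affine k) :
    Countable W.Point := by
  let coords : W.Point → Option (k × k)
    | 0 => none
    | .some x y _ => some (x, y)
  refine Function.Injective.countable (f := coords) fun P Q h ↦ ?_
  match P, Q with
  | 0, 0 => rfl
  | .some _ _ _, .some _ _ _ => simpa [coords] using h

theorem countable_algebraicClosure (K F : Type*) [Field K] [Countable K] [Field F] [Algebra K F] :
    Countable (algebraicClosure K F) := by
  have hle := Algebra.IsAlgebraic.lift_cardinalMk_le_max K (algebraicClosure K F)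
  rw [← mk_le_aleph0_iff, ← lift_le_aleph0]
  exact hle.trans (by simp)

variable {F : Type*} [Field F]

theorem exists_countable_field_of_definition [CharZero F] (W : Affine F) :
    ∃ (K : IntermediateField ℚ F) (W₀ : Affine K), Countable K ∧ W₀⁄F = W := by
  let S : Set F := {W.a₁, W.a₂, W.a₃, W.a₄, W.a₆}
  let K := IntermediateField.adjoin ℚ S
  have hS : S ⊆ K := IntermediateField.subset_adjoin ℚ S
  have hK : Countable K := by
    rw [← mk_le_aleph0_iff]
    simpa using IntermediateField.lift_cardinalMk_adjoin_le ℚ S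
  exact ⟨K, ⟨⟨W.a₁, hS (by simp [S])⟩, ⟨W.a₂, hS (by simp [S])⟩, ⟨W.a₃, hS (by simp [S])⟩,
    ⟨W.a₄, hS (by simp [S])⟩, ⟨W.a₆, hS (by simp [S])⟩⟩, hK, rfl⟩

variable [DecidableEq F]

theorem torsion_le_range_baseChange_algebraicClosure {K : Type*} [Field K] [CharZero K]
    [Algebra K F] [DecidableEq (algebraicClosure K F)] (W : Affine K) :
    AddCommGroup.torsion (W⁄F).Point ≤
      (Affine.Point.baseChange (W' := W) (algebraicClosure K F) F).range := by
  have : CharZero F := charZero_of_injective_algebraMap (algebraMap K F).injective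
  rintro (_ | ⟨x, y, h⟩) htors
  · exact zero_mem _
  have hD (D : Derivation K F F) : D x = 0 ∧ D y = 0 := derivation_eq_zero_of_mem_torsion D htors
  have hx : x ∈ algebraicClosure K F := mem_algebraicClosure_iff.2 <|
    isAlgebraic_of_forall_derivation_eq_zero fun D ↦ (hD D).1
  have hy : y ∈ algebraicClosure K F := mem_algebraicClosure_iff.2 <|
    isAlgebraic_of_forall_derivation_eq_zero fun D ↦ (hD D).2
  have h₀ : (W⁄(algebraicClosure K F)).Nonsingular ⟨x, hx⟩ ⟨y, hy⟩ :=
    (Affine.baseChange_nonsingular W (algebraicClosure K F).val.injective ..).1 h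
  exact ⟨.some _ _ h₀, rfl⟩

theorem countable_torsion_point [CharZero F] (W : Affine F) :
    Countable (AddCommGroup.torsion W.Point) := by
  classical
  obtain ⟨K, W₀, hK, rfl⟩ := exists_countable_field_of_definition W
  have := countable_algebraicClosure K F
  have hrange := Set.countable_range (Affine.Point.baseChange (W' := W₀) (algebraicClosure K F) F)
  exact hrange.mono (torsion_le_range_baseChange_algebraicClosure W₀)

end Countable

section Points

theorem exists_nonsingular_of_isSquare_Ψ₂Sq {k : Type*} [Field k] (h2 : (2 : k) ≠ 0)
    (W : Affine k) {x : k} (hx : W.Ψ₂Sq.eval x ≠ 0) (hsq : IsSquare (W.Ψ₂Sq.eval x)) :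
    ∃ y, W.Nonsingular x y := by
  obtain ⟨r, hr⟩ := hsq
  have hr0 : r ≠ 0 := by rintro rfl; simp_all
  have hY : 2 * ((r - W.a₁ * x - W.a₃) / 2) = r - W.a₁ * x - W.a₃ := mul_div_cancel₀ _ h2
  set y := (r - W.a₁ * x - W.a₃) / 2
  refine ⟨y, (Affine.nonsingular_iff' ..).2 ⟨(Affine.equation_iff ..).2 ?_, .inr ?_⟩⟩
  · have h4 : (4 : k) ≠ 0 := by simpa [show (4 : k) = 2 * 2 by norm_num] using h2
    simp only [Ψ₂Sq, b₂, b₄, b₆, eval_add, eval_mul, eval_C, eval_X, eval_pow] at hr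
    refine mul_left_cancel₀ h4 ?_
    linear_combination (2 * y + W.a₁ * x + W.a₃ + r) * hY - hr
  · rwa [show 2 * y + W.a₁ * x + W.a₃ = r by linear_combination hY]

theorem tendsto_pow_six_mul_Ψ₂Sq_eval {F : Type*} [NontriviallyNormedField F] (W : Affine F) :
    Tendsto (fun s : F ↦ s ^ 6 * W.Ψ₂Sq.eval (s ^ 2)⁻¹) (𝓝[≠] 0) (𝓝 4) := by
  have hcont : Tendsto (fun s : F ↦ 4 + W.b₂ * s ^ 2 + 2 * W.b₄ * s ^ 4 + W.b₆ * s ^ 6)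
      (𝓝[≠] 0) (𝓝 4) := by
    have : Continuous fun s : F ↦ 4 + W.b₂ * s ^ 2 + 2 * W.b₄ * s ^ 4 + W.b₆ * s ^ 6 := by fun_prop
    simpa using (this.tendsto 0).mono_left nhdsWithin_le_nhds
  refine hcont.congr' ?_
  filter_upwards [self_mem_nhdsWithin] with s (hs : s ≠ 0)
  simp only [Ψ₂Sq, eval_add, eval_mul, eval_C, eval_X, eval_pow]
  field_simp

variable {F : Type*} [NontriviallyNormedField F] [CompleteSpace F]

theorem eventually_isSquare_nhds (h2 : (2 : F) ≠ 0) {a : F} (ha : a ≠ 0) (hsq : IsSquare a) :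
    ∀ᶠ b in 𝓝 a, IsSquare b := by
  obtain ⟨r, rfl⟩ := hsq
  have hr : (2 : F) * r ≠ 0 := mul_ne_zero h2 (left_ne_zero_of_mul ha)
  have hmap : map (fun t : F ↦ t ^ 2) (𝓝 r) = 𝓝 (r * r) := by
    simpa [sq] using (hasStrictDerivAt_pow 2 r).map_nhds_eq (by simpa using hr)
  rw [← hmap, eventually_map]
  exact .of_forall fun t ↦ IsSquare.sq t

theorem exists_eventually_nhds_exists_nonsingular (h2 : (2 : F) ≠ 0) (W : Affine F) :
    ∃ x₀, ∀ᶠ x in 𝓝 x₀, ∃ y, W.Nonsingular x y := by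
  have h4 : (4 : F) ≠ 0 := by simpa [show (4 : F) = 2 * 2 by norm_num] using h2
  have hsq4 : ∀ᶠ c in 𝓝 (4 : F), IsSquare c ∧ c ≠ 0 :=
    (eventually_isSquare_nhds h2 h4 ⟨2, by norm_num⟩).and (eventually_ne_nhds h4)
  obtain ⟨s, ⟨hsq, hne⟩, hs⟩ :=
    (((tendsto_pow_six_mul_Ψ₂Sq_eval W).eventually hsq4).and self_mem_nhdsWithin).exists
  have hs6 : s ^ 6 ≠ 0 := pow_ne_zero 6 hs
  have hΨne : W.Ψ₂Sq.eval (s ^ 2)⁻¹ ≠ 0 := right_ne_zero_of_mul hne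
  have hΨsq : IsSquare (W.Ψ₂Sq.eval (s ^ 2)⁻¹) := by
    have := hsq.div (show IsSquare (s ^ 6) from ⟨s ^ 3, by ring⟩)
    rwa [mul_div_cancel_left₀ _ hs6] at this
  have hcont := W.Ψ₂Sq.continuous.tendsto (s ^ 2)⁻¹
  refine ⟨(s ^ 2)⁻¹, ?_⟩
  filter_upwards [hcont.eventually (eventually_isSquare_nhds h2 hΨne hΨsq),
    hcont.eventually_ne hΨne] with x hx hx0
  exact exists_nonsingular_of_isSquare_Ψ₂Sq h2 W hx0 hx

theorem mk_le_mk_point (h2 : (2 : F) ≠ 0) (W : Affine F) : #F ≤ #W.Point := by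
  obtain ⟨x₀, hx₀⟩ := exists_eventually_nhds_exists_nonsingular h2 W
  rw [← cardinal_eq_of_mem_nhds F hx₀]
  choose y hy using fun x : {x | ∃ y, W.Nonsingular x y} ↦ x.2
  refine mk_le_of_injective (f := fun x ↦ Affine.Point.some _ _ (hy x)) fun x x' h ↦ ?_
  exact Subtype.ext (Affine.Point.some.inj h).1

end Points

theorem statement9_general {F : Type*} [NontriviallyNormedField F] [CompleteSpace F] [CharZero F]
    [DecidableEq F] (W : WeierstrassCurve.Affine F) :
    #F ≤ Module.rank ℚ (ℚ ⊗[ℤ] W.Point) := by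
  have hF : ℵ₀ < #F :=
    aleph0_lt_continuum.trans_le (continuum_le_cardinal_of_nontriviallyNormedField F)
  have hpoints : #F ≤ #W.Point := mk_le_mk_point two_ne_zero W
  have : Uncountable W.Point := aleph0_lt_mk_iff.1 (hF.trans_le hpoints)
  have := countable_torsion_point W
  exact hpoints.trans (mk_le_rank_rat_tensorProduct W.Point)

open scoped Classical in
theorem statement9 (p : ℕ) [Fact p.Prime]
    (W : WeierstrassCurve.Affine ℚ_[p]) (hΔ : W.Δ ≠ 0) :
    Cardinal.aleph0 ≤ Module.rank ℚ (ℚ ⊗[ℤ] W.Point) :=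
  (aleph0_le_mk ℚ_[p]).trans (statement9_general W)
end
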